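/- For all j₁, j₂ ∈ {0,1} there are isomorphisms of left u-modules: (1) S_{n²,j₁}⊗S_{n²−2,j₂} ≅ S_{n²−2, \overline{j₁+j₂}}; (2) S_{2,j₁}⊗S_{n²−2,j₂} ≅ S_{4, \overline{j₁+j₂}} ⊕ P_{2, \overline{j₁+j₂+1}}. -/

import Mathlib

noncomputable section

open scoped TensorProduct

namespace QFL

/-- The defining relations of the quasi-Frobenius-Lusztig kernel `ũ_q(sl₂)`,
on the free algebra on four generators `K = ι 0`, `K̂ = ι 1`, `E = ι 2`, `F = ι 3`. -/
inductive Rel (k : Type) [Field k] (n : ℕ) (q : k) :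
    FreeAlgebra k (Fin 4) → FreeAlgebra k (Fin 4) → Prop
  | Kord : Rel k n q (FreeAlgebra.ι k (0 : Fin 4) ^ n) 1
  | Khord : Rel k n q (FreeAlgebra.ι k (1 : Fin 4) ^ n)
      ((FreeAlgebra.ι k (0 : Fin 4) ^ (n - 1)) ^ 2)
  | KKh : Rel k n q (FreeAlgebra.ι k (0 : Fin 4) * FreeAlgebra.ι k (1 : Fin 4))
      (FreeAlgebra.ι k (1 : Fin 4) * FreeAlgebra.ι k (0 : Fin 4))
  | KE : Rel k n q
      (FreeAlgebra.ι k (0 : Fin 4) * FreeAlgebra.ι k (2 : Fin 4) *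
        FreeAlgebra.ι k (0 : Fin 4) ^ (n - 1))
      (q ^ n • FreeAlgebra.ι k (2 : Fin 4))
  | KF : Rel k n q
      (FreeAlgebra.ι k (0 : Fin 4) * FreeAlgebra.ι k (3 : Fin 4) *
        FreeAlgebra.ι k (0 : Fin 4) ^ (n - 1))
      ((q ^ n)⁻¹ • FreeAlgebra.ι k (3 : Fin 4))
  | KhE : Rel k n q
      (FreeAlgebra.ι k (1 : Fin 4) * FreeAlgebra.ι k (2 : Fin 4) *
        FreeAlgebra.ι k (1 : Fin 4) ^ (n ^ 2 - 1))
      ((q ^ n * (q ^ 2)⁻¹) • FreeAlgebra.ι k (2 : Fin 4))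
  | KhF : Rel k n q
      (FreeAlgebra.ι k (1 : Fin 4) * FreeAlgebra.ι k (3 : Fin 4) *
        FreeAlgebra.ι k (1 : Fin 4) ^ (n ^ 2 - 1))
      (((q ^ n)⁻¹ * q ^ 2) • FreeAlgebra.ι k (3 : Fin 4))
  | Enil : Rel k n q (FreeAlgebra.ι k (2 : Fin 4) ^ n ^ 2) 0
  | Fnil : Rel k n q (FreeAlgebra.ι k (3 : Fin 4) ^ n ^ 2) 0
  | EF : Rel k n q
      (FreeAlgebra.ι k (3 : Fin 4) * FreeAlgebra.ι k (2 : Fin 4) -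
        q⁻¹ • (FreeAlgebra.ι k (2 : Fin 4) * FreeAlgebra.ι k (3 : Fin 4)))
      (1 - FreeAlgebra.ι k (0 : Fin 4) ^ (n - 1) * FreeAlgebra.ι k (1 : Fin 4))

/-- The algebra `ũ_q(sl₂)` as the quotient of the free algebra by the defining relations. -/
abbrev U (k : Type) [Field k] (n : ℕ) (q : k) := RingQuot (Rel k n q)

variable (k : Type) [Field k] (n : ℕ) (q : k)

def K : U k n q := RingQuot.mkAlgHom k (Rel k n q) (FreeAlgebra.ι k (0 : Fin 4))
def Kh : U k n q := RingQuot.mkAlgHom k (Rel k n q) (FreeAlgebra.ι k (1 : Fin 4))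
def E : U k n q := RingQuot.mkAlgHom k (Rel k n q) (FreeAlgebra.ι k (2 : Fin 4))
def F : U k n q := RingQuot.mkAlgHom k (Rel k n q) (FreeAlgebra.ι k (3 : Fin 4))

/-- `K⁻¹ = K^(n-1)`. -/
def Kinv : U k n q := K k n q ^ (n - 1)
/-- `K̂⁻¹ = K̂^(n²-1)`. -/
def Khinv : U k n q := Kh k n q ^ (n ^ 2 - 1)

/-- `φ_{2i} = (2/n²) Σ_{t<n²/2} q^{-2it} (K⁻¹K̂)^t`. -/
def phi (i : ℕ) : U k n q :=
  ((n ^ 2 : k)⁻¹ * 2) • ∑ t ∈ Finset.range (n ^ 2 / 2),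
    (q⁻¹ ^ (2 * i * t)) • (Kinv k n q * Kh k n q) ^ t

/-- `𝟙₀ = (1/2)(1 + KK̂^(n/2))` and `𝟙₁ = (1/2)(1 - KK̂^(n/2))`. -/
def oneJ (j : ℕ) : U k n q :=
  if j = 0 then (2 : k)⁻¹ • (1 + K k n q * Kh k n q ^ (n / 2))
  else (2 : k)⁻¹ • (1 - K k n q * Kh k n q ^ (n / 2))

/-- The idempotent `e_{2i,j} = φ_{2i} 𝟙_j`. -/
def eIdem (i j : ℕ) : U k n q := phi k n q i * oneJ k n q j

/-- `α_{2i,j} = F^(n²-1) e_{2i,j}`. -/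
def alpha (i j : ℕ) : U k n q := F k n q ^ (n ^ 2 - 1) * eIdem k n q i j

/-- `β_{2i,j} = E^(2i-2) α_{2i,j}`. -/
def beta (i j : ℕ) : U k n q := E k n q ^ (2 * i - 2) * alpha k n q i j

/-- The Gaussian number `s_q = 1 + q + ⋯ + q^(s-1)`. -/
def gauss (x : k) (s : ℕ) : k := ∑ t ∈ Finset.range s, x ^ t

/-- The span of the PBW-type monomials `F^a K^c K̂^d E^b` with `a ≤ n²-2`, `b ≤ n²-1`,
`c ≤ n-1`, `d ≤ n²-1`. -/
def pbw : Submodule k (U k n q) :=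
  Submodule.span k {x | ∃ a b c d : ℕ, a ≤ n ^ 2 - 2 ∧ b ≤ n ^ 2 - 1 ∧ c ≤ n - 1 ∧
    d ≤ n ^ 2 - 1 ∧ x = F k n q ^ a * K k n q ^ c * Kh k n q ^ d * E k n q ^ b}

/-- `γ_{2i,j}`: the unique element of the PBW span with `F·γ = β_{2i,j}`. -/
def gam (i j : ℕ) : U k n q :=
  @dite _ (∃! x, x ∈ pbw k n q ∧ F k n q * x = beta k n q i j)
    (Classical.propDecidable _) (fun h => h.choose) (fun _ => 0)

/-- The left ideal `P_{2i,j} = u·γ_{2i,j}`. -/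
def P (i j : ℕ) : Submodule (U k n q) (U k n q) :=
  Submodule.span (U k n q) {gam k n q i j}

/-- `S_{2i,j} = Soc(P_{2i,j})`, the sum of all simple submodules of `P_{2i,j}`. -/
def S (i j : ℕ) : Submodule (U k n q) (U k n q) :=
  sSup {N : Submodule (U k n q) (U k n q) | N ≤ P k n q i j ∧ IsSimpleModule (U k n q) N}

end QFL

namespace QFL

variable (k : Type) [Field k] (n : ℕ) (q : k)

/-- `1_r = (1/n) Σ_{t<n} q̄^{(n-r)t} K^t`. -/
def oneIdem (r : ℕ) : U k n q :=
  (n : k)⁻¹ • ∑ t ∈ Finset.range n, ((q ^ n) ^ ((n - r) * t)) • K k n q ^ t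

/-- `♭ = Σ_{r<n} q^{-r} 1_r` (an invertible element of `u`). -/
def flat : U k n q := ∑ r ∈ Finset.range n, (q⁻¹ ^ r) • oneIdem k n q r

/-- The property that `Δ` is the comultiplication of `ũ_q(sl₂)` (which exists and is the
unique algebra map with these values on the generators). -/
def IsComul (Δ : U k n q →ₐ[k] (U k n q ⊗[k] U k n q)) : Prop :=
  Δ (K k n q) = K k n q ⊗ₜ[k] K k n q ∧
  Δ (Kh k n q) = Kh k n q ⊗ₜ[k] Kh k n q ∧
  Δ (E k n q) = (E k n q ⊗ₜ[k] Ring.inverse (flat k n q)) +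
    (Kinv k n q ⊗ₜ[k] (oneIdem k n q 0 * E k n q)) +
    ((1 : U k n q) ⊗ₜ[k] ((∑ r ∈ Finset.Icc 1 (n - 1), oneIdem k n q r) * E k n q)) ∧
  Δ (F k n q) = (F k n q ⊗ₜ[k] flat k n q) +
    ((Kinv k n q * Kh k n q) ⊗ₜ[k]
      (F k n q * ∑ r ∈ Finset.Icc 1 (n - 1), oneIdem k n q r)) +
    (Kh k n q ⊗ₜ[k] (F k n q * oneIdem k n q 0))

instance (N : Submodule (U k n q) (U k n q)) : SMulCommClass (U k n q) k N := by
  constructor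
  intro a b m
  ext
  show a • b • (m : U k n q) = b • a • (m : U k n q)
  rw [smul_comm]

/-- The `u`-module structure on `M ⊗[k] N` obtained from left `u`-modules `M`, `N` by letting
`u` act through the comultiplication `Δ`. -/
def tensorModule (Δ : U k n q →ₐ[k] (U k n q ⊗[k] U k n q))
    (M N : Type) [AddCommGroup M] [Module k M] [Module (U k n q) M]
    [IsScalarTower k (U k n q) M] [SMulCommClass (U k n q) k M]
    [AddCommGroup N] [Module k N] [Module (U k n q) N]
    [IsScalarTower k (U k n q) N] [SMulCommClass (U k n q) k N] :
    Module (U k n q) (M ⊗[k] N) :=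
  Module.compHom (M ⊗[k] N)
    ((Module.endTensorEndAlgHom (R := k) (S := k) (A := k) (M := M) (N := N)).comp
      ((Algebra.TensorProduct.map (Algebra.lsmul k k M) (Algebra.lsmul k k N)).comp
        Δ)).toRingHom

end QFL

namespace QFL

section Basics

variable {k : Type} [Field k] {n : ℕ} {q : k}

local notation "gK" => K k n q
local notation "gH" => Kh k n q
local notation "gE" => E k n q
local notation "gF" => F k n q
local notation "gL" => (Kinv k n q * Kh k n q)

lemma K_pow : gK ^ n = 1 := by
  have := RingQuot.mkAlgHom_rel k (Rel.Kord (k := k) (n := n) (q := q))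
  simp only [map_pow, map_one] at this; exact this

lemma Kh_pow : gH ^ n = (gK ^ (n - 1)) ^ 2 := by
  have := RingQuot.mkAlgHom_rel k (Rel.Khord (k := k) (n := n) (q := q))
  simp only [map_pow, map_one] at this; exact this

lemma K_Kh : gK * gH = gH * gK := by
  have := RingQuot.mkAlgHom_rel k (Rel.KKh (k := k) (n := n) (q := q))
  simp only [map_mul] at this; exact this

lemma Kh_pow' : gH ^ (n ^ 2) = 1 := by
  rw [pow_two, pow_mul, Kh_pow, ← pow_mul, ← pow_mul]
  have : (n - 1) * (2 * n) = n * ((n - 1) * 2) := by ring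
  rw [this, pow_mul, K_pow, one_pow]

lemma K_E (hn : 0 < n) : gK * gE = q ^ n • (gE * gK) := by
  have := RingQuot.mkAlgHom_rel k (Rel.KE (k := k) (n := n) (q := q))
  have h : gK * gE * gK ^ (n - 1) = q ^ n • gE := by
    simp only [map_mul, map_pow, map_smul] at this; exact this
  have h2 := congrArg (fun z => z * gK) h
  simp only [mul_assoc, ← pow_succ, Nat.sub_add_cancel hn, K_pow, mul_one, smul_mul_assoc] at h2
  exact h2

lemma K_F (hn : 0 < n) : gK * gF = (q ^ n)⁻¹ • (gF * gK) := by
  have := RingQuot.mkAlgHom_rel k (Rel.KF (k := k) (n := n) (q := q))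
  have h : gK * gF * gK ^ (n - 1) = (q ^ n)⁻¹ • gF := by
    simp only [map_mul, map_pow, map_smul] at this; exact this
  have h2 := congrArg (fun z => z * gK) h
  simp only [mul_assoc, ← pow_succ, Nat.sub_add_cancel hn, K_pow, mul_one, smul_mul_assoc] at h2
  exact h2

lemma Kh_E (hn : 0 < n) : gH * gE = (q ^ n * (q ^ 2)⁻¹) • (gE * gH) := by
  have := RingQuot.mkAlgHom_rel k (Rel.KhE (k := k) (n := n) (q := q))
  have h : gH * gE * gH ^ (n ^ 2 - 1) = (q ^ n * (q ^ 2)⁻¹) • gE := by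
    simp only [map_mul, map_pow, map_smul] at this; exact this
  have h2 := congrArg (fun z => z * gH) h
  simp only [mul_assoc, ← pow_succ, Nat.sub_add_cancel (pow_pos hn 2), Kh_pow', mul_one,
    smul_mul_assoc] at h2
  simpa [mul_smul] using h2

lemma Kh_F (hn : 0 < n) : gH * gF = ((q ^ n)⁻¹ * q ^ 2) • (gF * gH) := by
  have := RingQuot.mkAlgHom_rel k (Rel.KhF (k := k) (n := n) (q := q))
  have h : gH * gF * gH ^ (n ^ 2 - 1) = ((q ^ n)⁻¹ * q ^ 2) • gF := by
    simp only [map_mul, map_pow, map_smul] at this; exact this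
  have h2 := congrArg (fun z => z * gH) h
  simp only [mul_assoc, ← pow_succ, Nat.sub_add_cancel (pow_pos hn 2), Kh_pow', mul_one,
    smul_mul_assoc] at h2
  simpa [mul_smul] using h2

lemma E_nil : gE ^ (n ^ 2) = 0 := by
  have := RingQuot.mkAlgHom_rel k (Rel.Enil (k := k) (n := n) (q := q))
  simp only [map_pow, map_zero] at this; exact this

lemma F_nil : gF ^ (n ^ 2) = 0 := by
  have := RingQuot.mkAlgHom_rel k (Rel.Fnil (k := k) (n := n) (q := q))
  simp only [map_pow, map_zero] at this; exact this

lemma F_E : gF * gE = q⁻¹ • (gE * gF) + (1 - gL) := by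
  have := RingQuot.mkAlgHom_rel k (Rel.EF (k := k) (n := n) (q := q))
  have h : gF * gE - q⁻¹ • (gE * gF) = 1 - gK ^ (n - 1) * gH := by
    simp only [map_mul, map_pow, map_smul, map_sub, map_one] at this; exact this
  rw [Kinv, ← h]; abel

lemma Kinv_K (hn : 0 < n) : Kinv k n q * gK = 1 := by
  rw [Kinv, ← pow_succ, Nat.sub_add_cancel hn, K_pow]

lemma K_Kinv (hn : 0 < n) : gK * Kinv k n q = 1 := by
  rw [Kinv, ← pow_succ', Nat.sub_add_cancel hn, K_pow]

lemma K_L (hn : 0 < n) : gK * gL = gH := by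
  rw [← mul_assoc, K_Kinv hn, one_mul]

/-- induction principle: a property of elements of `U` closed under the operations. -/
lemma U_ind {p : U k n q → Prop} (h1 : ∀ c : k, p (algebraMap k _ c))
    (hK : p gK) (hH : p gH) (hE : p gE) (hF : p gF)
    (hadd : ∀ x y, p x → p y → p (x + y)) (hmul : ∀ x y, p x → p y → p (x * y)) (u : U k n q) :
    p u := by
  obtain ⟨a, rfl⟩ := RingQuot.mkAlgHom_surjective k (Rel k n q) u
  induction a using FreeAlgebra.induction with
  | grade0 r => rw [AlgHom.commutes]; exact h1 r
  | grade1 x => fin_cases x <;> assumption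
  | mul a b ha hb => rw [map_mul]; exact hmul _ _ ha hb
  | add a b ha hb => rw [map_add]; exact hadd _ _ ha hb

/-- The scalars occurring in `F E^m`. -/
def gs (q : k) (m : ℕ) : k := ∑ t ∈ Finset.range m, q⁻¹ ^ t

lemma gs_succ (m : ℕ) : gs q (m + 1) = 1 + q⁻¹ * gs q m := by
  rw [gs, Finset.sum_range_succ', gs, Finset.mul_sum]
  simp [pow_succ', add_comm]

lemma gs_succ' (m : ℕ) : gs q (m + 1) = gs q m + q⁻¹ ^ m := by
  rw [gs, Finset.sum_range_succ, gs]

lemma gs_zero : gs q 0 = 0 := by simp [gs]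

lemma gs_ne_zero [CharZero k] {N : ℕ} (hq : IsPrimitiveRoot q N) {m : ℕ} (h0 : 0 < m)
    (hm : m < N) : gs q m ≠ 0 := by
  intro h
  have h2 := mul_geom_sum q⁻¹ m
  rw [← gs, h, mul_zero] at h2
  have h3 : q ^ m = 1 := by
    have : q⁻¹ ^ m = 1 := by linear_combination -h2
    rw [inv_pow] at this; exact inv_eq_one.mp this
  have := Nat.le_of_dvd h0 (hq.dvd_of_pow_eq_one _ h3)
  omega

lemma gs_N {N : ℕ} (hN : 1 < N) (hq : IsPrimitiveRoot q N) : gs q N = 0 :=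
  hq.inv.geom_sum_eq_zero hN

/-- general commutation in an algebra -/
lemma comm_gen {A : Type} [Ring A] [Algebra k A] (e f l : A)
    (h1 : f * e = q⁻¹ • (e * f) + (1 - l)) (h2 : l * e = (q⁻¹ ^ 2) • (e * l)) (m : ℕ) :
    f * e ^ (m + 1) = (q⁻¹ ^ (m + 1)) • (e ^ (m + 1) * f) +
      gs q (m + 1) • (e ^ m * (1 - (q⁻¹ ^ m) • l)) := by
  induction m with
  | zero => simp [h1, gs]
  | succ m ih =>
    rw [pow_succ e (m + 1), ← mul_assoc, ih, add_mul, smul_mul_assoc, mul_assoc, h1, smul_mul_assoc,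
      mul_assoc, sub_mul, smul_mul_assoc, h2]
    simp only [mul_add, mul_sub, smul_add, smul_sub, mul_one, one_mul, mul_smul_comm, smul_smul,
      pow_succ, mul_assoc]
    rw [gs_succ' (m + 1)]
    simp only [add_smul, mul_add, mul_sub, smul_add, smul_sub, mul_one, one_mul, mul_smul_comm,
      smul_smul, pow_succ, mul_assoc]

    have e2 : q⁻¹ * gs q (m+1) + 1 = gs q (m+1) + q⁻¹ ^ (m+1) := by rw [← gs_succ', gs_succ (m+1)]; ring
    match_scalars
    · ring
    · ring
    · linear_combination (-(q⁻¹ * q⁻¹ ^ m)) * e2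

end Basics

end QFL

namespace QFL

section Wts

variable {k : Type} [Field k] {n : ℕ} {q : k}

local notation "gK" => K k n q
local notation "gH" => Kh k n q
local notation "gE" => E k n q
local notation "gF" => F k n q
local notation "gL" => (Kinv k n q * Kh k n q)

variable {M : Type} [AddCommGroup M] [Module k M] [Module (U k n q) M]
  [IsScalarTower k (U k n q) M]

/-- weight vectors -/
def Wt (k : Type) [Field k] (n : ℕ) (q : k) {M : Type} [AddCommGroup M] [Module k M]
    [Module (U k n q) M] (i : ℤ) (ε : k) (x : M) : Prop :=
  K k n q • x = (ε * q ^ (-(n * i) : ℤ)) • x ∧ Kh k n q • x = (ε * q ^ ((2 - n) * i : ℤ)) • x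

local notation "gW" => Wt k n q

lemma smul_cc (u : U k n q) (c : k) (x : M) : u • c • x = c • u • x := smul_comm u c x

lemma Wt.E (hn : 0 < n) (hq0 : q ≠ 0) {i : ℤ} {ε : k} {x : M} (h : gW i ε x) :
    gW (i - 1) ε (gE • x) := by
  constructor
  · rw [← mul_smul, K_E hn, smul_assoc, mul_smul, h.1, smul_cc, smul_smul]
    congr 1
    rw [mul_left_comm]
    congr 1
    rw [← zpow_natCast, ← zpow_add₀ hq0]; congr 1; ring
  · rw [← mul_smul, Kh_E hn, smul_assoc, mul_smul gE gH x, h.2, smul_cc, smul_smul]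
    congr 1
    rw [mul_left_comm]
    congr 1
    rw [← zpow_natCast, ← zpow_natCast q 2, ← zpow_neg, ← zpow_add₀ hq0, ← zpow_add₀ hq0]
    congr 1; push_cast; ring

lemma Wt.F (hn : 0 < n) (hq0 : q ≠ 0) {i : ℤ} {ε : k} {x : M} (h : gW i ε x) :
    gW (i + 1) ε (gF • x) := by
  constructor
  · rw [← mul_smul, K_F hn, smul_assoc, mul_smul, h.1, smul_cc, smul_smul]
    congr 1
    rw [mul_left_comm]
    congr 1
    rw [← zpow_natCast, ← zpow_neg, ← zpow_add₀ hq0]; congr 1; ring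
  · rw [← mul_smul, Kh_F hn, smul_assoc, mul_smul gF gH x, h.2, smul_cc, smul_smul]
    congr 1
    rw [mul_left_comm]
    congr 1
    rw [← zpow_natCast, ← zpow_natCast q 2, ← zpow_neg, ← zpow_add₀ hq0, ← zpow_add₀ hq0]
    congr 1; push_cast; ring

lemma Wt.Epow (hn : 0 < n) (hq0 : q ≠ 0) {i : ℤ} {ε : k} {x : M} (h : gW i ε x) (m : ℕ) :
    gW (i - m) ε (gE ^ m • x) := by
  induction m with
  | zero => simpa using h
  | succ m ih =>
    rw [pow_succ', mul_smul]
    have := ih.E hn hq0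
    push_cast
    rwa [← sub_sub]

lemma Wt.Fpow (hn : 0 < n) (hq0 : q ≠ 0) {i : ℤ} {ε : k} {x : M} (h : gW i ε x) (m : ℕ) :
    gW (i + m) ε (gF ^ m • x) := by
  induction m with
  | zero => simpa using h
  | succ m ih =>
    rw [pow_succ', mul_smul]
    have := ih.F hn hq0
    push_cast
    rwa [← add_assoc]

lemma Wt.smul {i : ℤ} {ε : k} {x : M} (h : gW i ε x) (c : k) : gW i ε (c • x) := by
  constructor
  · rw [smul_cc, h.1, smul_comm]
  · rw [smul_cc, h.2, smul_comm]

lemma Wt.add {i : ℤ} {ε : k} {x y : M} (h : gW i ε x) (h' : gW i ε y) : gW i ε (x + y) := by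
  constructor
  · rw [smul_add, h.1, h'.1, smul_add]
  · rw [smul_add, h.2, h'.2, smul_add]

lemma Wt.L (hn : 0 < n) (hq0 : q ≠ 0) {i : ℤ} {ε : k} (hε : ε ≠ 0) {x : M} (h : gW i ε x) :
    gL • x = q ^ (2 * i) • x := by
  have h1 : Kinv k n q • x = (ε * q ^ (-(n * i) : ℤ))⁻¹ • x := by
    have : Kinv k n q • gK • x = x := by rw [← mul_smul, Kinv_K hn, one_smul]
    rw [h.1, smul_cc] at this
    rw [eq_inv_smul_iff₀ (mul_ne_zero hε (zpow_ne_zero _ hq0))]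
    exact this
  rw [mul_smul, h.2, smul_cc, h1, smul_smul]
  congr 1
  rw [mul_inv, mul_mul_mul_comm, mul_inv_cancel₀ hε, one_mul, ← zpow_neg, ← zpow_add₀ hq0]
  congr 1; ring

lemma Wt.period {m : ℤ} (hq0 : q ≠ 0) (hm : 2 * m = (n : ℤ) ^ 2) (h2 : 2 ∣ n) (hqN : q ^ (n ^ 2) = 1)
    {i : ℤ} {ε : k} {x : M} (h : gW i ε x) (z : ℤ) : gW (i + m * z) ε x := by
  obtain ⟨p, rfl⟩ := h2
  have e1 : ∀ t : ℤ, q ^ (((2 * p : ℕ) : ℤ) ^ 2 * t) = 1 := by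
    intro t
    rw [zpow_mul, ← Nat.cast_pow, zpow_natCast, hqN, one_zpow]
  have h1 : q ^ (-((2 * p : ℕ) * (i + m * z)) : ℤ) = q ^ (-((2 * p : ℕ) * i) : ℤ) := by
    have : (-((2 * p : ℕ) * (i + m * z)) : ℤ) =
      (-((2 * p : ℕ) * i) : ℤ) + ((2 * p : ℕ) : ℤ) ^ 2 * (-(p * z)) := by
      rw [← hm]; push_cast; ring
    rw [this, zpow_add₀ hq0, e1, mul_one]
  have h2 : q ^ ((2 - (2 * p : ℕ)) * (i + m * z) : ℤ) = q ^ ((2 - (2 * p : ℕ)) * i : ℤ) := by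
    have : ((2 - (2 * p : ℕ)) * (i + m * z) : ℤ) =
      ((2 - (2 * p : ℕ)) * i : ℤ) + ((2 * p : ℕ) : ℤ) ^ 2 * (z - p * z) := by
      rw [← hm]; push_cast; linear_combination (0 : ℤ) * hm
    rw [this, zpow_add₀ hq0, e1, mul_one]
  exact ⟨by rw [h1]; exact h.1, by rw [h2]; exact h.2⟩

lemma L_E (hn : 0 < n) : gL * gE = (q⁻¹ ^ 2) • (gE * gL) := by
  have h : gK * (gL * gE) = gK * ((q⁻¹ ^ 2) • (gE * gL)) := by
    rw [mul_smul_comm, ← mul_assoc, ← mul_assoc gK gE, K_L hn, K_E hn, Kh_E hn, smul_mul_assoc,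
      mul_assoc gE, K_L hn, smul_smul, inv_pow, mul_comm]
  have h2 := congrArg (fun z => Kinv k n q * z) h
  simpa only [← mul_assoc, Kinv_K hn, one_mul] using h2

/-- structure constants -/
def dd (q : k) (i : ℤ) (m : ℕ) : k := gs q m * (1 - q ^ (2 * i - m + 1))

lemma dd_zero (i : ℤ) : dd q i 0 = 0 := by simp [dd, gs_zero]

lemma dd_N (hN : 1 < n ^ 2) (hq : IsPrimitiveRoot q (n ^ 2)) (i : ℤ) : dd q i (n ^ 2) = 0 := by
  simp [dd, gs_N hN hq]

lemma dd_ne [CharZero k] (hq : IsPrimitiveRoot q (n ^ 2)) {i : ℤ} {m : ℕ} (h0 : 0 < m)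
    (hm : m < n ^ 2) (h : ¬ ((n ^ 2 : ℕ) : ℤ) ∣ 2 * i - m + 1) : dd q i m ≠ 0 := by
  refine mul_ne_zero (gs_ne_zero hq h0 hm) ?_
  intro h2
  exact h ((hq.zpow_eq_one_iff_dvd _).1 (by linear_combination -h2))

lemma dd_eq (hq : IsPrimitiveRoot q (n ^ 2)) {i : ℤ} {m : ℕ}
    (h : ((n ^ 2 : ℕ) : ℤ) ∣ 2 * i - m + 1) : dd q i m = 0 := by
  rw [dd, (hq.zpow_eq_one_iff_dvd _).2 h]; simp

lemma F_Epow (hn : 0 < n) (hq0 : q ≠ 0) {i : ℤ} {ε : k} (hε : ε ≠ 0) {x : M} (h : gW i ε x)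
    (m : ℕ) : gF • gE ^ m • x = (q⁻¹ ^ m) • gE ^ m • gF • x + dd q i m • gE ^ (m - 1) • x := by
  cases m with
  | zero => simp [dd_zero]
  | succ m =>
    rw [← mul_smul, comm_gen (q := q) gE gF gL F_E (L_E hn), add_smul, smul_assoc, mul_smul,
      smul_assoc, mul_smul, sub_smul, one_smul, smul_assoc, h.L hn hq0 hε, Nat.add_sub_cancel,
      smul_smul (q⁻¹ ^ m)]
    have e1 : q⁻¹ ^ m * q ^ (2 * i) = q ^ (2 * i - ((m + 1 : ℕ) : ℤ) + 1) := by
      rw [← zpow_natCast, inv_zpow', ← zpow_add₀ hq0]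
      congr 1; push_cast; ring
    rw [e1, dd, mul_smul (gs q (m + 1)), sub_smul (1 : k), one_smul k, smul_sub (gE ^ m), smul_cc]

/-- the span of `E^m x` -/
def chain (k : Type) [Field k] (n : ℕ) (q : k) {M : Type} [AddCommGroup M] [Module k M]
    [Module (U k n q) M] (x : M) : Submodule k M :=
  Submodule.span k (Set.range fun m : ℕ => E k n q ^ m • x)

lemma mem_chain_pow (x : M) (m : ℕ) : gE ^ m • x ∈ chain k n q x :=
  Submodule.subset_span ⟨m, rfl⟩

lemma mem_chain_self (x : M) : x ∈ chain k n q x := by simpa using mem_chain_pow (k := k) (n := n) (q := q) x 0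

/-- to check stability of a chain under `u` it suffices to check the generators -/
lemma chain_le {A : Submodule k M} {x : M} (u : U k n q) (h : ∀ m : ℕ, u • gE ^ m • x ∈ A) {z : M}
    (hz : z ∈ chain k n q x) : u • z ∈ A := by
  induction hz using Submodule.span_induction with
  | mem x hx => obtain ⟨m, rfl⟩ := hx; exact h m
  | zero => simp
  | add x y _ _ hx hy => rw [smul_add]; exact A.add_mem hx hy
  | smul a x _ hx => rw [smul_cc]; exact A.smul_mem _ hx

lemma chain_E {x z : M} (hz : z ∈ chain k n q x) : gE • z ∈ chain k n q x :=
  chain_le _ (fun m => by rw [← mul_smul, ← pow_succ']; exact mem_chain_pow _ _) hz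

lemma chain_K (hn : 0 < n) (hq0 : q ≠ 0) {i : ℤ} {ε : k} {x z : M} (h : gW i ε x)
    (hz : z ∈ chain k n q x) : gK • z ∈ chain k n q x :=
  chain_le _ (fun m => by
    rw [(h.Epow hn hq0 m).1]; exact Submodule.smul_mem _ _ (mem_chain_pow _ _)) hz

lemma chain_H (hn : 0 < n) (hq0 : q ≠ 0) {i : ℤ} {ε : k} {x z : M} (h : gW i ε x)
    (hz : z ∈ chain k n q x) : gH • z ∈ chain k n q x :=
  chain_le _ (fun m => by
    rw [(h.Epow hn hq0 m).2]; exact Submodule.smul_mem _ _ (mem_chain_pow _ _)) hz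

lemma chain_F (hn : 0 < n) (hq0 : q ≠ 0) {i : ℤ} {ε : k} (hε : ε ≠ 0) {x z : M} (h : gW i ε x)
    {A : Submodule k M} (hA : chain k n q x ≤ A) (hF : ∀ m : ℕ, gE ^ m • gF • x ∈ A)
    (hz : z ∈ chain k n q x) : gF • z ∈ A :=
  chain_le _ (fun m => by
    rw [F_Epow hn hq0 hε h]
    exact A.add_mem (A.smul_mem _ (hF m)) (A.smul_mem _ (hA (mem_chain_pow _ _)))) hz

lemma Epow_zero {x : M} {d m : ℕ} (h : gE ^ d • x = 0) (hm : d ≤ m) : gE ^ m • x = 0 := by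
  rw [← Nat.sub_add_cancel hm, pow_add, mul_smul, h, smul_zero]

lemma mem_chain {d : ℕ} {x z : M} (hd : gE ^ d • x = 0) (hz : z ∈ chain k n q x) :
    ∃ c : ℕ → k, z = ∑ m ∈ Finset.range d, c m • gE ^ m • x := by
  induction hz using Submodule.span_induction with
  | mem y hy =>
    obtain ⟨m, rfl⟩ := hy
    by_cases hm : m < d
    · refine ⟨fun t => if t = m then 1 else 0, ?_⟩
      simp [hm]
    · exact ⟨fun _ => 0, by simp [Epow_zero hd (not_lt.1 hm)]⟩
  | zero => exact ⟨fun _ => 0, by simp⟩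
  | add x y _ _ hx hy =>
    obtain ⟨c, rfl⟩ := hx
    obtain ⟨c', rfl⟩ := hy
    exact ⟨fun m => c m + c' m, by simp [add_smul, Finset.sum_add_distrib]⟩
  | smul a x _ hx =>
    obtain ⟨c, rfl⟩ := hx
    exact ⟨fun m => a * c m, by simp [mul_smul, Finset.smul_sum]⟩

lemma chain_indep' {D d : ℕ} (hd : d ≤ D + 1) {x : M} (A : Submodule k M)
    (hA : ∀ z ∈ A, gE • z ∈ A) (h1 : gE ^ (D + 1) • x = 0) (h2 : gE ^ D • x ∉ A) (c : ℕ → k)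
    (h : ∑ m ∈ Finset.range d, c m • gE ^ m • x ∈ A) : ∀ m < d, c m = 0 := by
  have hA' : ∀ t : ℕ, ∀ z ∈ A, gE ^ t • z ∈ A := by
    intro t
    induction t with
    | zero => intro z hz; simpa using hz
    | succ t ih => intro z hz; rw [pow_succ, mul_smul]; exact ih _ (hA _ hz)
  intro m
  induction m using Nat.strong_induction_on with
  | _ m ih =>
    intro hm
    have h3 := hA' (D - m) _ h
    rw [Finset.smul_sum, Finset.sum_eq_single_of_mem m (Finset.mem_range.2 hm)] at h3
    · rw [smul_cc, ← mul_smul, ← pow_add, Nat.sub_add_cancel (by omega)] at h3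
      by_contra hc
      exact h2 ((A.smul_mem_iff hc).1 h3)
    · intro t ht htm
      rcases lt_or_gt_of_ne htm with hlt | hgt
      · rw [ih t hlt (Finset.mem_range.1 ht)]; simp
      · rw [smul_cc, ← mul_smul, ← pow_add, Epow_zero h1 (by omega), smul_zero]

lemma chain_indep {D d : ℕ} (hd : d ≤ D + 1) {x : M} (h1 : gE ^ (D + 1) • x = 0)
    (h2 : gE ^ D • x ≠ 0) (c : ℕ → k)
    (h : ∑ m ∈ Finset.range d, c m • gE ^ m • x = 0) : ∀ m < d, c m = 0 :=
  chain_indep' hd ⊥ (by simp) h1 (by simpa using h2) c (by simpa using h)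

lemma Fsum (hn : 0 < n) (hq0 : q ≠ 0) {i : ℤ} {ε : k} (hε : ε ≠ 0) {x : M} (h : gW i ε x)
    {d : ℕ} (hd : dd q i d = 0) (c : ℕ → k) :
    gF • ∑ m ∈ Finset.range d, c m • gE ^ m • x =
      ∑ m ∈ Finset.range d, (c m * q⁻¹ ^ m) • gE ^ m • gF • x +
      ∑ m ∈ Finset.range d, (c (m + 1) * dd q i (m + 1)) • gE ^ m • x := by
  have h1 : ∑ m ∈ Finset.range d, (c (m + 1) * dd q i (m + 1)) • gE ^ m • x =
      ∑ m ∈ Finset.range d, (c m * dd q i m) • gE ^ (m - 1) • x := by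
    cases d with
    | zero => simp
    | succ d =>
      rw [Finset.sum_range_succ, Finset.sum_range_succ', hd, dd_zero]
      simp
  rw [h1, ← Finset.sum_add_distrib, Finset.smul_sum]
  refine Finset.sum_congr rfl fun m _ => ?_
  rw [smul_cc, F_Epow hn hq0 hε h, smul_add, mul_smul (c m), mul_smul (c m)]

lemma shift_sum {a : M} {N : ℕ} (hN : gE ^ N • a = 0) (c : ℕ → k) (r : ℕ) :
    ∑ m ∈ Finset.range N, c m • gE ^ m • gE ^ r • a =
      ∑ m ∈ Finset.range N, (if r ≤ m then c (m - r) else 0) • gE ^ m • a := by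
  have h1 : ∑ m ∈ Finset.range N, (if r ≤ m then c (m - r) else 0) • gE ^ m • a =
      ∑ m ∈ Finset.range (N + r), (if r ≤ m then c (m - r) else 0) • gE ^ m • a := by
    rw [Finset.sum_range_add, left_eq_add]
    refine Finset.sum_eq_zero fun m _ => ?_
    rw [Epow_zero hN (by omega), smul_zero]
  rw [h1, add_comm N r, Finset.sum_range_add]
  rw [Finset.sum_eq_zero (s := Finset.range r), zero_add]
  · refine Finset.sum_congr rfl fun m _ => ?_
    rw [← mul_smul, ← pow_add]
    simp [add_comm]
  · intro m hm
    rw [if_neg (by simpa using hm), zero_smul]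

/-- stability under generators implies stability under `U`. -/
lemma stable (A : Submodule k M) (hK : ∀ z ∈ A, gK • z ∈ A) (hH : ∀ z ∈ A, gH • z ∈ A)
    (hE : ∀ z ∈ A, gE • z ∈ A) (hF : ∀ z ∈ A, gF • z ∈ A) (u : U k n q) : ∀ z ∈ A, u • z ∈ A := by
  induction u using U_ind with
  | h1 c => intro z hz; rw [algebraMap_smul]; exact A.smul_mem _ hz
  | hK => exact hK
  | hH => exact hH
  | hE => exact hE
  | hF => exact hF
  | hadd x y hx hy => intro z hz; rw [add_smul]; exact A.add_mem (hx z hz) (hy z hz)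
  | hmul x y hx hy => intro z hz; rw [mul_smul]; exact hx _ (hy z hz)

/-- each nonzero submodule contains a nonzero vector killed by `F`. -/
lemma exF {z : M} (hz : z ≠ 0) : ∃ t : ℕ, gF ^ t • z ≠ 0 ∧ gF • gF ^ t • z = 0 := by
  classical
  have hex : ∃ t : ℕ, gF ^ t • z = 0 := ⟨n ^ 2, by rw [F_nil, zero_smul]⟩
  have h0 : Nat.find hex ≠ 0 := by
    intro h; have := Nat.find_spec hex; rw [h] at this; exact hz (by simpa using this)
  refine ⟨Nat.find hex - 1, Nat.find_min hex (by omega), ?_⟩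
  rw [← mul_smul, ← pow_succ', Nat.sub_add_cancel (by omega)]
  exact Nat.find_spec hex

/-- cyclic submodule generated by a vector killed by `F`. -/
lemma chain_stable (hn : 0 < n) (hq0 : q ≠ 0) {i : ℤ} {ε : k} (hε : ε ≠ 0) {x : M} (h : gW i ε x)
    (hF : gF • x = 0) (u : U k n q) : ∀ z ∈ chain k n q x, u • z ∈ chain k n q x :=
  stable _ (fun _ => chain_K hn hq0 h) (fun _ => chain_H hn hq0 h) (fun _ => chain_E)
    (fun _ => chain_F hn hq0 hε h le_rfl (by simp [hF])) u

lemma kerF_chain (hn : 0 < n) (hq0 : q ≠ 0) {i : ℤ} {ε : k} (hε : ε ≠ 0) {x : M} (h : gW i ε x)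
    (hF : gF • x = 0) {D : ℕ} (h1 : gE ^ (D + 1) • x = 0) (h2 : gE ^ D • x ≠ 0)
    (hD : dd q i (D + 1) = 0) (hdd : ∀ m, 0 < m → m < D + 1 → dd q i m ≠ 0) {z : M}
    (hz : z ∈ chain k n q x) (hFz : gF • z = 0) : ∃ c : k, z = c • x := by
  obtain ⟨c, rfl⟩ := mem_chain h1 hz
  rw [Fsum hn hq0 hε h hD, hF] at hFz
  simp only [smul_zero, Finset.sum_const_zero, zero_add] at hFz
  have h3 := chain_indep le_rfl h1 h2 (fun m => c (m + 1) * dd q i (m + 1)) hFz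
  refine ⟨c 0, ?_⟩
  rw [Finset.sum_range_succ', Finset.sum_eq_zero]
  · simp
  · intro m hm
    have hm' : m < D := Finset.mem_range.1 hm
    have := h3 m (by omega)
    rw [(mul_eq_zero.1 this).resolve_right (hdd _ (by omega) (by omega)), zero_smul]

/-- the data describing the projective modules -/
structure PData (k : Type) [Field k] (n : ℕ) (q : k) {M : Type} [AddCommGroup M] [Module k M]
    [Module (U k n q) M] (i : ℕ) (ε : k) (g a : M) : Prop where
  hF : F k n q • a = 0
  wa : Wt k n q ((i : ℤ) - 1) ε a
  wg : Wt k n q (-(i : ℤ)) ε g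
  hg : F k n q • g = E k n q ^ (2 * i - 2) • a
  ne : E k n q ^ (n ^ 2 - 1) • a ≠ 0

lemma E_nil_smul (x : M) : gE ^ (n ^ 2) • x = 0 := by rw [E_nil, zero_smul]

lemma pair_notMem [CharZero k] (hn : 0 < n) (hN : 1 < n ^ 2) (hq : IsPrimitiveRoot q (n ^ 2)) (hq0 : q ≠ 0)
    {i : ℕ} (hi : 1 ≤ i)
    (hi2 : 2 * i ≤ n ^ 2) {ε : k} (hε : ε ≠ 0) {g a : M} (h : PData k n q i ε g a) (t : ℕ)
    (ht : n ^ 2 - 2 * i + 1 + t ≤ n ^ 2 - 1) :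
    gE ^ (n ^ 2 - 2 * i + 1 + t) • g ∉ chain k n q a := by
  have hFA : ∀ z ∈ chain k n q a, gF • z ∈ chain k n q a :=
    chain_stable hn hq0 hε h.wa h.hF _
  have hN1 : n ^ 2 - 1 + 1 = n ^ 2 := by omega
  induction t with
  | zero =>
    intro hmem
    obtain ⟨c, hc⟩ := mem_chain (E_nil_smul a) hmem
    have h1 := congrArg (fun z => gF • z) hc
    beta_reduce at h1
    rw [Fsum hn hq0 hε h.wa (dd_N hN hq _), h.hF, F_Epow hn hq0 hε h.wg, h.hg, ← mul_smul, ← pow_add,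
      dd_eq hq, zero_smul] at h1
    · simp only [smul_zero, Finset.sum_const_zero, zero_add, add_zero] at h1
      rw [show n ^ 2 - 2 * i + 1 + (2 * i - 2) = n ^ 2 - 1 by omega] at h1
      rw [← hN1, Finset.sum_range_succ, hN1, dd_N hN hq, mul_zero, zero_smul, add_zero] at h1
      have h2 := chain_indep (D := n ^ 2 - 1) (d := n ^ 2 - 1 + 1) (x := a) le_rfl
        (by rw [hN1]; exact E_nil_smul a) h.ne
        (fun m => if m < n ^ 2 - 1 then c (m + 1) * dd q (i - 1) (m + 1) else
          - q⁻¹ ^ (n ^ 2 - 2 * i + 1)) (by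
          rw [Finset.sum_range_succ]
          simp only [lt_irrefl, if_false]
          rw [neg_smul, h1, add_neg_eq_zero]
          refine Finset.sum_congr rfl fun m hm => ?_
          rw [if_pos (Finset.mem_range.1 hm)])
        (n ^ 2 - 1) (by omega)
      simp only [lt_irrefl, if_false, neg_eq_zero] at h2
      exact pow_ne_zero _ (inv_ne_zero hq0) h2
    · refine ⟨-1, ?_⟩
      have : ((n ^ 2 - 2 * i + 1 + 0 : ℕ) : ℤ) = (n ^ 2 : ℕ) - 2 * i + 1 := by omega
      rw [this]; ring
  | succ t ih =>
    intro hmem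
    refine ih (by omega) ?_
    have h1 := hFA _ hmem
    rw [F_Epow hn hq0 hε h.wg, h.hg, ← mul_smul, ← pow_add] at h1
    have h2 := (Submodule.add_mem_iff_right _ (Submodule.smul_mem _ _ (mem_chain_pow _ _))).1 h1
    refine ((chain k n q a).smul_mem_iff (dd_ne hq (by omega) (by omega) ?_)).1 h2
    have : ((n ^ 2 - 2 * i + 1 + (t + 1) : ℕ) : ℤ) = (n ^ 2 : ℕ) - 2 * i + 1 + (t + 1) := by omega
    rw [this]
    rintro ⟨w, hw⟩
    have h3 : ((n ^ 2 : ℕ) : ℤ) * (w + 1) = -(t + 1) := by linear_combination -hw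
    have h4 : ((n ^ 2 : ℕ) : ℤ) ∣ (t + 1) := ⟨-(w + 1), by linear_combination h3⟩
    have h5 := Int.le_of_dvd (by positivity) h4
    omega

lemma pair_indep [CharZero k] (hn : 0 < n) (hN : 1 < n ^ 2) (hq : IsPrimitiveRoot q (n ^ 2)) (hq0 : q ≠ 0)
    {i : ℕ} (hi : 1 ≤ i)
    (hi2 : 2 * i ≤ n ^ 2) {ε : k} (hε : ε ≠ 0) {g a : M} (h : PData k n q i ε g a)
    (x y : ℕ → k) (hxy : ∑ m ∈ Finset.range (n ^ 2), x m • gE ^ m • g +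
      ∑ m ∈ Finset.range (n ^ 2), y m • gE ^ m • a = 0) :
    (∀ m < n ^ 2, x m = 0) ∧ (∀ m < n ^ 2, y m = 0) := by
  have hN1 : n ^ 2 - 1 + 1 = n ^ 2 := by omega
  have hx : ∀ m < n ^ 2, x m = 0 := by
    refine chain_indep' (D := n ^ 2 - 1) (by omega) (chain k n q a) (fun _ => chain_E)
      (by rw [hN1]; exact E_nil_smul g) ?_ x ?_
    · have := pair_notMem hn hN hq hq0 hi hi2 hε h (2 * i - 2) (by omega)
      rwa [show n ^ 2 - 2 * i + 1 + (2 * i - 2) = n ^ 2 - 1 by omega] at this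
    · rw [eq_neg_of_add_eq_zero_left hxy]
      exact Submodule.neg_mem _ (Submodule.sum_mem _ fun m _ =>
        Submodule.smul_mem _ _ (mem_chain_pow _ _))
  refine ⟨hx, ?_⟩
  rw [Finset.sum_eq_zero (fun m hm => by rw [hx m (Finset.mem_range.1 hm), zero_smul]), zero_add] at hxy
  exact chain_indep (D := n ^ 2 - 1) (by omega) (by rw [hN1]; exact E_nil_smul a) h.ne y hxy

end Wts

end QFL

namespace QFL

section Struct

variable {k : Type} [Field k] {n : ℕ} {q : k}

local notation "gK" => K k n q
local notation "gH" => Kh k n q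
local notation "gE" => E k n q
local notation "gF" => F k n q
local notation "gL" => (Kinv k n q * Kh k n q)
local notation "gW" => Wt k n q

variable {M : Type} [AddCommGroup M] [Module k M] [Module (U k n q) M]
  [IsScalarTower k (U k n q) M]

lemma kerF_pair [CharZero k] (hn : 0 < n) (hN : 1 < n ^ 2) (hq : IsPrimitiveRoot q (n ^ 2)) (hq0 : q ≠ 0)
    {i : ℕ} (hi : 1 ≤ i) (hi2 : 2 * i ≤ n ^ 2) {ε : k} (hε : ε ≠ 0) {g a : M}
    (h : PData k n q i ε g a) {z : M} (hz : z ∈ chain k n q g ⊔ chain k n q a)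
    (hFz : gF • z = 0) : ∃ c d : k, z = c • a + d • gE ^ (2 * i - 1) • a := by
  obtain ⟨z1, hz1, z2, hz2, rfl⟩ := Submodule.mem_sup.1 hz
  obtain ⟨x, rfl⟩ := mem_chain (E_nil_smul g) hz1
  obtain ⟨y, rfl⟩ := mem_chain (E_nil_smul a) hz2
  rw [smul_add, Fsum hn hq0 hε h.wg (dd_N hN hq _), Fsum hn hq0 hε h.wa (dd_N hN hq _), h.hF, h.hg,
    shift_sum (E_nil_smul a)] at hFz
  simp only [smul_zero, Finset.sum_const_zero, zero_add] at hFz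
  rw [add_right_comm, ← Finset.sum_add_distrib, add_comm] at hFz
  simp only [← add_smul] at hFz
  obtain ⟨hx, hy⟩ := pair_indep hn hN hq hq0 hi hi2 hε h
    (fun m => x (m + 1) * dd q (-i) (m + 1))
    (fun m => (if 2 * i - 2 ≤ m then x (m - (2 * i - 2)) * q⁻¹ ^ (m - (2 * i - 2)) else 0) +
      y (m + 1) * dd q (i - 1) (m + 1)) hFz
  have hx1 : ∀ m, 0 < m → m < n ^ 2 → m ≠ n ^ 2 - 2 * i + 1 → x m = 0 := by
    intro m h0 hm hne
    have := hx (m - 1) (by omega)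
    simp only [Nat.sub_add_cancel h0] at this
    refine (mul_eq_zero.1 this).resolve_right (dd_ne hq h0 hm ?_)
    rintro ⟨w, hw⟩
    have e1 : ((n ^ 2 : ℕ) : ℤ) * (w + 1) = (n ^ 2 : ℕ) - 2 * i - m + 1 := by linear_combination -hw
    have hw1 : w + 1 = 0 := by
      have a1 : w + 1 < 1 := by
        by_contra hc
        nlinarith [hc, e1, hN]
      have a2 : -1 < w + 1 := by
        by_contra hc
        have : ((n ^ 2 : ℕ) : ℤ) * (w + 1) ≤ ((n ^ 2 : ℕ) : ℤ) * (-1) :=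
          mul_le_mul_of_nonneg_left (by omega) (by positivity)
        omega
      omega
    rw [hw1, mul_zero] at e1
    omega
  have hx2 : x (n ^ 2 - 2 * i + 1) = 0 := by
    have := hy (n ^ 2 - 1) (by omega)
    rw [if_pos (by omega), Nat.sub_add_cancel (by omega), dd_N hN hq, mul_zero, add_zero,
      show n ^ 2 - 1 - (2 * i - 2) = n ^ 2 - 2 * i + 1 by omega] at this
    exact (mul_eq_zero.1 this).resolve_right (pow_ne_zero _ (inv_ne_zero hq0))
  have hx3 : x 0 = 0 := by
    have := hy (2 * i - 2) (by omega)
    rw [if_pos le_rfl, dd_eq hq (m := 2 * i - 2 + 1)] at this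
    · simpa using this
    · have : ((2 * i - 2 + 1 : ℕ) : ℤ) = 2 * i - 1 := by omega
      rw [this]; ring_nf; simp
  have hx4 : ∀ m < n ^ 2, x m = 0 := by
    intro m hm
    rcases Nat.eq_zero_or_pos m with rfl | h0
    · exact hx3
    · by_cases hme : m = n ^ 2 - 2 * i + 1
      · rw [hme]; exact hx2
      · exact hx1 m h0 hm hme
  have hy1 : ∀ m, 0 < m → m < n ^ 2 → m ≠ 2 * i - 1 → y m = 0 := by
    intro m h0 hm hne
    have := hy (m - 1) (by omega)
    rw [Nat.sub_add_cancel h0, hx4 _ (by omega)] at this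
    simp only [zero_mul, ite_self, zero_add] at this
    refine (mul_eq_zero.1 this).resolve_right (dd_ne hq h0 hm ?_)
    intro hd
    have h1 := Int.eq_zero_of_abs_lt_dvd hd (by rw [abs_lt]; constructor <;> omega)
    omega
  refine ⟨y 0, y (2 * i - 1), ?_⟩
  rw [Finset.sum_eq_zero (fun m hm => by rw [hx4 m (Finset.mem_range.1 hm), zero_smul]), zero_add]
  rw [Finset.sum_eq_add_of_mem 0 (2 * i - 1) (by simp; omega) (by simp; omega) (by omega)]
  · simp
  · intro m hm hne
    rw [hy1 m (by omega) (Finset.mem_range.1 hm) hne.2, zero_smul]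

lemma pair_stable (hn : 0 < n) (hq0 : q ≠ 0) {i i' : ℤ} {ε : k} (hε : ε ≠ 0) {g a : M}
    (wg : gW i ε g) (wa : gW i' ε a) (hF : gF • a = 0) {r : ℕ} (hg : gF • g = gE ^ r • a)
    (u : U k n q) : ∀ z ∈ chain k n q g ⊔ chain k n q a, u • z ∈ chain k n q g ⊔ chain k n q a := by
  have key : ∀ (v : U k n q), (∀ z ∈ chain k n q g, v • z ∈ chain k n q g ⊔ chain k n q a) →
      (∀ z ∈ chain k n q a, v • z ∈ chain k n q g ⊔ chain k n q a) →
      ∀ z ∈ chain k n q g ⊔ chain k n q a, v • z ∈ chain k n q g ⊔ chain k n q a := by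
    intro v h1 h2 z hz
    obtain ⟨z1, hz1, z2, hz2, rfl⟩ := Submodule.mem_sup.1 hz
    rw [smul_add]
    exact Submodule.add_mem _ (h1 _ hz1) (h2 _ hz2)
  have l1 : chain k n q g ≤ chain k n q g ⊔ chain k n q a := le_sup_left
  have l2 : chain k n q a ≤ chain k n q g ⊔ chain k n q a := le_sup_right
  refine stable _ (key _ ?_ ?_) (key _ ?_ ?_) (key _ ?_ ?_) (key _ ?_ ?_) u
  · exact fun z hz => l1 (chain_K hn hq0 wg hz)
  · exact fun z hz => l2 (chain_K hn hq0 wa hz)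
  · exact fun z hz => l1 (chain_H hn hq0 wg hz)
  · exact fun z hz => l2 (chain_H hn hq0 wa hz)
  · exact fun z hz => l1 (chain_E hz)
  · exact fun z hz => l2 (chain_E hz)
  · refine fun z hz => chain_F hn hq0 hε wg l1 ?_ hz
    intro m
    rw [hg, ← mul_smul, ← pow_add]
    exact l2 (mem_chain_pow _ _)
  · exact fun z hz => chain_F hn hq0 hε wa l2 (by simp [hF]) hz

/-- the data describing simple modules -/
structure SData (k : Type) [Field k] (n : ℕ) (q : k) {M : Type} [AddCommGroup M] [Module k M]
    [Module (U k n q) M] (i : ℕ) (ε : k) (s : M) : Prop where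
  hF : F k n q • s = 0
  ws : Wt k n q (-(i : ℤ)) ε s
  nil : E k n q ^ (n ^ 2 - 2 * i + 1) • s = 0
  ne : E k n q ^ (n ^ 2 - 2 * i) • s ≠ 0

lemma PData.s (hn : 0 < n) (hN : 1 < n ^ 2) (hq : IsPrimitiveRoot q (n ^ 2)) (hq0 : q ≠ 0)
    {i : ℕ} (hi : 1 ≤ i) (hi2 : 2 * i ≤ n ^ 2) {ε : k} (hε : ε ≠ 0) {g a : M}
    (h : PData k n q i ε g a) : SData k n q i ε (gE ^ (2 * i - 1) • a) where
  hF := by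
    rw [F_Epow hn hq0 hε h.wa, h.hF, dd_eq hq (m := 2 * i - 1)]
    · simp
    · have : ((2 * i - 1 : ℕ) : ℤ) = 2 * i - 1 := by omega
      rw [this]; ring_nf; simp
  ws := by
    have := h.wa.Epow hn hq0 (2 * i - 1)
    have e : ((2 * i - 1 : ℕ) : ℤ) = 2 * i - 1 := by omega
    rw [e] at this
    convert this using 1
    ring
  nil := by
    rw [← mul_smul, ← pow_add, show n ^ 2 - 2 * i + 1 + (2 * i - 1) = n ^ 2 by omega, E_nil_smul]
  ne := by
    rw [← mul_smul, ← pow_add, show n ^ 2 - 2 * i + (2 * i - 1) = n ^ 2 - 1 by omega]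
    exact h.ne

lemma SData.ker [CharZero k] (hn : 0 < n) (hq : IsPrimitiveRoot q (n ^ 2)) (hq0 : q ≠ 0)
    {i : ℕ} (hi : 1 ≤ i) (hi2 : 2 * i ≤ n ^ 2) {ε : k} (hε : ε ≠ 0) {s : M}
    (h : SData k n q i ε s) {z : M} (hz : z ∈ chain k n q s) (hFz : gF • z = 0) :
    ∃ c : k, z = c • s := by
  refine kerF_chain hn hq0 hε h.ws h.hF h.nil h.ne (dd_eq hq ?_) ?_ hz hFz
  · refine ⟨-1, ?_⟩
    have : ((n ^ 2 - 2 * i + 1 : ℕ) : ℤ) = (n ^ 2 : ℕ) - 2 * i + 1 := by omega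
    rw [this]; ring
  · intro m h0 hm
    refine dd_ne hq h0 (by omega) ?_
    intro hd
    have h1 := Int.eq_zero_of_abs_lt_dvd hd (by rw [abs_lt]; constructor <;> omega)
    omega

lemma SData.ne_zero {i : ℕ} {ε : k} {s : M} (h : SData k n q i ε s) : s ≠ 0 := by
  intro h0
  exact h.ne (by rw [h0, smul_zero])

lemma SData.span_le (hn : 0 < n) (hq0 : q ≠ 0)
    {i : ℕ} {ε : k} (hε : ε ≠ 0) {s : M}
    (h : SData k n q i ε s) {z : M} (hz : z ∈ Submodule.span (U k n q) {s}) :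
    z ∈ chain k n q s := by
  obtain ⟨u, rfl⟩ := Submodule.mem_span_singleton.1 hz
  exact chain_stable hn hq0 hε h.ws h.hF u _ (mem_chain_self s)

lemma SData.atom [CharZero k] (hn : 0 < n) (hq : IsPrimitiveRoot q (n ^ 2)) (hq0 : q ≠ 0)
    {i : ℕ} (hi : 1 ≤ i) (hi2 : 2 * i ≤ n ^ 2) {ε : k} (hε : ε ≠ 0) {s : M}
    (h : SData k n q i ε s) : IsAtom (Submodule.span (U k n q) {s}) := by
  refine ⟨?_, ?_⟩
  · rw [Ne, Submodule.span_singleton_eq_bot]; exact h.ne_zero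
  · intro b hb
    by_contra hne
    obtain ⟨z, hz, hz0⟩ := (Submodule.ne_bot_iff b).1 hne
    obtain ⟨t, ht, hFt⟩ := exF (k := k) (n := n) (q := q) hz0
    have hmem := b.smul_mem (gF ^ t) hz
    obtain ⟨c, hc⟩ := h.ker hn hq hq0 hi hi2 hε (h.span_le hn hq0 hε (hb.le hmem)) hFt
    rw [hc] at ht hmem
    have hc0 : c ≠ 0 := by rintro rfl; simp at ht
    have hs : s ∈ b := by
      have := b.smul_mem (algebraMap k (U k n q) c⁻¹) hmem
      rwa [algebraMap_smul, smul_smul, inv_mul_cancel₀ hc0, one_smul] at this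
    exact hb.not_ge ((Submodule.span_singleton_le_iff_mem _ _).2 hs)

lemma socle_eq [CharZero k] (hn : 0 < n) (hN : 1 < n ^ 2) (hq : IsPrimitiveRoot q (n ^ 2)) (hq0 : q ≠ 0)
    {i : ℕ} (hi : 1 ≤ i) (hi2 : 2 * i ≤ n ^ 2) {ε : k} (hε : ε ≠ 0) {g a : M}
    (h : PData k n q i ε g a) :
    sSup {N : Submodule (U k n q) M | N ≤ Submodule.span (U k n q) {g} ∧
      IsSimpleModule (U k n q) N} = Submodule.span (U k n q) {gE ^ (2 * i - 1) • a} := by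
  have hs := h.s hn hN hq hq0 hi hi2 hε
  have hat := hs.atom hn hq hq0 hi hi2 hε
  apply le_antisymm
  · refine sSup_le ?_
    rintro T ⟨hT, hTs⟩
    have hTa : IsAtom T := isSimpleModule_iff_isAtom.1 hTs
    obtain ⟨z, hz, hz0⟩ := (Submodule.ne_bot_iff T).1 hTa.1
    obtain ⟨t, ht, hFt⟩ := exF (k := k) (n := n) (q := q) hz0
    have hmem := T.smul_mem (gF ^ t) hz
    have hpair : gF ^ t • z ∈ chain k n q g ⊔ chain k n q a := by
      obtain ⟨u, hu⟩ := Submodule.mem_span_singleton.1 (hT hmem)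
      rw [← hu]
      exact pair_stable hn hq0 hε h.wg h.wa h.hF h.hg u _
        (Submodule.mem_sup_left (mem_chain_self g))
    obtain ⟨c, d, hcd⟩ := kerF_pair hn hN hq hq0 hi hi2 hε h hpair hFt
    have hmeet : ∃ w ∈ T, w ∈ Submodule.span (U k n q) {gE ^ (2 * i - 1) • a} ∧ w ≠ 0 := by
      by_cases hc : c = 0
      · refine ⟨_, hmem, ?_, ht⟩
        rw [hcd, hc, zero_smul, zero_add, ← algebraMap_smul (U k n q) d]
        exact Submodule.smul_mem _ _ (Submodule.mem_span_singleton_self _)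
      · refine ⟨_, T.smul_mem (gE ^ (n ^ 2 - 1)) hmem, ?_⟩
        have e : gE ^ (n ^ 2 - 1) • gF ^ t • z = c • gE ^ (n ^ 2 - 1) • a := by
          rw [hcd, smul_add, smul_cc, smul_cc, ← mul_smul (gE ^ (n ^ 2 - 1)), ← pow_add,
            Epow_zero (E_nil_smul a) (show n ^ 2 ≤ n ^ 2 - 1 + (2 * i - 1) by omega), smul_zero,
            add_zero]
        rw [e]
        refine ⟨?_, smul_ne_zero hc h.ne⟩
        rw [show n ^ 2 - 1 = n ^ 2 - 2 * i + (2 * i - 1) by omega, pow_add, mul_smul,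
          ← algebraMap_smul (U k n q) c]
        exact Submodule.smul_mem _ _ (Submodule.smul_mem _ _ (Submodule.mem_span_singleton_self _))
    obtain ⟨w, hw1, hw2, hw0⟩ := hmeet
    have hne : T ⊓ Submodule.span (U k n q) {gE ^ (2 * i - 1) • a} ≠ ⊥ := by
      intro hb
      exact hw0 ((Submodule.mem_bot _).1 (hb ▸ Submodule.mem_inf.2 ⟨hw1, hw2⟩))
    have e1 := (hTa.le_iff.1 (inf_le_left (b := Submodule.span (U k n q) {gE ^ (2 * i - 1) • a}))).resolve_left hne
    rw [← e1]; exact inf_le_right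
  · refine le_sSup ⟨?_, isSimpleModule_iff_isAtom.2 hat⟩
    rw [Submodule.span_singleton_le_iff_mem, show 2 * i - 1 = 1 + (2 * i - 2) by omega, pow_add,
      mul_smul, ← h.hg]
    exact Submodule.smul_mem _ _ (Submodule.smul_mem _ _ (Submodule.mem_span_singleton_self _))

variable {T : Type} [AddCommGroup T] [Module k T] [Module (U k n q) T]
  [IsScalarTower k (U k n q) T]

lemma lift_gen {x : M} {t : T} (hx : ∀ z : M, ∃ u : U k n q, u • x = z)
    (h : ∀ u : U k n q, u • x = 0 → u • t = 0) : ∃ Φ : M →ₗ[U k n q] T, Φ x = t := by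
  have hsurj : Function.Surjective (LinearMap.toSpanSingleton (U k n q) M x) := by
    intro z; obtain ⟨u, hu⟩ := hx z; exact ⟨u, by simpa using hu⟩
  refine ⟨(Submodule.liftQ _ (LinearMap.toSpanSingleton (U k n q) T t) ?_) ∘ₗ
    ((LinearMap.toSpanSingleton (U k n q) M x).quotKerEquivOfSurjective hsurj).symm.toLinearMap, ?_⟩
  · intro u hu
    rw [LinearMap.mem_ker] at hu ⊢
    simpa using h u (by simpa using hu)
  · have : ((LinearMap.toSpanSingleton (U k n q) M x).quotKerEquivOfSurjective hsurj).symm x =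
        Submodule.Quotient.mk 1 := by
      rw [LinearEquiv.symm_apply_eq]
      simp [LinearMap.quotKerEquivOfSurjective]
    simp only [LinearMap.comp_apply, LinearEquiv.coe_coe, this]
    simp

lemma Wt.prod {i : ℤ} {ε : k} {x : M} {t : T} (h : gW i ε x) (h' : gW i ε t) :
    gW i ε ((x, t) : M × T) := by
  constructor
  · rw [Prod.smul_mk, h.1, h'.1, Prod.smul_mk]
  · rw [Prod.smul_mk, h.2, h'.2, Prod.smul_mk]

lemma SData.lift (hn : 0 < n) (hq0 : q ≠ 0) {i : ℕ} {ε : k} (hε : ε ≠ 0) {x : M}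
    (h : SData k n q i ε x) (hx : ∀ z : M, ∃ u : U k n q, u • x = z) {t : T}
    (hF : gF • t = 0) (wt : gW (-(i : ℤ)) ε t) (nil : gE ^ (n ^ 2 - 2 * i + 1) • t = 0) :
    ∃ Φ : M →ₗ[U k n q] T, Φ x = t := by
  refine lift_gen hx ?_
  intro u hu
  have h1 := chain_stable hn hq0 hε (h.ws.prod wt) (by rw [Prod.smul_mk, h.hF, hF]; rfl) u
    _ (mem_chain_self (x, t))
  obtain ⟨c, hc⟩ := mem_chain (d := n ^ 2 - 2 * i + 1)
    (by rw [Prod.smul_mk, h.nil, nil]; rfl) h1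
  have hc1 := congrArg Prod.fst hc
  have hc2 := congrArg Prod.snd hc
  simp only [Prod.fst_sum, Prod.snd_sum, Prod.smul_mk] at hc1 hc2
  rw [hu] at hc1
  have h0 := chain_indep le_rfl h.nil h.ne c hc1.symm
  rw [hc2]
  exact Finset.sum_eq_zero fun m hm => by rw [h0 m (Finset.mem_range.1 hm), zero_smul]

lemma PData.lift [CharZero k] (hn : 0 < n) (hN : 1 < n ^ 2) (hq : IsPrimitiveRoot q (n ^ 2)) (hq0 : q ≠ 0)
    {ε : k} (hε : ε ≠ 0) {g a : M}
    (h : PData k n q 1 ε g a) (hx : ∀ z : M, ∃ u : U k n q, u • g = z) {t : T}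
    (hF : gF • gF • t = 0) (wt : gW (-1) ε t) :
    ∃ Φ : M →ₗ[U k n q] T, Φ g = t := by
  refine lift_gen hx ?_
  intro u hu
  have wg : gW (-1) ε g := by simpa using h.wg
  have hg : gF • g = a := by simpa using h.hg
  have h1 := pair_stable (r := 0) hn hq0 hε (wg.prod wt) (a := (a, gF • t))
    (i' := 0) (Wt.prod (by simpa using h.wa) (by simpa using wt.F hn hq0))
    (by rw [Prod.smul_mk, h.hF, hF]; rfl) (by rw [Prod.smul_mk, hg, pow_zero, one_smul]) u
    _ (Submodule.mem_sup_left (mem_chain_self (g, t)))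
  obtain ⟨z1, hz1, z2, hz2, hz⟩ := Submodule.mem_sup.1 h1
  obtain ⟨x, rfl⟩ := mem_chain (E_nil_smul _) hz1
  obtain ⟨y, rfl⟩ := mem_chain (E_nil_smul _) hz2
  have hc1 := congrArg Prod.fst hz
  have hc2 := congrArg Prod.snd hz
  simp only [Prod.fst_add, Prod.snd_add, Prod.fst_sum, Prod.snd_sum, Prod.smul_mk] at hc1 hc2
  rw [hu] at hc1
  obtain ⟨hx0, hy0⟩ := pair_indep hn hN hq hq0 le_rfl (by omega) hε h x y hc1
  rw [← hc2, Finset.sum_eq_zero (fun m hm => by rw [hx0 m (Finset.mem_range.1 hm), zero_smul]),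
    Finset.sum_eq_zero (fun m hm => by rw [hy0 m (Finset.mem_range.1 hm), zero_smul]), zero_add]

/-- basis of the simple modules -/
lemma SData.basis (hn : 0 < n) (hq0 : q ≠ 0) {i : ℕ} {ε : k} (hε : ε ≠ 0) {x : M}
    (h : SData k n q i ε x) (hx : ∀ z : M, ∃ u : U k n q, u • x = z) :
    ∃ b : Module.Basis (Fin (n ^ 2 - 2 * i + 1)) k M, ∀ m, b m = gE ^ (m : ℕ) • x := by
  have hli : LinearIndependent k (fun m : Fin (n ^ 2 - 2 * i + 1) => gE ^ (m : ℕ) • x) := by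
    rw [Fintype.linearIndependent_iff]
    intro c hc m
    have := chain_indep le_rfl h.nil h.ne
      (fun t => if ht : t < n ^ 2 - 2 * i + 1 then c ⟨t, ht⟩ else 0) (by
        rw [Finset.sum_range, ← hc]
        refine Finset.sum_congr rfl fun t _ => ?_
        rw [dif_pos t.2]) m m.2
    beta_reduce at this
    rw [dif_pos m.2] at this
    exact this
  refine ⟨Module.Basis.mk hli ?_, fun m => by rw [Module.Basis.mk_apply]⟩
  intro z _
  obtain ⟨u, rfl⟩ := hx z
  obtain ⟨c, hc⟩ := mem_chain h.nil (chain_stable hn hq0 hε h.ws h.hF u _ (mem_chain_self x))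
  rw [hc]
  refine Submodule.sum_mem _ fun m hm => Submodule.smul_mem _ _ (Submodule.subset_span ?_)
  exact ⟨⟨m, Finset.mem_range.1 hm⟩, rfl⟩

lemma PData.basis [CharZero k] (hn : 0 < n) (hN : 1 < n ^ 2) (hq : IsPrimitiveRoot q (n ^ 2)) (hq0 : q ≠ 0)
    {i : ℕ} (hi : 1 ≤ i) (hi2 : 2 * i ≤ n ^ 2) {ε : k} (hε : ε ≠ 0) {g a : M}
    (h : PData k n q i ε g a) (hx : ∀ z : M, ∃ u : U k n q, u • g = z) :
    Nonempty (Module.Basis (Fin (n ^ 2) ⊕ Fin (n ^ 2)) k M) := by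
  have hli : LinearIndependent k (Sum.elim (fun m : Fin (n ^ 2) => gE ^ (m : ℕ) • g)
      (fun m : Fin (n ^ 2) => gE ^ (m : ℕ) • a)) := by
    rw [Fintype.linearIndependent_iff]
    intro c hc
    rw [Fintype.sum_sum_type] at hc
    have := pair_indep hn hN hq hq0 hi hi2 hε h
      (fun t => if ht : t < n ^ 2 then c (Sum.inl ⟨t, ht⟩) else 0)
      (fun t => if ht : t < n ^ 2 then c (Sum.inr ⟨t, ht⟩) else 0) (by
        rw [Finset.sum_range, Finset.sum_range, ← hc]
        congr 1 <;>
        · refine Finset.sum_congr rfl fun t _ => ?_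
          simp)
    rintro (m | m)
    · simpa using this.1 m m.2
    · simpa using this.2 m m.2
  refine ⟨Module.Basis.mk hli ?_⟩
  intro z _
  obtain ⟨u, rfl⟩ := hx z
  have h1 := pair_stable hn hq0 hε h.wg h.wa h.hF h.hg u _
        (Submodule.mem_sup_left (mem_chain_self g))
  obtain ⟨z1, hz1, z2, hz2, hz⟩ := Submodule.mem_sup.1 h1
  obtain ⟨x, rfl⟩ := mem_chain (E_nil_smul _) hz1
  obtain ⟨y, rfl⟩ := mem_chain (E_nil_smul _) hz2
  rw [← hz]
  refine Submodule.add_mem _ ?_ ?_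
  · refine Submodule.sum_mem _ fun m hm => Submodule.smul_mem _ _ (Submodule.subset_span ?_)
    exact ⟨Sum.inl ⟨m, Finset.mem_range.1 hm⟩, rfl⟩
  · refine Submodule.sum_mem _ fun m hm => Submodule.smul_mem _ _ (Submodule.subset_span ?_)
    exact ⟨Sum.inr ⟨m, Finset.mem_range.1 hm⟩, rfl⟩

end Struct

end QFL

namespace QFL

section Idem

variable {k : Type} [Field k] {n : ℕ} {q : k}

local notation "gK" => K k n q
local notation "gH" => Kh k n q
local notation "gE" => E k n q
local notation "gF" => F k n q
local notation "gL" => (Kinv k n q * Kh k n q)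
local notation "gW" => Wt k n q

lemma comm_KL (hn : 0 < n) : Commute gK gL := by
  have h1 : Commute gK gH := K_Kh
  exact ((Commute.refl gK).pow_right (n - 1)).mul_right h1

lemma L_pow_half (hn : 0 < n) (h2 : 2 ∣ n) : gL ^ (n ^ 2 / 2) = 1 := by
  obtain ⟨p, rfl⟩ := h2
  have h1 : Commute (Kinv k (2 * p) q) (Kh k (2 * p) q) :=
    Commute.pow_left (show Commute (K k (2 * p) q) (Kh k (2 * p) q) from K_Kh) _
  have e : (2 * p) ^ 2 / 2 = (2 * p) * p := by
    rw [show (2 * p) ^ 2 = 2 * ((2 * p) * p) by ring, Nat.mul_div_cancel_left _ (by norm_num)]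
  rw [e, h1.mul_pow, pow_mul (Kh k (2 * p) q), Kh_pow, Kinv, ← pow_mul, ← pow_mul, ← pow_mul,
    show (2 * p - 1) * (2 * p * p) = 2 * p * ((2 * p - 1) * p) by ring,
    mul_comm (2 * p - 1) (2 * p), pow_mul, pow_mul _ (2 * p) (2 * p - 1), K_pow]
  simp

/-- the element `K K̂^(n/2)` -/
def kap (k : Type) [Field k] (n : ℕ) (q : k) : U k n q := K k n q * Kh k n q ^ (n / 2)

lemma kap_sq (hn : 0 < n) (h2 : 2 ∣ n) : kap k n q * kap k n q = 1 := by
  have h1 : Commute gK (gH ^ (n / 2)) := Commute.pow_right K_Kh _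
  rw [kap, mul_assoc, ← mul_assoc _ gK, ← h1.eq, mul_assoc, ← pow_add,
    show n / 2 + n / 2 = n by omega, Kh_pow, ← mul_assoc, ← pow_two, ← (Commute.refl gK).pow_right (n-1) |>.mul_pow,
    mul_pow_sub_one hn.ne', K_pow, one_pow]

lemma kap_aux {A : Type} [Ring A] [Algebra k A] (x : A) (h : x * x = 1) (c : k) :
    x * (c • (1 - x)) = (-1 : k) ^ 1 • c • (1 - x) := by
  rw [mul_smul_comm, mul_sub, h, pow_one, mul_one, smul_comm, neg_one_smul, neg_sub]

lemma kap_oneJ (hn : 0 < n) (h2 : 2 ∣ n) {j : ℕ} (hj : j ≤ 1) :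
    kap k n q * oneJ k n q j = (-1 : k) ^ j • oneJ k n q j := by
  have h := kap_sq (q := q) (k := k) hn h2
  have h0 : ∀ j, oneJ k n q j = if j = 0 then (2 : k)⁻¹ • (1 + kap k n q)
    else (2 : k)⁻¹ • (1 - kap k n q) := fun j => rfl
  interval_cases j
  · rw [h0, if_pos rfl, mul_smul_comm, mul_add, h, pow_zero, one_smul, mul_one, add_comm]
  · rw [h0, if_neg one_ne_zero]; exact kap_aux _ h _

lemma comm_kap_L (hn : 0 < n) : Commute (kap k n q) gL := by
  have h1 : Commute gH gL :=
    Commute.mul_right (Commute.pow_right (show Commute gH gK from K_Kh.symm) _) (Commute.refl _)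
  exact (comm_KL hn).mul_left (h1.pow_left _)

lemma L_phi (hn : 0 < n) (h2 : 2 ∣ n) (hq : IsPrimitiveRoot q (n ^ 2)) (i : ℕ) :
    gL * phi k n q i = q ^ (2 * i) • phi k n q i := by
  have hq0 : q ≠ 0 := hq.ne_zero (by positivity)
  have h4 : 2 * (n ^ 2 / 2) = n ^ 2 := Nat.mul_div_cancel' (dvd_pow h2 two_ne_zero)
  have e : phi k n q i = ((n ^ 2 : k)⁻¹ * 2) • ∑ t ∈ Finset.range (n ^ 2 / 2),
      (q⁻¹ ^ (2 * i) • gL) ^ t := by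
    rw [phi]
    congr 1
    refine Finset.sum_congr rfl fun t _ => ?_
    rw [smul_pow, ← pow_mul]
  have h := mul_geom_sum (q⁻¹ ^ (2 * i) • gL) (n ^ 2 / 2)
  rw [smul_pow, L_pow_half hn h2, ← pow_mul, mul_right_comm, h4, pow_mul q⁻¹ (n ^ 2), inv_pow q (n ^ 2), hq.pow_eq_one,
    inv_one, one_pow, one_smul, sub_self, sub_mul, one_mul, sub_eq_zero, smul_mul_assoc] at h
  rw [e, mul_smul_comm, smul_comm]
  congr 1
  conv_rhs => rw [← h]
  rw [smul_smul, ← mul_pow, mul_inv_cancel₀ hq0, one_pow, one_smul]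

lemma L_eIdem (hn : 0 < n) (h2 : 2 ∣ n) (hq : IsPrimitiveRoot q (n ^ 2)) (i j : ℕ) :
    gL * eIdem k n q i j = q ^ (2 * i) • eIdem k n q i j := by
  rw [eIdem, ← mul_assoc, L_phi hn h2 hq, smul_mul_assoc]

lemma kap_eIdem (hn : 0 < n) (h2 : 2 ∣ n) (i : ℕ) {j : ℕ} (hj : j ≤ 1) :
    kap k n q * eIdem k n q i j = (-1 : k) ^ j • eIdem k n q i j := by
  have : Commute (kap k n q) (phi k n q i) := by
    rw [phi]
    refine Commute.smul_right (Commute.sum_right _ _ _ fun t _ => Commute.smul_right ?_ _) _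
    exact (comm_kap_L hn).pow_right t
  rw [eIdem, ← mul_assoc, this.eq, mul_assoc, kap_oneJ hn h2 hj, mul_smul_comm]

lemma pow_mul_eig {A : Type} [Ring A] [Algebra k A] {x e : A} {c : k} (h : x * e = c • e) (m : ℕ) :
    x ^ m * e = c ^ m • e := by
  induction m with
  | zero => simp
  | succ m ih => rw [pow_succ, mul_assoc, h, mul_smul_comm, ih, smul_smul, pow_succ']

lemma q_half (hn : 0 < n) (h2 : 2 ∣ n) (hq : IsPrimitiveRoot q (n ^ 2)) : q ^ (n * (n / 2)) = -1 := by
  obtain ⟨p, rfl⟩ := h2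
  have h : (q ^ (2 * p * (2 * p / 2))) ^ 2 = 1 := by
    rw [← pow_mul, Nat.mul_div_cancel_left _ (by norm_num), show 2 * p * p * 2 = (2 * p) ^ 2 by ring,
      hq.pow_eq_one]
  refine (sq_eq_one_iff.1 h).resolve_left ?_
  intro h1
  have := (hq.pow_eq_one_iff_dvd _).1 h1
  have h3 := Nat.le_of_dvd (by rw [Nat.mul_div_cancel_left _ (by norm_num)]; nlinarith) this
  rw [Nat.mul_div_cancel_left _ (by norm_num)] at h3
  nlinarith

lemma K_eq (hn : 0 < n) (h4 : 4 ∣ n) :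
    kap k n q ^ (1 + n / 2) = gK * gL ^ (n / 2 * (1 + n / 2)) := by
  obtain ⟨r, rfl⟩ := h4
  have e : 4 * r / 2 = 2 * r := by omega
  have hk : kap k (4 * r) q = K k (4 * r) q * (K k (4 * r) q * (Kinv k (4 * r) q * Kh k (4 * r) q)) ^ (4 * r / 2) := by
    rw [K_L hn, kap]
  rw [e, hk, (comm_KL hn).mul_pow, e, ← mul_assoc, ← pow_succ', Commute.mul_pow, ← pow_mul,
    ← pow_mul]
  · congr 1
    rw [show (2 * r + 1) * (1 + 2 * r) = 4 * r * (1 + r) + 1 by ring, pow_succ, pow_mul, K_pow, one_pow,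
      one_mul]
  · exact ((comm_KL hn).pow_left _).pow_right _

lemma wt_eIdem (hn : 0 < n) (h4 : 4 ∣ n) (hq : IsPrimitiveRoot q (n ^ 2)) (i : ℕ) {j : ℕ} (hj : j ≤ 1) :
    gW i ((-1) ^ (i + j)) (eIdem k n q i j) := by
  have h2 : 2 ∣ n := dvd_trans (by norm_num) h4
  have hq0 : q ≠ 0 := hq.ne_zero (by positivity)
  have hL := L_eIdem hn h2 hq i j
  have hK : gK * eIdem k n q i j = ((-1) ^ (i + j) * q ^ (-(n * i) : ℤ)) • eIdem k n q i j := by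
    have h := congrArg (fun z => z * eIdem k n q i j) (K_eq (q := q) (k := k) hn h4)
    beta_reduce at h
    rw [mul_assoc, pow_mul_eig hL, pow_mul_eig (kap_eIdem hn h2 i hj), mul_smul_comm] at h
    have hne : (q ^ (2 * i)) ^ (n / 2 * (1 + n / 2)) ≠ 0 := pow_ne_zero _ (pow_ne_zero _ hq0)
    rw [← inv_smul_eq_iff₀ hne, smul_smul] at h
    rw [← h]
    congr 1
    rw [inv_mul_eq_iff_eq_mul₀ hne, ← pow_mul q]
    have hodd : Odd (1 + n / 2) := by
      obtain ⟨r, rfl⟩ := h4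
      exact ⟨r, by omega⟩
    have e1 : ((-1 : k) ^ j) ^ (1 + n / 2) = (-1) ^ j := by
      rw [← pow_mul, mul_comm, pow_mul, hodd.neg_one_pow]
    have e2 : q ^ (2 * i * (n / 2 * (1 + n / 2))) = q ^ (n * i) * (-1) ^ i := by
      rw [← q_half hn h2 hq, ← pow_mul, ← pow_add]
      congr 1
      obtain ⟨p, rfl⟩ := h2
      rw [Nat.mul_div_cancel_left _ (by norm_num)]; ring
    rw [e1, e2, zpow_neg, show ((n : ℤ) * i) = ((n * i : ℕ) : ℤ) by push_cast; rfl, zpow_natCast]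
    have : q ^ (n * i) ≠ 0 := pow_ne_zero _ hq0
    have h3 : ((-1 : k) ^ i) * (-1) ^ i = 1 := by rw [← mul_pow]; simp
    rw [pow_add]
    field_simp
    linear_combination -h3
  refine ⟨hK, ?_⟩
  show gH * _ = _
  rw [← K_L hn, mul_assoc, hL, mul_smul_comm, hK, smul_smul]
  congr 1
  rw [mul_left_comm, ← zpow_natCast q, ← zpow_add₀ hq0]
  congr 2; push_cast; ring

lemma sum_oneJ [CharZero k] : oneJ k n q 0 + oneJ k n q 1 = 1 := by
  rw [oneJ, oneJ, if_pos rfl, if_neg one_ne_zero, ← smul_add, add_add_sub_cancel, ← two_smul k,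
    smul_smul, inv_mul_cancel₀ two_ne_zero, one_smul]

lemma sum_phi [CharZero k] (hn : 0 < n) (h2 : 2 ∣ n) (hq : IsPrimitiveRoot q (n ^ 2)) :
    ∑ i ∈ Finset.range (n ^ 2 / 2), phi k n q i = 1 := by
  have hq0 : q ≠ 0 := hq.ne_zero (by positivity)
  have h4 : 2 * (n ^ 2 / 2) = n ^ 2 := Nat.mul_div_cancel' (dvd_pow h2 two_ne_zero)
  have hpos : 0 < n ^ 2 / 2 := by have : 0 < n ^ 2 := by positivity
                                  omega
  simp only [phi]
  rw [← Finset.smul_sum, Finset.sum_comm]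
  have : ∀ t ∈ Finset.range (n ^ 2 / 2), ∑ i ∈ Finset.range (n ^ 2 / 2), (q⁻¹ ^ (2 * i * t)) • gL ^ t
      = if t = 0 then ((n ^ 2 / 2 : ℕ) : k) • 1 else 0 := by
    intro t ht
    rw [← Finset.sum_smul]
    split_ifs with h0
    · subst h0; simp
    · have e : ∀ i, q⁻¹ ^ (2 * i * t) = (q⁻¹ ^ (2 * t)) ^ i := fun i => by rw [← pow_mul]; ring_nf
      simp only [e]
      have hg := mul_geom_sum (q⁻¹ ^ (2 * t)) (n ^ 2 / 2)
      rw [← pow_mul, show 2 * t * (n ^ 2 / 2) = n ^ 2 * t by rw [mul_right_comm, h4], pow_mul q⁻¹ (n ^ 2), inv_pow q (n ^ 2),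
        hq.pow_eq_one, inv_one, one_pow, sub_self] at hg
      rw [(mul_eq_zero.1 hg).resolve_left, zero_smul]
      intro h1
      rw [sub_eq_zero, inv_pow, inv_eq_one] at h1
      have := Nat.le_of_dvd (by omega) ((hq.pow_eq_one_iff_dvd _).1 h1)
      have := Finset.mem_range.1 ht
      omega
  rw [Finset.sum_congr rfl this, Finset.sum_ite_eq' , if_pos (by simpa using hpos), smul_smul]
  have h5 : (2 : k) * ((n ^ 2 / 2 : ℕ) : k) = n ^ 2 := by exact_mod_cast congrArg (Nat.cast (R := k)) h4
  have h6 : (n ^ 2 : k) ≠ 0 := pow_ne_zero _ (Nat.cast_ne_zero.2 hn.ne')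
  rw [mul_assoc, h5, inv_mul_cancel₀ h6, one_smul]

lemma sum_eIdem [CharZero k] (hn : 0 < n) (h2 : 2 ∣ n) (hq : IsPrimitiveRoot q (n ^ 2)) :
    ∑ i ∈ Finset.range (n ^ 2 / 2), ∑ j ∈ Finset.range 2, eIdem k n q i j = 1 := by
  simp only [eIdem, ← Finset.mul_sum, ← Finset.sum_mul]
  rw [sum_phi hn h2 hq, one_mul, Finset.sum_range_succ, Finset.sum_range_one, sum_oneJ]

variable {M : Type} [AddCommGroup M] [Module k M] [Module (U k n q) M]
  [IsScalarTower k (U k n q) M]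

lemma pow_smul_eig {x : U k n q} {v : M} {c : k} (h : x • v = c • v) (m : ℕ) :
    x ^ m • v = c ^ m • v := by
  induction m with
  | zero => simp
  | succ m ih => rw [pow_succ, mul_smul, h, smul_cc, ih, smul_smul, pow_succ']

/-- the idempotents fix weight vectors of the appropriate weight -/
lemma eIdem_smul [CharZero k] (hn : 0 < n) (h4 : 4 ∣ n) (hq : IsPrimitiveRoot q (n ^ 2)) (i : ℕ) {j : ℕ} (hj : j ≤ 1)
    {v : M} (hv : gW i ((-1) ^ (i + j)) v) : eIdem k n q i j • v = v := by
  have h2 : 2 ∣ n := dvd_trans (by norm_num) h4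
  have hq0 : q ≠ 0 := hq.ne_zero (by positivity)
  have h4' : 2 * (n ^ 2 / 2) = n ^ 2 := Nat.mul_div_cancel' (dvd_pow h2 two_ne_zero)
  have hL := hv.L hn hq0 (pow_ne_zero _ (by norm_num))
  have hphi : phi k n q i • v = v := by
    rw [phi, smul_assoc, Finset.sum_smul]
    have : ∀ t ∈ Finset.range (n ^ 2 / 2), ((q⁻¹ ^ (2 * i * t)) • gL ^ t) • v = v := by
      intro t _
      rw [smul_assoc, pow_smul_eig hL, smul_smul, pow_mul, ← mul_pow, show (2 * (i : ℤ)) = ((2 * i : ℕ) : ℤ) by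
        push_cast; rfl, zpow_natCast, ← mul_pow, inv_mul_cancel₀ hq0, one_pow, one_pow, one_smul]
    rw [Finset.sum_congr rfl this, Finset.sum_const, Finset.card_range, ← Nat.cast_smul_eq_nsmul k, smul_smul]
    have h5 : (2 : k) * ((n ^ 2 / 2 : ℕ) : k) = n ^ 2 := by exact_mod_cast congrArg (Nat.cast (R := k)) h4'
    have h6 : (n ^ 2 : k) ≠ 0 := pow_ne_zero _ (Nat.cast_ne_zero.2 hn.ne')
    rw [mul_assoc, h5, inv_mul_cancel₀ h6, one_smul]
  have hkap : kap k n q • v = (-1 : k) ^ j • v := by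
    rw [kap, mul_smul, pow_smul_eig hv.2, smul_cc, hv.1, smul_smul]
    congr 1
    have hodd : Odd (1 + n / 2) := by
      obtain ⟨r, rfl⟩ := h4
      exact ⟨r, by omega⟩
    have e1 : ((-1 : k) ^ (i + j)) ^ (n / 2) * (-1) ^ (i + j) = (-1) ^ (i + j) := by
      rw [← pow_succ, ← pow_mul, mul_comm, pow_mul, add_comm _ 1, hodd.neg_one_pow]
    have e2 : (q ^ ((2 - n) * i : ℤ)) ^ (n / 2) * q ^ (-(n * i) : ℤ) = (-1) ^ i := by
      have h3 := q_half hn h2 hq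
      obtain ⟨p, rfl⟩ := h2
      rw [Nat.mul_div_cancel_left _ (by norm_num)] at h3 ⊢
      have : (-1 : k) = q ^ (-(2 * p * p : ℕ) : ℤ) := by rw [zpow_neg, zpow_natCast, h3]; norm_num
      rw [this, ← zpow_natCast, ← zpow_natCast, ← zpow_mul, ← zpow_mul, ← zpow_add₀ hq0]
      congr 1; push_cast; ring
    have h3 : ((-1 : k) ^ i) * (-1) ^ i = 1 := by rw [← mul_pow]; simp
    rw [mul_pow, mul_mul_mul_comm, e1, e2, pow_add]
    linear_combination ((-1 : k) ^ j) * h3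
  have hone : oneJ k n q j • v = v := by
    have h0 : oneJ k n q j = if j = 0 then (2 : k)⁻¹ • (1 + kap k n q)
      else (2 : k)⁻¹ • (1 - kap k n q) := rfl
    rw [h0]
    interval_cases j
    · rw [if_pos rfl, smul_assoc, add_smul, one_smul, hkap, pow_zero, one_smul, ← two_smul k, smul_smul,
        inv_mul_cancel₀ two_ne_zero, one_smul]
    · rw [if_neg one_ne_zero, smul_assoc, sub_smul, one_smul, hkap, pow_one, neg_one_smul, sub_neg_eq_add,
        ← two_smul k, smul_smul, inv_mul_cancel₀ two_ne_zero, one_smul]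
  rw [eIdem, mul_smul, hone, hphi]

end Idem

end QFL

namespace QFL

section Verma

variable {k : Type} [Field k] {n : ℕ} {q : k}

/-- carrier of the big modules -/
abbrev VC (k : Type) [Field k] (N : ℕ) := (Fin N × Fin N) →₀ k

/-- basis vectors, extended by zero -/
def fb (k : Type) [Field k] (N a b : ℕ) : VC k N :=
  if h : a < N ∧ b < N then Finsupp.single (⟨a, h.1⟩, ⟨b, h.2⟩) 1 else 0

lemma fb_zero {N a b : ℕ} (h : ¬ (a < N ∧ b < N)) : fb k N a b = 0 := dif_neg h

lemma VC_ext {N : ℕ} {Y : Type} [AddCommGroup Y] [Module k Y] {f g : VC k N →ₗ[k] Y}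
    (h : ∀ a b, f (fb k N a b) = g (fb k N a b)) : f = g := by
  refine Finsupp.lhom_ext' fun p => LinearMap.ext_ring ?_
  have := h p.1 p.2
  rw [fb, dif_pos ⟨p.1.2, p.2.2⟩] at this
  exact this

/-- linear maps from values on the basis -/
def vop {N : ℕ} {Y : Type} [AddCommGroup Y] [Module k Y] (g : ℕ → ℕ → Y) : VC k N →ₗ[k] Y :=
  Finsupp.linearCombination k (fun p : Fin N × Fin N => g p.1 p.2)

lemma vop_fb {N : ℕ} {Y : Type} [AddCommGroup Y] [Module k Y] {g : ℕ → ℕ → Y}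
    (hg : ∀ a b, ¬ (a < N ∧ b < N) → g a b = 0) (a b : ℕ) : vop g (fb k N a b) = g a b := by
  by_cases h : a < N ∧ b < N
  · rw [fb, dif_pos h, vop, Finsupp.linearCombination_single, one_smul]
  · rw [fb_zero h, map_zero, hg a b h]

/-- the coefficients -/
def cc (q : k) (a : ℕ) (i : ℤ) : k := -q * gs q⁻¹ a * (1 - q ^ (2 * i + a - 1))

lemma cc_zero (i : ℤ) : cc q 0 i = 0 := by simp [cc, gs_zero]

lemma cc_N {N : ℕ} (hN : 1 < N) (hq : IsPrimitiveRoot q N) (i : ℤ) : cc q N i = 0 := by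
  simp [cc, gs_N hN hq.inv]

lemma cc_succ (hq0 : q ≠ 0) (a : ℕ) (i : ℤ) :
    cc q (a + 1) i = q * cc q a i - q * (1 - q ^ (2 * (i + a))) := by
  have h1 := gs_succ (q := q⁻¹) a
  have h2 := gs_succ' (q := q⁻¹) a
  rw [inv_inv] at h1 h2
  have e1 : q ^ (2 * i + (a : ℤ) - 1) = q ^ (2 * i + (a : ℤ)) * q⁻¹ := zpow_sub_one₀ hq0 _
  have e2 : q ^ (2 * (i + (a : ℤ))) = q ^ (2 * i + (a : ℤ)) * q ^ a := by
    rw [← zpow_natCast, ← zpow_add₀ hq0]; congr 1; ring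
  have e3 : (2 * i + ((a + 1 : ℕ) : ℤ) - 1) = 2 * i + a := by push_cast; ring
  rw [cc, cc, e1, e2, e3]
  have h3 : q * q⁻¹ = 1 := mul_inv_cancel₀ hq0
  generalize q ^ (2 * i + (a : ℤ)) = X at *
  linear_combination (-q) * h1 + q * X * h2 - (q * gs q⁻¹ a * X) * h3

lemma big_module (hn : 0 < n) (h4 : 4 ∣ n) (hq : IsPrimitiveRoot q (n ^ 2)) (i : ℤ) {ε : k}
    (hε : ε ^ 2 = 1) :
    ∃ ρ : U k n q →ₐ[k] Module.End k (VC k (n ^ 2)),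
      (∀ a b : ℕ, ρ (K k n q) (fb k (n ^ 2) a b) =
        (ε * q ^ (-(n * (i + a - b)) : ℤ)) • fb k (n ^ 2) a b) ∧
      (∀ a b : ℕ, ρ (Kh k n q) (fb k (n ^ 2) a b) =
        (ε * q ^ ((2 - n) * (i + a - b) : ℤ)) • fb k (n ^ 2) a b) ∧
      (∀ a b : ℕ, ρ (E k n q) (fb k (n ^ 2) a b) =
        q ^ a • fb k (n ^ 2) a (b + 1) + cc q a (i - b) • fb k (n ^ 2) (a - 1) b) ∧
      (∀ a b : ℕ, ρ (F k n q) (fb k (n ^ 2) a b) = fb k (n ^ 2) (a + 1) b) := by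
  have h2 : 2 ∣ n := dvd_trans (by norm_num) h4
  have hq0 : q ≠ 0 := hq.ne_zero (by positivity)
  have hε0 : ε ≠ 0 := by rintro rfl; norm_num at hε
  have hN : 1 < n ^ 2 := by
    have := Nat.le_of_dvd hn h4
    nlinarith
  have hεn : ε ^ n = 1 := by
    obtain ⟨p, rfl⟩ := h2
    rw [pow_mul, hε, one_pow]
  have qz : ∀ t : ℤ, q ^ ((n : ℤ) ^ 2 * t) = 1 := by
    intro t
    rw [zpow_mul, ← Nat.cast_pow, zpow_natCast, hq.pow_eq_one, one_zpow]
  generalize hNN : n ^ 2 = N at *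
  let oK : Module.End k (VC k N) := vop fun a b =>
    (ε * q ^ (-(n * (i + a - b)) : ℤ)) • fb k N a b
  let oH : Module.End k (VC k N) := vop fun a b =>
    (ε * q ^ ((2 - n) * (i + a - b) : ℤ)) • fb k N a b
  let oE : Module.End k (VC k N) := vop fun a b =>
    q ^ a • fb k N a (b + 1) + cc q a (i - b) • fb k N (a - 1) b
  let oF : Module.End k (VC k N) := vop fun a b => fb k N (a + 1) b
  have hK : ∀ a b : ℕ, oK (fb k N a b) = (ε * q ^ (-(n * (i + a - b)) : ℤ)) • fb k N a b :=
    vop_fb fun a b h => by rw [fb_zero h, smul_zero]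
  have hH : ∀ a b : ℕ, oH (fb k N a b) = (ε * q ^ ((2 - n) * (i + a - b) : ℤ)) • fb k N a b :=
    vop_fb fun a b h => by rw [fb_zero h, smul_zero]
  have hE : ∀ a b : ℕ, oE (fb k N a b) =
      q ^ a • fb k N a (b + 1) + cc q a (i - b) • fb k N (a - 1) b :=
    vop_fb fun a b h => by
      rw [fb_zero (a := a) (by omega), smul_zero, zero_add]
      by_cases ha : a = N
      · rw [ha, cc_N hN hq, zero_smul]
      · rw [fb_zero (by omega), smul_zero]
  have hF : ∀ a b : ℕ, oF (fb k N a b) = fb k N (a + 1) b :=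
    vop_fb fun a b h => by rw [fb_zero (by omega)]
  have pow_eig : ∀ (X : Module.End k (VC k N)) (v : VC k N) (c : k), X v = c • v → ∀ m : ℕ,
      (X ^ m) v = c ^ m • v := by
    intro X v c h m
    induction m with
    | zero => simp
    | succ m ih => rw [pow_succ, Module.End.mul_apply, h, map_smul, ih, smul_smul, pow_succ']
  have rK : oK ^ n = 1 := by
    refine VC_ext fun a b => ?_
    rw [pow_eig _ _ _ (hK a b), mul_pow, hεn, one_mul, ← zpow_natCast, ← zpow_mul,
      show (-(n * (i + a - b)) * n : ℤ) = (n : ℤ) ^ 2 * (-(i + a - b)) by ring, qz, one_smul]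
    rfl
  have rH : oH ^ n = (oK ^ (n - 1)) ^ 2 := by
    refine VC_ext fun a b => ?_
    rw [← pow_mul, pow_eig _ _ _ (hK a b), pow_eig _ _ _ (hH a b), mul_pow, mul_pow, hεn, mul_comm (n - 1),
      pow_mul, hε, one_pow, one_mul, one_mul, ← zpow_natCast, ← zpow_natCast, ← zpow_mul, ← zpow_mul]
    congr 1
    have e : ((2 * (n - 1) : ℕ) : ℤ) = 2 * (n - 1) := by push_cast; omega
    rw [e, show (2 - n) * (i + a - b) * n = (-(n * (i + a - b))) * (2 * (n - 1)) +
      (n : ℤ) ^ 2 * (i + a - b) by ring, zpow_add₀ hq0, qz, mul_one]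
  have rHN : oH ^ N = 1 := by
    rw [show oH ^ N = oH ^ (n * n) by congr 1; rw [← hNN, pow_two], pow_mul, rH, ← pow_mul, ← pow_mul,
      show (n - 1) * (2 * n) = n * ((n - 1) * 2) by ring, pow_mul, rK, one_pow]
  have rKH : oK * oH = oH * oK := by
    refine VC_ext fun a b => ?_
    simp only [Module.End.mul_apply, hK, hH, map_smul]
    rw [smul_comm]
  have rKE : oK * oE = q ^ n • (oE * oK) := by
    refine VC_ext fun a b => ?_
    rw [LinearMap.smul_apply]
    simp only [Module.End.mul_apply, hK, hE, map_smul, map_add, smul_add, smul_smul]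
    congr 2
    · rw [mul_comm, ← mul_assoc, mul_left_comm]
      congr 2
      rw [← zpow_natCast q n, mul_comm, ← zpow_add₀ hq0]
      congr 1; push_cast; ring
    · cases a with
      | zero => simp [cc_zero]
      | succ a =>
        rw [mul_comm, ← mul_assoc, mul_left_comm]
        congr 2
        rw [← zpow_natCast q n, mul_comm, ← zpow_add₀ hq0]
        congr 1; push_cast; ring
  have rHE : oH * oE = (q ^ n * (q ^ 2)⁻¹) • (oE * oH) := by
    rw [show q ^ n * (q ^ 2)⁻¹ = q ^ ((n : ℤ) - 2) by
      rw [zpow_sub₀ hq0, div_eq_mul_inv, zpow_natCast, zpow_ofNat]]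
    refine VC_ext fun a b => ?_
    rw [LinearMap.smul_apply]
    simp only [Module.End.mul_apply, hH, hE, map_smul, map_add, smul_add, smul_smul]
    congr 2
    · rw [mul_comm, ← mul_assoc, mul_left_comm]
      congr 2
      rw [mul_comm, ← zpow_add₀ hq0]
      congr 1; push_cast; ring
    · cases a with
      | zero => simp [cc_zero]
      | succ a =>
        rw [mul_comm, ← mul_assoc, mul_left_comm]
        congr 2
        rw [mul_comm, ← zpow_add₀ hq0]
        congr 1; push_cast; ring
  have rKF : oK * oF = (q ^ n)⁻¹ • (oF * oK) := by
    refine VC_ext fun a b => ?_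
    rw [LinearMap.smul_apply]
    simp only [Module.End.mul_apply, hK, hF, map_smul, smul_smul]
    congr 1
    rw [mul_left_comm, ← zpow_natCast, ← zpow_neg, ← zpow_add₀ hq0]
    congr 2; push_cast; ring
  have rHF : oH * oF = ((q ^ n)⁻¹ * q ^ 2) • (oF * oH) := by
    refine VC_ext fun a b => ?_
    rw [LinearMap.smul_apply]
    simp only [Module.End.mul_apply, hH, hF, map_smul, smul_smul]
    congr 1
    rw [mul_left_comm, ← zpow_natCast, ← zpow_neg, ← zpow_natCast q 2, ← zpow_add₀ hq0, ← zpow_add₀ hq0]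
    congr 2; push_cast; ring
  have hL : ∀ a b : ℕ, (oK ^ (n - 1) * oH) (fb k N a b) = q ^ (2 * (i + a - b)) • fb k N a b := by
    intro a b
    have h1 : (oK ^ (n - 1)) (fb k N a b) = (ε * q ^ (-(n * (i + a - b)) : ℤ))⁻¹ • fb k N a b := by
      rw [pow_eig _ _ _ (hK a b)]
      congr 1
      refine eq_inv_of_mul_eq_one_left ?_
      rw [← pow_succ, Nat.sub_add_cancel hn,
        mul_pow, hεn, one_mul, ← zpow_natCast, ← zpow_mul,
        show (-(n * (i + a - b)) * n : ℤ) = (n : ℤ) ^ 2 * (-(i + a - b)) by ring, qz]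
    rw [Module.End.mul_apply, hH, map_smul, h1, smul_smul]
    congr 1
    rw [mul_inv, mul_mul_mul_comm, mul_inv_cancel₀ hε0, one_mul, ← zpow_neg, ← zpow_add₀ hq0]
    congr 1; ring
  have rEF : oF * oE = q⁻¹ • (oE * oF) + (1 - oK ^ (n - 1) * oH) := by
    refine VC_ext fun a b => ?_
    rw [LinearMap.add_apply, LinearMap.sub_apply, hL, LinearMap.smul_apply]
    simp only [Module.End.mul_apply, hE, hF, map_smul, map_add, smul_add, smul_smul, Module.End.one_apply]
    have e : cc q a (i - b) • fb k N (a - 1 + 1) b = cc q a (i - b) • fb k N a b := by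
      cases a with
      | zero => simp [cc_zero]
      | succ a => simp
    rw [e, add_assoc, Nat.add_sub_cancel, pow_succ', ← mul_assoc, inv_mul_cancel₀ hq0, one_mul]
    congr 1
    rw [← one_smul k (fb k N a b), smul_smul, smul_smul, smul_smul, ← sub_smul, ← add_smul]
    congr 1
    rw [cc_succ hq0, show i - (b : ℤ) + a = i + a - b by ring]
    field_simp
    ring
  have rLE : (oK ^ (n - 1) * oH) * oE = (q⁻¹ ^ 2) • (oE * (oK ^ (n - 1) * oH)) := by
    generalize oK ^ (n - 1) * oH = oL at hL
    rw [show q⁻¹ ^ 2 = q ^ (-2 : ℤ) by rw [zpow_neg, inv_pow, zpow_ofNat]]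
    refine VC_ext fun a b => ?_
    rw [LinearMap.smul_apply]
    simp only [Module.End.mul_apply, hL, hE, map_smul, map_add, smul_add, smul_smul]
    congr 2
    · rw [mul_comm, ← mul_assoc, ← zpow_add₀ hq0]
      congr 2; push_cast; ring
    · cases a with
      | zero => simp [cc_zero]
      | succ a =>
        rw [mul_comm, ← mul_assoc, ← zpow_add₀ hq0]
        congr 2; push_cast; ring
  have hFp : ∀ m a b : ℕ, (oF ^ m) (fb k N a b) = fb k N (a + m) b := by
    intro m
    induction m with
    | zero => intro a b; simp
    | succ m ih => intro a b; rw [pow_succ, Module.End.mul_apply, hF, ih]; congr 1; omega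
  have rF : oF ^ N = 0 := by
    refine VC_ext fun a b => ?_
    rw [hFp, fb_zero (by omega)]; rfl
  have hEp : ∀ m b : ℕ, (oE ^ m) (fb k N 0 b) = fb k N 0 (b + m) := by
    intro m
    induction m with
    | zero => intro b; simp
    | succ m ih =>
      intro b
      rw [pow_succ, Module.End.mul_apply, hE, cc_zero, zero_smul, add_zero, pow_zero, one_smul, ih]
      congr 1; omega
  have rE : oE ^ N = 0 := by
    have hc : Commute oF (oE ^ N) := by
      have := comm_gen oE oF _ rEF rLE (N - 1)
      rw [Nat.sub_add_cancel hN.le, gs_N hN hq, zero_smul, add_zero, inv_pow, hq.pow_eq_one, inv_one,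
        one_smul] at this
      exact this
    refine VC_ext fun a b => ?_
    have h1 : fb k N a b = (oF ^ a) (fb k N 0 b) := by rw [hFp, zero_add]
    rw [h1, ← Module.End.mul_apply, ← (hc.pow_left a).eq, Module.End.mul_apply, hEp,
      fb_zero (by omega), map_zero]; rfl
  let ρ : U k n q →ₐ[k] Module.End k (VC k N) := RingQuot.liftAlgHom k
    ⟨FreeAlgebra.lift k ![oK, oH, oE, oF], by
      intro x y hxy
      cases hxy
      · simp [rK]
      · simp [rH]
      · simp [rKH]
      · simp only [map_mul, map_pow, map_smul, FreeAlgebra.lift_ι_apply, Matrix.cons_val]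
        rw [rKE, smul_mul_assoc, mul_assoc, mul_pow_sub_one hn.ne', rK, mul_one]
      · simp only [map_mul, map_pow, map_smul, FreeAlgebra.lift_ι_apply, Matrix.cons_val]
        rw [rKF, smul_mul_assoc, mul_assoc, mul_pow_sub_one hn.ne', rK, mul_one]
      · simp only [map_mul, map_pow, map_smul, FreeAlgebra.lift_ι_apply, Matrix.cons_val]
        rw [rHE, smul_mul_assoc, mul_assoc, mul_pow_sub_one (by positivity), hNN, rHN, mul_one]
      · simp only [map_mul, map_pow, map_smul, FreeAlgebra.lift_ι_apply, Matrix.cons_val]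
        rw [rHF, smul_mul_assoc, mul_assoc, mul_pow_sub_one (by positivity), hNN, rHN, mul_one]
      · simp only [map_mul, map_pow, map_smul, FreeAlgebra.lift_ι_apply, Matrix.cons_val, map_zero]
        rw [hNN, rE]
      · simp only [map_mul, map_pow, map_smul, FreeAlgebra.lift_ι_apply, Matrix.cons_val, map_zero]
        rw [hNN, rF]
      · simp only [map_mul, map_pow, map_smul, map_sub, map_one, FreeAlgebra.lift_ι_apply, Matrix.cons_val]
        rw [rEF]; exact add_sub_cancel_left (q⁻¹ • (oE * oF)) (1 - oK ^ (n - 1) * oH)⟩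
  refine ⟨ρ, ?_, ?_, ?_, ?_⟩
  · intro a b
    rw [← hK]; congr 1
    simp [ρ, K]
  · intro a b
    rw [← hH]; congr 1
    simp [ρ, Kh]
  · intro a b
    rw [← hE]; congr 1
    simp [ρ, E]
  · intro a b
    rw [← hF]; congr 1
    simp [ρ, F]

/-- coordinate functionals -/
def co (k : Type) [Field k] (N a b : ℕ) : VC k N →ₗ[k] k :=
  vop fun a' b' => if a' = a ∧ b' = b then 1 else 0

lemma co_fb {N a b : ℕ} (ha : a < N) (hb : b < N) (a' b' : ℕ) :
    co k N a b (fb k N a' b') = if a' = a ∧ b' = b then 1 else 0 :=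
  vop_fb (fun a' b' h => if_neg (by omega)) a' b'

/-- packaged existence statement -/
lemma big_module' (hn : 0 < n) (h4 : 4 ∣ n) (hq : IsPrimitiveRoot q (n ^ 2)) (i : ℤ) {ε : k}
    (hε : ε ^ 2 = 1) :
    ∃ (W : Type) (_ : AddCommGroup W) (_ : Module k W) (_ : Module (U k n q) W)
      (_ : IsScalarTower k (U k n q) W) (f : ℕ → ℕ → W) (co : ℕ → ℕ → W →ₗ[k] k),
      Wt k n q i ε (f 0 0) ∧ (∀ a b, F k n q • f a b = f (a + 1) b) ∧
      (∀ b, E k n q • f 0 b = f 0 (b + 1)) ∧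
      (∀ a b, a < n ^ 2 → b < n ^ 2 → ∀ a' b', co a b (f a' b') = if a' = a ∧ b' = b then 1 else 0) ∧
      (∀ b x, b + 1 < n ^ 2 →
        co (n ^ 2 - 1) (b + 1) (E k n q • x) = q ^ (n ^ 2 - 1) * co (n ^ 2 - 1) b x) := by
  obtain ⟨ρ, hK, hH, hE, hF⟩ := big_module hn h4 hq i hε
  letI inst : Module (U k n q) (VC k (n ^ 2)) := Module.compHom _ ρ.toRingHom
  have hsm : ∀ (u : U k n q) (x : VC k (n ^ 2)), u • x = ρ u x := fun u x => rfl
  have ist : IsScalarTower k (U k n q) (VC k (n ^ 2)) := ⟨fun c u x => by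
    rw [hsm, hsm, map_smul]; rfl⟩
  have hN : 1 < n ^ 2 := by
    have := Nat.le_of_dvd hn h4
    nlinarith
  refine ⟨VC k (n ^ 2), inferInstance, inferInstance, inst, ist, fb k (n ^ 2), co k (n ^ 2), ?_, ?_, ?_, ?_, ?_⟩
  · constructor
    · rw [hsm, hK]; simp
    · rw [hsm, hH]; simp
  · exact hF
  · intro b
    rw [hsm, hE, cc_zero]; simp
  · intro a b ha hb a' b'
    exact co_fb ha hb a' b'
  · intro b x hb
    have : co k (n ^ 2) (n ^ 2 - 1) (b + 1) ∘ₗ ρ (E k n q) =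
        q ^ (n ^ 2 - 1) • co k (n ^ 2) (n ^ 2 - 1) b := by
      refine VC_ext fun a b' => ?_
      rw [LinearMap.comp_apply, hE, map_add, map_smul, map_smul, co_fb (by omega) hb, co_fb (by omega) hb,
        LinearMap.smul_apply, co_fb (by omega) (by omega)]
      by_cases h1 : a = n ^ 2 - 1
      · subst h1
        rw [if_neg (by omega : ¬ (n ^ 2 - 1 - 1 = n ^ 2 - 1 ∧ b' = b + 1)), smul_zero, add_zero]
        simp
      · rw [if_neg (by omega), if_neg (by omega : ¬ (a = n ^ 2 - 1 ∧ b' = b))]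
        by_cases h2 : a = n ^ 2
        · rw [h2, cc_N hN hq]; simp
        · rw [if_neg (by omega)]; simp
    exact LinearMap.congr_fun this x

end Verma

end QFL

namespace QFL

section Gam

variable {k : Type} [Field k] {n : ℕ} {q : k}

local notation "gK" => K k n q
local notation "gH" => Kh k n q
local notation "gE" => E k n q
local notation "gF" => F k n q
local notation "gL" => (Kinv k n q * Kh k n q)
local notation "gW" => Wt k n q

lemma neg_one_pow_sq (m : ℕ) : ((-1 : k) ^ m) ^ 2 = 1 := by rw [← pow_mul, mul_comm, pow_mul]; simp

lemma alpha_ne [CharZero k] (hn : 0 < n) (h4 : 4 ∣ n) (hq : IsPrimitiveRoot q (n ^ 2)) (i : ℕ) {j : ℕ} (hj : j ≤ 1) :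
    gE ^ (n ^ 2 - 1) * alpha k n q i j ≠ 0 := by
  have hq0 : q ≠ 0 := hq.ne_zero (by positivity)
  obtain ⟨W, _, _, _, _, f, co, hv, hF, hE, hco, hEco⟩ :=
    big_module' hn h4 hq i (neg_one_pow_sq (k := k) (i + j))
  have he := eIdem_smul hn h4 hq i hj hv
  have hFp : ∀ m, gF ^ m • f 0 0 = f m 0 := by
    intro m
    induction m with
    | zero => simp
    | succ m ih => rw [pow_succ', mul_smul, ih, hF]
  have hEp : ∀ m x, m < n ^ 2 → co (n ^ 2 - 1) m (gE ^ m • x) = (q ^ (n ^ 2 - 1)) ^ m * co (n ^ 2 - 1) 0 x := by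
    intro m x hm
    induction m with
    | zero => simp
    | succ m ih => rw [pow_succ' gE m, mul_smul, hEco _ _ hm, ih (by omega), pow_succ' (q ^ (n ^ 2 - 1)) m, mul_assoc]
  have hpos : 0 < n ^ 2 := by positivity
  intro h
  have h1 := hEp (n ^ 2 - 1) (alpha k n q i j • f 0 0) (by omega)
  rw [← mul_smul, h, zero_smul, map_zero, alpha, mul_smul, he, hFp, hco _ _ (by omega) hpos] at h1
  rw [if_pos ⟨rfl, rfl⟩, mul_one] at h1
  exact pow_ne_zero _ (pow_ne_zero _ hq0) h1.symm

lemma pow_mul_wt (hn : 0 < n) {M : Type} [AddCommGroup M] [Module k M] [Module (U k n q) M]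
    [IsScalarTower k (U k n q) M] {i : ℤ} {ε : k} {x : M} (h : gW i ε x) (c d : ℕ) :
    ∃ s : k, gK ^ c • gH ^ d • x = s • x := by
  refine ⟨(ε * q ^ ((2 - n) * i : ℤ)) ^ d * (ε * q ^ (-(n * i) : ℤ)) ^ c, ?_⟩
  rw [pow_smul_eig h.2, smul_cc, pow_smul_eig h.1, smul_smul]

lemma pbw_e (hn : 0 < n) (h4 : 4 ∣ n) (hq : IsPrimitiveRoot q (n ^ 2)) (i : ℕ) {j : ℕ} (hj : j ≤ 1)
    {x : U k n q} (hx : x ∈ pbw k n q) :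
    ∃ c : ℕ → ℕ → k, x * eIdem k n q i j = ∑ a ∈ Finset.range (n ^ 2 - 1), ∑ b ∈ Finset.range (n ^ 2),
      c a b • (gF ^ a * gE ^ b * eIdem k n q i j) := by
  have hq0 : q ≠ 0 := hq.ne_zero (by positivity)
  have hpos : 0 < n ^ 2 := by positivity
  have hn1 : 1 < n ^ 2 := by
    have := Nat.le_of_dvd hn h4
    nlinarith
  have he := wt_eIdem hn h4 hq i hj
  induction hx using Submodule.span_induction with
  | mem y hy =>
    obtain ⟨a, b, c, d, ha, hb, hc, hd, rfl⟩ := hy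
    obtain ⟨s, hs⟩ := pow_mul_wt hn (he.Epow hn hq0 b) c d
    simp only [smul_eq_mul] at hs
    refine ⟨fun a' b' => if a' = a then (if b' = b then s else 0) else 0, ?_⟩
    have h1 : ∀ a' ∈ Finset.range (n ^ 2 - 1), ∑ b' ∈ Finset.range (n ^ 2),
      (if a' = a then (if b' = b then s else 0) else 0) • (gF ^ a' * gE ^ b' * eIdem k n q i j) =
        if a' = a then s • (gF ^ a * gE ^ b * eIdem k n q i j) else 0 := by
      intro a' _
      split_ifs with h
      · subst h
        rw [Finset.sum_eq_single_of_mem b (Finset.mem_range.2 (by omega))]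
        · rw [if_pos rfl]
        · intro b' _ hb'
          rw [if_neg hb', zero_smul]
      · simp
    rw [Finset.sum_congr rfl h1, Finset.sum_ite_eq', if_pos (Finset.mem_range.2 (by omega))]
    simp only [mul_assoc]
    rw [hs, mul_smul_comm]
  | zero => exact ⟨fun _ _ => 0, by simp⟩
  | add x y _ _ hx hy =>
    obtain ⟨c, hc⟩ := hx
    obtain ⟨c', hc'⟩ := hy
    refine ⟨fun a b => c a b + c' a b, ?_⟩
    rw [add_mul, hc, hc']
    simp only [add_smul, Finset.sum_add_distrib]
  | smul s x _ hx =>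
    obtain ⟨c, hc⟩ := hx
    refine ⟨fun a b => s * c a b, ?_⟩
    rw [smul_mul_assoc, hc]
    simp only [mul_smul, Finset.smul_sum]

lemma pbw_inj [CharZero k] (hn : 0 < n) (h4 : 4 ∣ n) (hq : IsPrimitiveRoot q (n ^ 2)) {x : U k n q}
    (hx : x ∈ pbw k n q) (hFx : gF * x = 0) : x = 0 := by
  have h2 : 2 ∣ n := dvd_trans (by norm_num) h4
  suffices h : ∀ i j, j ≤ 1 → x * eIdem k n q i j = 0 by
    rw [← mul_one x, ← sum_eIdem hn h2 hq, Finset.mul_sum]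
    refine Finset.sum_eq_zero fun i _ => ?_
    rw [Finset.mul_sum]
    refine Finset.sum_eq_zero fun j hj => h i j ?_
    have := Finset.mem_range.1 hj
    omega
  intro i j hj
  obtain ⟨c, hc⟩ := pbw_e hn h4 hq i hj hx
  obtain ⟨W, _, _, _, _, f, co, hv, hF, hE, hco, hEco⟩ :=
    big_module' hn h4 hq i (neg_one_pow_sq (k := k) (i + j))
  have he := eIdem_smul hn h4 hq i hj hv
  have hEp : ∀ m, gE ^ m • f 0 0 = f 0 m := by
    intro m
    induction m with
    | zero => simp
    | succ m ih => rw [pow_succ', mul_smul, ih, hE]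
  have hFp : ∀ m b, gF ^ m • f 0 b = f m b := by
    intro m b
    induction m with
    | zero => simp
    | succ m ih => rw [pow_succ', mul_smul, ih, hF]
  have h1 : (gF * (x * eIdem k n q i j)) • f 0 0 = 0 := by rw [← mul_assoc, hFx, zero_mul, zero_smul]
  rw [hc, mul_smul, Finset.sum_smul, Finset.smul_sum] at h1
  have h3 : ∀ a b, gF • (c a b • (gF ^ a * gE ^ b * eIdem k n q i j)) • f 0 0 = c a b • f (a + 1) b := by
    intro a b
    rw [smul_assoc, smul_cc, mul_smul, mul_smul, he, hEp, hFp, hF]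
  simp only [Finset.sum_smul, Finset.smul_sum, h3] at h1
  rw [hc]
  refine Finset.sum_eq_zero fun a ha => Finset.sum_eq_zero fun b hb => ?_
  have ha' := Finset.mem_range.1 ha
  have hb' := Finset.mem_range.1 hb
  have h5 := congrArg (co (a + 1) b) h1
  simp only [map_sum, map_smul, map_zero, hco (a + 1) b (by omega) hb'] at h5
  rw [Finset.sum_eq_single_of_mem a ha, Finset.sum_eq_single_of_mem b hb] at h5
  · simp at h5
    rw [h5, zero_smul]
  · intro b' _ hne
    rw [if_neg (by tauto), smul_zero]
  · intro a' _ hne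
    refine Finset.sum_eq_zero fun b' _ => ?_
    rw [if_neg (by omega), smul_zero]

lemma mem_pbw (hn : 0 < n) (a b c d : ℕ) (ha : a ≤ n ^ 2 - 2) :
    gF ^ a * gK ^ c * gH ^ d * gE ^ b ∈ pbw k n q := by
  have hpos : 0 < n ^ 2 := by positivity
  by_cases hb : b ≤ n ^ 2 - 1
  · have h1 : gK ^ c = gK ^ (c % n) := by
      conv_lhs => rw [← Nat.mod_add_div c n, pow_add, pow_mul, K_pow, one_pow, mul_one]
    have h2 : gH ^ d = gH ^ (d % n ^ 2) := by
      conv_lhs => rw [← Nat.mod_add_div d (n ^ 2), pow_add, pow_mul, Kh_pow', one_pow, mul_one]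
    have h3 := Nat.mod_lt c hn
    have h4 := Nat.mod_lt d hpos
    refine Submodule.subset_span ⟨a, b, c % n, d % n ^ 2, ha, hb, by omega, by omega, ?_⟩
    rw [h1, h2]
  · rw [show b = n ^ 2 + (b - n ^ 2) by omega, pow_add, E_nil, zero_mul, mul_zero]
    exact Submodule.zero_mem _

/-- filtration by powers of `F` -/
def VF (k : Type) [Field k] (n : ℕ) (q : k) (t : ℕ) : Submodule k (U k n q) :=
  Submodule.span k {x | ∃ a b c d : ℕ, t ≤ a ∧
    x = F k n q ^ a * K k n q ^ c * Kh k n q ^ d * E k n q ^ b}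

lemma mem_VF {t a : ℕ} (h : t ≤ a) (b c d : ℕ) :
    gF ^ a * gK ^ c * gH ^ d * gE ^ b ∈ VF k n q t := Submodule.subset_span ⟨a, b, c, d, h, rfl⟩

lemma VF_one (hn : 0 < n) {x : U k n q} (hx : x ∈ VF k n q 1) :
    ∃ y ∈ pbw k n q, gF * y = x := by
  induction hx using Submodule.span_induction with
  | mem y hy =>
    obtain ⟨a, b, c, d, ha, rfl⟩ := hy
    by_cases h : a ≤ n ^ 2 - 1
    · refine ⟨_, mem_pbw hn (a - 1) b c d (by omega), ?_⟩
      rw [← mul_assoc, ← mul_assoc, ← mul_assoc, mul_pow_sub_one (by omega)]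
    · refine ⟨0, Submodule.zero_mem _, ?_⟩
      rw [show a = n ^ 2 + (a - n ^ 2) by omega, pow_add, F_nil]
      simp
  | zero => exact ⟨0, Submodule.zero_mem _, by simp⟩
  | add x y _ _ hx hy =>
    obtain ⟨c, h, hc⟩ := hx
    obtain ⟨c', h', hc'⟩ := hy
    exact ⟨c + c', Submodule.add_mem _ h h', by rw [mul_add, hc, hc']⟩
  | smul s x _ hx =>
    obtain ⟨c, h, hc⟩ := hx
    exact ⟨s • c, Submodule.smul_mem _ _ h, by rw [mul_smul_comm, hc]⟩

lemma pow_comm_scalar {A : Type} [Ring A] [Algebra k A] {x y : A} {s : k} (hs : s ≠ 0)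
    (h : x * y = s • (y * x)) (m : ℕ) : ∃ t : k, y * x ^ m = t • (x ^ m * y) := by
  have h' : y * x = s⁻¹ • (x * y) := by rw [h, smul_smul, inv_mul_cancel₀ hs, one_smul]
  induction m with
  | zero => exact ⟨1, by simp⟩
  | succ m ih =>
    obtain ⟨t, ht⟩ := ih
    refine ⟨t * s⁻¹, ?_⟩
    rw [pow_succ, ← mul_assoc, ht, smul_mul_assoc, mul_assoc, h', mul_smul_comm, mul_smul, mul_assoc]

lemma L_F (hn : 0 < n) (hq0 : q ≠ 0) : gL * gF = q ^ 2 • (gF * gL) := by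
  have h : gK * (gL * gF) = gK * ((q ^ 2) • (gF * gL)) := by
    rw [mul_smul_comm, ← mul_assoc, ← mul_assoc gK gF, K_L hn, K_F hn, Kh_F hn, smul_mul_assoc,
      mul_assoc gF, K_L hn, smul_smul, mul_comm (q ^ 2)]
  have h2 := congrArg (fun z => Kinv k n q * z) h
  simpa only [← mul_assoc, Kinv_K hn, one_mul] using h2

lemma E_Fpow (hn : 0 < n) (hq0 : q ≠ 0) (m : ℕ) : ∃ x y z : k,
    gE * gF ^ (m + 1) = x • (gF ^ (m + 1) * gE) + y • gF ^ m + z • (gF ^ m * gL) := by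
  have h1 : ((-q⁻¹ : k) • gE) * gF = (q⁻¹)⁻¹ • (gF * ((-q⁻¹ : k) • gE)) + (1 - gL) := by
    have := F_E (k := k) (n := n) (q := q)
    rw [mul_smul_comm, this, smul_mul_assoc, inv_inv, smul_add, smul_add]
    rw [smul_smul, smul_smul, smul_smul]
    have e : q * -q⁻¹ = -1 := by rw [mul_neg, mul_inv_cancel₀ hq0]
    rw [e]
    have e2 : (-1 * q⁻¹ : k) = -q⁻¹ := by ring
    rw [e2, add_assoc]
    have e3 : (-1 : k) • (1 - gL) + (1 - gL) = 0 := by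
      have := add_smul (-1 : k) 1 (1 - gL)
      rw [neg_add_cancel, zero_smul, one_smul] at this
      exact this.symm
    rw [e3, add_zero]
  have h2 : gL * gF = ((q⁻¹)⁻¹ ^ 2) • (gF * gL) := by rw [inv_inv]; exact L_F hn hq0
  have h3 := comm_gen (q := q⁻¹) gF ((-q⁻¹ : k) • gE) gL h1 h2 m
  have h4 := congrArg (fun z => (-q : k) • z) h3
  beta_reduce at h4
  rw [smul_mul_assoc, smul_smul, neg_mul_neg, mul_inv_cancel₀ hq0, one_smul, mul_smul_comm, mul_sub,
    mul_one, mul_smul_comm] at h4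
  refine ⟨q⁻¹⁻¹ ^ (m + 1), (-q) * gs q⁻¹ (m + 1), q * gs q⁻¹ (m + 1) * (q⁻¹⁻¹ ^ m), ?_⟩
  rw [h4, smul_add, smul_smul, smul_smul, smul_smul, smul_sub, smul_smul, add_assoc, sub_eq_add_neg]
  congr 1
  · congr 1
    field_simp
  · congr 1
    have := neg_smul (q * gs q⁻¹ (m + 1) * (q⁻¹⁻¹ ^ m)) (gF ^ m * gL)
    rw [← neg_mul, ← neg_mul] at this
    rw [this]
    exact neg_neg _

lemma E_VF (hn : 0 < n) (hq0 : q ≠ 0) {t : ℕ} {x : U k n q} (hx : x ∈ VF k n q (t + 1)) :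
    gE * x ∈ VF k n q t := by
  induction hx using Submodule.span_induction with
  | mem y hy =>
    obtain ⟨a, b, c, d, ha, rfl⟩ := hy
    obtain ⟨a, rfl⟩ : ∃ a', a = a' + 1 := ⟨a - 1, by omega⟩
    obtain ⟨x, y, z, h⟩ := E_Fpow (k := k) (n := n) (q := q) hn hq0 a
    obtain ⟨s1, h1⟩ := pow_comm_scalar (pow_ne_zero n hq0) (K_E (k := k) (n := n) (q := q) hn) c
    obtain ⟨s2, h2⟩ := pow_comm_scalar (mul_ne_zero (pow_ne_zero n hq0) (inv_ne_zero (pow_ne_zero 2 hq0)))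
      (Kh_E (k := k) (n := n) (q := q) hn) d
    have e1 : gF ^ (a + 1) * gE * (gK ^ c * gH ^ d * gE ^ b) =
        (s1 * s2) • (gF ^ (a + 1) * gK ^ c * gH ^ d * gE ^ (b + 1)) := by
      rw [mul_assoc, ← mul_assoc gE, ← mul_assoc gE, h1, smul_mul_assoc, mul_assoc _ gE, h2, mul_smul_comm, smul_mul_assoc, smul_mul_assoc,
        smul_smul, mul_smul_comm, pow_succ' gE]
      simp only [mul_assoc]
    have hc1 : Commute (gK ^ c) (gH ^ 1) := by
      rw [pow_one]; exact Commute.pow_left (show Commute gK gH from K_Kh) c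
    have e2 : gF ^ a * gL * (gK ^ c * gH ^ d * gE ^ b) =
        gF ^ a * gK ^ (n - 1 + c) * gH ^ (1 + d) * gE ^ b := by
      have h3 : gH * gK ^ c = gK ^ c * gH := by simpa using hc1.eq.symm
      rw [Kinv, pow_add, pow_add, pow_one]
      simp only [mul_assoc]
      rw [← mul_assoc gH (gK ^ c), h3]
      simp only [mul_assoc]
    rw [mul_assoc, mul_assoc, ← mul_assoc gE, h, add_mul, add_mul, smul_mul_assoc, smul_mul_assoc, smul_mul_assoc,
      ← mul_assoc (gK ^ c), e1, e2]
    refine Submodule.add_mem _ (Submodule.add_mem _ ?_ ?_) ?_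
    · exact Submodule.smul_mem _ _ (Submodule.smul_mem _ _ (mem_VF (by omega) _ _ _))
    · rw [← mul_assoc, ← mul_assoc]
      exact Submodule.smul_mem _ _ (mem_VF (by omega) _ _ _)
    · exact Submodule.smul_mem _ _ (mem_VF (by omega) _ _ _)
  | zero => simp
  | add x y _ _ hx hy => rw [mul_add]; exact Submodule.add_mem _ hx hy
  | smul s x _ hx => rw [mul_smul_comm]; exact Submodule.smul_mem _ _ hx

lemma Epow_VF (hn : 0 < n) (hq0 : q ≠ 0) (m : ℕ) {t : ℕ} {x : U k n q} (hx : x ∈ VF k n q (t + m)) :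
    gE ^ m * x ∈ VF k n q t := by
  induction m generalizing x with
  | zero => simpa using hx
  | succ m ih => rw [pow_succ, mul_assoc]; exact ih (E_VF hn hq0 hx)

lemma adjoin_le {x : U k n q} (hx : x ∈ Algebra.adjoin k {gK, gH}) :
    x ∈ Submodule.span k {y | ∃ c d : ℕ, y = gK ^ c * gH ^ d} := by
  rw [← Subalgebra.mem_toSubmodule, Algebra.adjoin_eq_span] at hx
  refine Submodule.span_mono ?_ hx
  intro y hy
  induction hy using Submonoid.closure_induction with
  | mem y hy =>
    rcases hy with rfl | rfl
    · exact ⟨1, 0, by simp⟩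
    · exact ⟨0, 1, by simp⟩
  | one => exact ⟨0, 0, by simp⟩
  | mul x y _ _ hx hy =>
    obtain ⟨c, d, rfl⟩ := hx
    obtain ⟨c', d', rfl⟩ := hy
    refine ⟨c + c', d + d', ?_⟩
    have hc : Commute (gK ^ c') (gH ^ d) := (show Commute gK gH from K_Kh).pow_pow c' d
    rw [pow_add, pow_add, mul_assoc, ← mul_assoc (gH ^ d), ← hc.eq]
    simp only [mul_assoc]

lemma e_adjoin (i j : ℕ) : eIdem k n q i j ∈ Algebra.adjoin k {gK, gH} := by
  have hK : gK ∈ Algebra.adjoin k {gK, gH} := Algebra.subset_adjoin (by simp)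
  have hH : gH ∈ Algebra.adjoin k {gK, gH} := Algebra.subset_adjoin (by simp)
  have hk : gK * gH ^ (n / 2) ∈ Algebra.adjoin k {gK, gH} :=
    Subalgebra.mul_mem _ hK (Subalgebra.pow_mem _ hH _)
  rw [eIdem, phi]
  refine Subalgebra.mul_mem _ (Subalgebra.smul_mem _ (Subalgebra.sum_mem _ fun t _ =>
    Subalgebra.smul_mem _ (Subalgebra.pow_mem _ (Subalgebra.mul_mem _ (Subalgebra.pow_mem _ hK _) hH) _) _) _) ?_
  rw [oneJ]
  split_ifs
  · exact Subalgebra.smul_mem _ (Subalgebra.add_mem _ (Subalgebra.one_mem _) hk) _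
  · exact Subalgebra.smul_mem _ (Subalgebra.sub_mem _ (Subalgebra.one_mem _) hk) _

lemma alpha_VF (i j : ℕ) : alpha k n q i j ∈ VF k n q (n ^ 2 - 1) := by
  rw [alpha]
  have h := adjoin_le (e_adjoin (k := k) (n := n) (q := q) i j)
  generalize eIdem k n q i j = e at h ⊢
  induction h using Submodule.span_induction with
  | mem y hy =>
    obtain ⟨c, d, rfl⟩ := hy
    have := mem_VF (k := k) (n := n) (q := q) (le_refl (n ^ 2 - 1)) 0 c d
    rwa [pow_zero, mul_one, mul_assoc] at this
  | zero => simp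
  | add x y _ _ hx hy => rw [mul_add]; exact Submodule.add_mem _ hx hy
  | smul s x _ hx => rw [mul_smul_comm]; exact Submodule.smul_mem _ _ hx

lemma gam_spec [CharZero k] (hn : 0 < n) (h4 : 4 ∣ n) (hq : IsPrimitiveRoot q (n ^ 2)) {i : ℕ} (j : ℕ)
    (hi : 1 ≤ i) (hi2 : 2 * i ≤ n ^ 2) :
    gam k n q i j ∈ pbw k n q ∧ gF * gam k n q i j = beta k n q i j := by
  have hq0 : q ≠ 0 := hq.ne_zero (by positivity)
  have hβ : beta k n q i j ∈ VF k n q 1 := by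
    rw [beta]
    have h1 : alpha k n q i j ∈ VF k n q ((n ^ 2 - 1 - (2 * i - 2)) + (2 * i - 2)) := by
      rw [Nat.sub_add_cancel (by omega)]; exact alpha_VF i j
    have h2 := Epow_VF hn hq0 _ h1
    refine Submodule.span_mono ?_ h2
    rintro y ⟨a, b, c, d, ha, rfl⟩
    exact ⟨a, b, c, d, by omega, rfl⟩
  have hex : ∃! x, x ∈ pbw k n q ∧ gF * x = beta k n q i j := by
    obtain ⟨y, hy, hFy⟩ := VF_one hn hβ
    refine ⟨y, ⟨hy, hFy⟩, ?_⟩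
    rintro z ⟨hz, hFz⟩
    have := pbw_inj hn h4 hq (Submodule.sub_mem _ hz hy) (by rw [mul_sub, hFz, hFy, sub_self])
    exact sub_eq_zero.1 this
  rw [gam, dif_pos hex]
  exact hex.choose_spec.1

lemma K_pbw (hn : 0 < n) (hq0 : q ≠ 0) {x : U k n q} (hx : x ∈ pbw k n q) : gK * x ∈ pbw k n q := by
  induction hx using Submodule.span_induction with
  | mem y hy =>
    obtain ⟨a, b, c, d, ha, hb, hc, hd, rfl⟩ := hy
    have hKF : gF * gK = q ^ n • (gK * gF) := by
      rw [K_F hn, smul_smul, mul_inv_cancel₀ (pow_ne_zero n hq0), one_smul]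
    obtain ⟨s, hs⟩ := pow_comm_scalar (pow_ne_zero n hq0) hKF a
    have := mem_pbw (k := k) (n := n) (q := q) hn a b (1 + c) d ha
    rw [← mul_assoc, ← mul_assoc, ← mul_assoc, hs]
    rw [pow_add, pow_one, ← mul_assoc] at this
    simpa only [smul_mul_assoc] using Submodule.smul_mem _ s this
  | zero => simp
  | add x y _ _ hx hy => rw [mul_add]; exact Submodule.add_mem _ hx hy
  | smul s x _ hx => rw [mul_smul_comm]; exact Submodule.smul_mem _ _ hx

lemma H_pbw (hn : 0 < n) (hq0 : q ≠ 0) {x : U k n q} (hx : x ∈ pbw k n q) : gH * x ∈ pbw k n q := by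
  induction hx using Submodule.span_induction with
  | mem y hy =>
    obtain ⟨a, b, c, d, ha, hb, hc, hd, rfl⟩ := hy
    have hne : (q ^ n)⁻¹ * q ^ 2 ≠ 0 := mul_ne_zero (inv_ne_zero (pow_ne_zero n hq0)) (pow_ne_zero 2 hq0)
    have hKF : gF * gH = ((q ^ n)⁻¹ * q ^ 2)⁻¹ • (gH * gF) := by
      rw [Kh_F hn, smul_smul, inv_mul_cancel₀ hne, one_smul]
    obtain ⟨s, hs⟩ := pow_comm_scalar (inv_ne_zero hne) hKF a
    have hc1 : gH * gK ^ c = gK ^ c * gH :=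
      ((show Commute gK gH from K_Kh).pow_left c).eq.symm
    have := mem_pbw (k := k) (n := n) (q := q) hn a b c (1 + d) ha
    rw [← mul_assoc, ← mul_assoc, ← mul_assoc, hs, smul_mul_assoc, mul_assoc (gF ^ a), hc1, ← mul_assoc]
    rw [pow_add, pow_one, ← mul_assoc] at this
    simpa only [smul_mul_assoc] using Submodule.smul_mem _ s this
  | zero => simp
  | add x y _ _ hx hy => rw [mul_add]; exact Submodule.add_mem _ hx hy
  | smul s x _ hx => rw [mul_smul_comm]; exact Submodule.smul_mem _ _ hx

lemma pdata [CharZero k] (hn : 0 < n) (h4 : 4 ∣ n) (hq : IsPrimitiveRoot q (n ^ 2)) {i j : ℕ}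
    (hi : 1 ≤ i) (hi2 : 2 * i ≤ n ^ 2) (hj : j ≤ 1) :
    PData k n q i ((-1) ^ (i + j)) (gam k n q i j) (alpha k n q i j) := by
  have hq0 : q ≠ 0 := hq.ne_zero (by positivity)
  have hpos : 0 < n ^ 2 := by positivity
  have h2 : 2 ∣ n := dvd_trans (by norm_num) h4
  obtain ⟨hg1, hg2⟩ := gam_spec (k := k) (q := q) hn h4 hq j hi hi2
  have wa : gW ((i : ℤ) - 1) ((-1) ^ (i + j)) (alpha k n q i j) := by
    have h1 := (wt_eIdem hn h4 hq i hj).Fpow hn hq0 (n ^ 2 - 1)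
    have hm : 2 * ((n ^ 2 / 2 : ℕ) : ℤ) = (n : ℤ) ^ 2 := by
      rw [← Nat.cast_pow]
      have : 2 * (n ^ 2 / 2) = n ^ 2 := Nat.mul_div_cancel' (dvd_pow h2 two_ne_zero)
      exact_mod_cast this
    have h3 := h1.period hq0 hm h2 hq.pow_eq_one (-2)
    have e : (i : ℤ) + ((n ^ 2 - 1 : ℕ) : ℤ) + ((n ^ 2 / 2 : ℕ) : ℤ) * (-2) = i - 1 := by
      rw [Nat.cast_sub hpos, Nat.cast_one, Nat.cast_pow]; linarith
    rwa [e] at h3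
  have wb : gW (-(i : ℤ) + 1) ((-1) ^ (i + j)) (beta k n q i j) := by
    have := wa.Epow hn hq0 (2 * i - 2)
    have e : (i : ℤ) - 1 - ((2 * i - 2 : ℕ) : ℤ) = -i + 1 := by omega
    rwa [e] at this
  refine ⟨?_, wa, ?_, hg2, alpha_ne hn h4 hq i hj⟩
  · show gF * alpha k n q i j = 0
    rw [alpha, ← mul_assoc, mul_pow_sub_one hpos.ne', F_nil, zero_mul]
  · constructor
    · show gK * _ = _
      refine sub_eq_zero.1 (pbw_inj hn h4 hq (Submodule.sub_mem _ (K_pbw hn hq0 hg1) (Submodule.smul_mem _ _ hg1)) ?_)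
      have hKF : gF * gK = q ^ n • (gK * gF) := by
        rw [K_F hn, smul_smul, mul_inv_cancel₀ (pow_ne_zero n hq0), one_smul]
      have hb : gK * beta k n q i j = _ := wb.1
      rw [mul_sub, ← mul_assoc, hKF, smul_mul_assoc, mul_assoc, mul_smul_comm, hg2, hb, smul_smul, sub_eq_zero]
      congr 1
      rw [mul_left_comm, ← zpow_natCast q n, ← zpow_add₀ hq0]
      congr 2; ring
    · show gH * _ = _
      refine sub_eq_zero.1 (pbw_inj hn h4 hq (Submodule.sub_mem _ (H_pbw hn hq0 hg1) (Submodule.smul_mem _ _ hg1)) ?_)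
      have hne : (q ^ n)⁻¹ * q ^ 2 ≠ 0 := mul_ne_zero (inv_ne_zero (pow_ne_zero n hq0)) (pow_ne_zero 2 hq0)
      have hKF : gF * gH = ((q ^ n)⁻¹ * q ^ 2)⁻¹ • (gH * gF) := by
        rw [Kh_F hn, smul_smul, inv_mul_cancel₀ hne, one_smul]
      have hb : gH * beta k n q i j = _ := wb.2
      rw [mul_sub, ← mul_assoc, hKF, smul_mul_assoc, mul_assoc, mul_smul_comm, hg2, hb, smul_smul, sub_eq_zero]
      congr 1
      rw [mul_left_comm, ← zpow_natCast q n, ← zpow_natCast q 2, ← zpow_neg, ← zpow_add₀ hq0, ← zpow_neg,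
        ← zpow_add₀ hq0]
      congr 2; push_cast; ring

end Gam

end QFL

namespace QFL

section Transfer

variable {k : Type} [Field k] {n : ℕ} {q : k}

local notation "gK" => K k n q
local notation "gH" => Kh k n q
local notation "gE" => E k n q
local notation "gF" => F k n q
local notation "gL" => (Kinv k n q * Kh k n q)
local notation "gW" => Wt k n q

lemma N_gt (hn : 0 < n) (h4 : 4 ∣ n) : 16 ≤ n ^ 2 := by
  have := Nat.le_of_dvd hn h4
  nlinarith

lemma sub_coe {N : Submodule (U k n q) (U k n q)} (u : U k n q) (z : N) :
    ((u • z : N) : U k n q) = u * z := rfl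

lemma sub_coe' {N : Submodule (U k n q) (U k n q)} (u : k) (z : N) :
    ((u • z : N) : U k n q) = u • (z : U k n q) := rfl

lemma Wt.sub {N : Submodule (U k n q) (U k n q)} {i : ℤ} {ε : k} {z : N}
    (h : gW i ε (z : U k n q)) : gW i ε z :=
  ⟨Subtype.ext h.1, Subtype.ext h.2⟩

lemma span_gen {N : Submodule (U k n q) (U k n q)} {s : U k n q} (hN : N = Submodule.span (U k n q) {s})
    (hs : s ∈ N) (z : N) : ∃ u : U k n q, u • (⟨s, hs⟩ : N) = z := by
  obtain ⟨z, hz⟩ := z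
  have h := hz
  rw [hN] at h
  obtain ⟨u, hu⟩ := Submodule.mem_span_singleton.1 h
  exact ⟨u, Subtype.ext hu⟩

lemma S_data [CharZero k] (hn : 0 < n) (h4 : 4 ∣ n) (hq : IsPrimitiveRoot q (n ^ 2)) {i j : ℕ}
    (hi : 1 ≤ i) (hi2 : 2 * i ≤ n ^ 2) (hj : j ≤ 1) :
    ∃ x : S k n q i j, SData k n q i ((-1) ^ (i + j)) x ∧ ∀ z : S k n q i j, ∃ u : U k n q, u • x = z := by
  have hq0 : q ≠ 0 := hq.ne_zero (by positivity)
  have hN : 1 < n ^ 2 := by have := N_gt hn h4; omega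
  have hε : ((-1 : k) ^ (i + j)) ≠ 0 := pow_ne_zero _ (by norm_num)
  have hp := pdata (k := k) hn h4 hq hi hi2 hj
  have hS : S k n q i j = Submodule.span (U k n q) {gE ^ (2 * i - 1) • alpha k n q i j} :=
    socle_eq hn hN hq hq0 hi hi2 hε hp
  have hs := hp.s hn hN hq hq0 hi hi2 hε
  have hm : gE ^ (2 * i - 1) • alpha k n q i j ∈ S k n q i j := by
    rw [hS]; exact Submodule.mem_span_singleton_self _
  refine ⟨⟨_, hm⟩, ⟨Subtype.ext hs.hF, Wt.sub hs.ws, Subtype.ext hs.nil, fun h => hs.ne ?_⟩, span_gen hS hm⟩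
  exact congrArg Subtype.val h

lemma P_data [CharZero k] (hn : 0 < n) (h4 : 4 ∣ n) (hq : IsPrimitiveRoot q (n ^ 2)) {j : ℕ}
    (hj : j ≤ 1) :
    ∃ g a : P k n q 1 j, PData k n q 1 ((-1) ^ (1 + j)) g a ∧ ∀ z : P k n q 1 j, ∃ u : U k n q, u • g = z := by
  have hN := N_gt hn h4
  have hp := pdata (k := k) (i := 1) hn h4 hq le_rfl (by omega) hj
  have hg : gam k n q 1 j ∈ P k n q 1 j := Submodule.mem_span_singleton_self _
  have ha : alpha k n q 1 j ∈ P k n q 1 j := by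
    have h1 := hp.hg
    simp only [mul_one, Nat.sub_self, pow_zero, one_smul] at h1
    rw [← h1]
    exact Submodule.smul_mem _ _ hg
  refine ⟨⟨_, hg⟩, ⟨_, ha⟩, ⟨Subtype.ext hp.hF, Wt.sub hp.wa, Wt.sub hp.wg, Subtype.ext hp.hg, fun h => hp.ne ?_⟩,
    span_gen rfl hg⟩
  exact congrArg Subtype.val h

lemma K_oneIdem (hn : 0 < n) (hq : IsPrimitiveRoot q (n ^ 2)) {r : ℕ} (hr : r < n) :
    gK * oneIdem k n q r = (q ^ n) ^ r • oneIdem k n q r := by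
  have hp : (q ^ n) ^ n = 1 := by rw [← pow_mul, ← sq, hq.pow_eq_one]
  have e : oneIdem k n q r = (n : k)⁻¹ • ∑ t ∈ Finset.range n, ((q ^ n) ^ (n - r) • gK) ^ t := by
    rw [oneIdem]
    congr 1
    refine Finset.sum_congr rfl fun t _ => ?_
    rw [smul_pow, pow_mul (q ^ n)]
  have h := mul_geom_sum ((q ^ n) ^ (n - r) • gK) n
  rw [smul_pow, K_pow, pow_right_comm (q ^ n), hp,
    one_pow, one_smul, sub_self, sub_mul, one_mul, sub_eq_zero, smul_mul_assoc] at h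
  rw [e, mul_smul_comm, smul_comm]
  congr 1
  conv_rhs => rw [← h]
  rw [smul_smul, ← pow_add, Nat.add_sub_cancel' hr.le, hp, one_smul]

lemma sum_oneIdem [CharZero k] (hn : 0 < n) (hq : IsPrimitiveRoot q (n ^ 2)) :
    ∑ r ∈ Finset.range n, oneIdem k n q r = 1 := by
  have hp : (q ^ n) ^ n = 1 := by rw [← pow_mul, ← sq, hq.pow_eq_one]
  have hP : IsPrimitiveRoot (q ^ n) n := hq.pow (by positivity) (by ring)
  have hp0 : q ^ n ≠ 0 := hP.ne_zero hn.ne'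
  simp only [oneIdem]
  rw [← Finset.smul_sum, Finset.sum_comm]
  have : ∀ t ∈ Finset.range n, ∑ r ∈ Finset.range n, ((q ^ n) ^ ((n - r) * t)) • gK ^ t
      = if t = 0 then (n : k) • 1 else 0 := by
    intro t ht
    rw [← Finset.sum_smul]
    split_ifs with h0
    · subst h0; simp
    · have e : ∀ r ∈ Finset.range n, (q ^ n) ^ ((n - r) * t) = (((q ^ n) ^ t)⁻¹) ^ r := fun r hr => by
        have hr' := Finset.mem_range.1 hr
        rw [inv_pow]
        refine eq_inv_of_mul_eq_one_left ?_
        rw [← pow_mul (q ^ n) t, ← pow_add, mul_comm t,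
          ← add_mul, Nat.sub_add_cancel hr'.le, pow_mul _ n t, hp, one_pow]
      rw [Finset.sum_congr rfl e]
      have hg := mul_geom_sum (((q ^ n) ^ t)⁻¹) n
      rw [inv_pow, pow_right_comm (q ^ n), hp, one_pow, inv_one, sub_self] at hg
      rw [(mul_eq_zero.1 hg).resolve_left, zero_smul]
      intro h1
      rw [sub_eq_zero, inv_eq_one] at h1
      have := Nat.le_of_dvd (by omega) ((hP.pow_eq_one_iff_dvd _).1 h1)
      have := Finset.mem_range.1 ht
      omega
  rw [Finset.sum_congr rfl this, Finset.sum_ite_eq', if_pos (by simpa using hn), smul_smul,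
    inv_mul_cancel₀ (Nat.cast_ne_zero.2 hn.ne'), one_smul]

variable {M : Type} [AddCommGroup M] [Module k M] [Module (U k n q) M]
  [IsScalarTower k (U k n q) M]

lemma oneIdem_eig [CharZero k] (hn : 0 < n) (hq : IsPrimitiveRoot q (n ^ 2)) {r s : ℕ} (hr : r < n) (hs : s < n)
    {y : M} (hy : gK • y = (q ^ n) ^ r • y) : oneIdem k n q s • y = if s = r then y else 0 := by
  have hp : (q ^ n) ^ n = 1 := by rw [← pow_mul, ← sq, hq.pow_eq_one]
  have hP : IsPrimitiveRoot (q ^ n) n := hq.pow (by positivity) (by ring)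
  have hp0 : q ^ n ≠ 0 := hP.ne_zero hn.ne'
  have key : ∀ t, t < n → t ≠ r → oneIdem k n q t • y = 0 := by
    intro t ht htr
    have hc : Commute gK (oneIdem k n q t) := by
      rw [oneIdem]
      refine Commute.smul_right (Commute.sum_right _ _ _ fun t _ => Commute.smul_right ?_ _) _
      exact (Commute.refl gK).pow_right t
    have h1 : (gK * oneIdem k n q t) • y = (q ^ n) ^ t • oneIdem k n q t • y := by
      rw [K_oneIdem hn hq ht, smul_assoc]
    rw [hc.eq, mul_smul, hy, smul_cc] at h1
    have h2 : ((q ^ n) ^ r - (q ^ n) ^ t) • oneIdem k n q t • y = 0 := by rw [sub_smul, h1, sub_self]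
    refine (smul_eq_zero.1 h2).resolve_left fun h3 => htr ?_
    exact (hP.pow_inj hr ht (sub_eq_zero.1 h3)).symm
  split_ifs with h
  · subst h
    have := congrArg (fun u => u • y) (sum_oneIdem (k := k) hn hq)
    beta_reduce at this
    rw [Finset.sum_smul, one_smul, Finset.sum_eq_single_of_mem s (Finset.mem_range.2 hs)] at this
    · exact this
    · intro t ht hts
      exact key t (Finset.mem_range.1 ht) hts
  · exact key s hs h

lemma flat_eig [CharZero k] (hn : 0 < n) (hq : IsPrimitiveRoot q (n ^ 2)) {r : ℕ} (hr : r < n) (c : ℕ → k)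
    {y : M} (hy : gK • y = (q ^ n) ^ r • y) :
    (∑ s ∈ Finset.range n, c s • oneIdem k n q s) • y = c r • y := by
  rw [Finset.sum_smul, Finset.sum_eq_single_of_mem r (Finset.mem_range.2 hr)]
  · rw [smul_assoc, oneIdem_eig hn hq hr hr hy, if_pos rfl]
  · intro s hs hsr
    rw [smul_assoc, oneIdem_eig hn hq hr (Finset.mem_range.1 hs) hy, if_neg hsr, smul_zero]

lemma flat_mul [CharZero k] (hn : 0 < n) (hq : IsPrimitiveRoot q (n ^ 2)) (c d : ℕ → k) (h : ∀ r, c r * d r = 1) :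
    (∑ s ∈ Finset.range n, c s • oneIdem k n q s) * (∑ s ∈ Finset.range n, d s • oneIdem k n q s) = 1 := by
  rw [Finset.mul_sum, ← sum_oneIdem (k := k) hn hq]
  refine Finset.sum_congr rfl fun r hr => ?_
  have h1 := flat_eig (M := U k n q) (y := oneIdem k n q r) hn hq (Finset.mem_range.1 hr) c
    (K_oneIdem hn hq (Finset.mem_range.1 hr) : gK • oneIdem k n q r = _)
  rw [smul_eq_mul] at h1
  rw [mul_smul_comm, h1, smul_smul, mul_comm, h, one_smul]

lemma flat_unit [CharZero k] (hn : 0 < n) (hq : IsPrimitiveRoot q (n ^ 2)) : IsUnit (flat k n q) := by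
  have hq0 : q ≠ 0 := hq.ne_zero (by positivity)
  rw [isUnit_iff_exists]
  refine ⟨∑ s ∈ Finset.range n, q ^ s • oneIdem k n q s, ?_, ?_⟩
  · exact flat_mul hn hq _ _ fun r => by rw [← mul_pow, inv_mul_cancel₀ hq0, one_pow]
  · exact flat_mul hn hq _ _ fun r => by rw [← mul_pow, mul_inv_cancel₀ hq0, one_pow]

lemma eig_data [CharZero k] (hn : 0 < n) (hq : IsPrimitiveRoot q (n ^ 2)) {y : M} {l : k} (hy : gK • y = l • y) :
    ∃ a b : k, a ≠ 0 ∧ b ≠ 0 ∧ flat k n q • y = a • y ∧ Ring.inverse (flat k n q) • y = b • y ∧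
    ((oneIdem k n q 0 • y = y ∧ (∑ r ∈ Finset.Icc 1 (n - 1), oneIdem k n q r) • y = 0) ∨
      (oneIdem k n q 0 • y = 0 ∧ (∑ r ∈ Finset.Icc 1 (n - 1), oneIdem k n q r) • y = y)) := by
  have hq0 : q ≠ 0 := hq.ne_zero (by positivity)
  by_cases hy0 : y = 0
  · subst hy0
    exact ⟨1, 1, one_ne_zero, one_ne_zero, by simp, by simp, by simp⟩
  have hP : IsPrimitiveRoot (q ^ n) n := hq.pow (by positivity) (by ring)
  have hl : l ^ n = 1 := by
    have h1 := pow_smul_eig hy n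
    rw [K_pow, one_smul] at h1
    have h2 : (l ^ n - 1) • y = 0 := by rw [sub_smul, ← h1, one_smul, sub_self]
    exact sub_eq_zero.1 ((smul_eq_zero.1 h2).resolve_right hy0)
  haveI : NeZero n := ⟨hn.ne'⟩
  obtain ⟨r, hr, rfl⟩ := hP.eq_pow_of_pow_eq_one hl
  have hf : flat k n q • y = q⁻¹ ^ r • y := flat_eig hn hq hr _ hy
  refine ⟨q⁻¹ ^ r, q ^ r, pow_ne_zero _ (inv_ne_zero hq0), pow_ne_zero _ hq0, hf, ?_, ?_⟩
  · have h1 := congrArg (fun z => q ^ r • Ring.inverse (flat k n q) • z) hf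
    beta_reduce at h1
    rw [← mul_smul (Ring.inverse _), Ring.inverse_mul_cancel _ (flat_unit hn hq), one_smul, smul_cc, smul_smul, ← mul_pow,
      mul_inv_cancel₀ hq0, one_pow, one_smul] at h1
    exact h1.symm
  · have h0 := oneIdem_eig hn hq hr hn hy
    have hs : (∑ s ∈ Finset.Icc 1 (n - 1), oneIdem k n q s) • y = if r = 0 then 0 else y := by
      rw [Finset.sum_smul]
      have : ∀ s ∈ Finset.Icc 1 (n - 1), oneIdem k n q s • y = if s = r then y else 0 := by
        intro s hs
        rw [Finset.mem_Icc] at hs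
        exact oneIdem_eig hn hq hr (by omega) hy
      rw [Finset.sum_congr rfl this, Finset.sum_ite_eq']
      by_cases h : r = 0
      · rw [if_pos h, if_neg]; rw [Finset.mem_Icc]; omega
      · rw [if_neg h, if_pos]; rw [Finset.mem_Icc]; omega
    by_cases h : r = 0
    · left; rw [h0, hs]; simp [h]
    · right; rw [h0, hs, if_neg h, if_neg (Ne.symm h)]; exact ⟨rfl, rfl⟩

/-- data describing how `u` acts on a tensor product of weight vectors -/
structure TData (k : Type) [Field k] (n : ℕ) (q : k) {X Y T : Type} [AddCommGroup X] [Module k X]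
    [Module (U k n q) X] [AddCommGroup Y] [Module k Y] [Module (U k n q) Y]
    [AddCommGroup T] [Module k T] [Module (U k n q) T] (t : X →ₗ[k] Y →ₗ[k] T) : Prop where
  hW : ∀ {i i' : ℤ} {ε ε' : k} {x : X} {y : Y}, Wt k n q i ε x → Wt k n q i' ε' y →
    Wt k n q (i + i') (ε * ε') (t x y)
  hE : ∀ {i i' : ℤ} {ε ε' : k} {x : X} {y : Y}, ε ≠ 0 → Wt k n q i ε x → Wt k n q i' ε' y →
    ∃ η θ : k, η ≠ 0 ∧ θ ≠ 0 ∧ E k n q • t x y = η • t (E k n q • x) y + θ • t x (E k n q • y)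
  hF : ∀ {i i' : ℤ} {ε ε' : k} {x : X} {y : Y}, ε ≠ 0 → Wt k n q i ε x → Wt k n q i' ε' y →
    ∃ η θ : k, η ≠ 0 ∧ θ ≠ 0 ∧ F k n q • t x y = η • t (F k n q • x) y + θ • t x (F k n q • y)

end Transfer

section TM

variable {k : Type} [Field k] {n : ℕ} {q : k}

local notation "gK" => K k n q
local notation "gH" => Kh k n q
local notation "gE" => E k n q
local notation "gF" => F k n q
local notation "gL" => (Kinv k n q * Kh k n q)
local notation "gW" => Wt k n q

variable (X Y : Type) [AddCommGroup X] [Module k X] [Module (U k n q) X]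
  [IsScalarTower k (U k n q) X] [SMulCommClass (U k n q) k X]
  [AddCommGroup Y] [Module k Y] [Module (U k n q) Y]
  [IsScalarTower k (U k n q) Y] [SMulCommClass (U k n q) k Y]

/-- the algebra map giving the action on the tensor product -/
def actT : (U k n q ⊗[k] U k n q) →ₐ[k] Module.End k (X ⊗[k] Y) :=
  (Module.endTensorEndAlgHom (R := k) (S := k) (A := k) (M := X) (N := Y)).comp
      (Algebra.TensorProduct.map (Algebra.lsmul k k X) (Algebra.lsmul k k Y))

lemma actT_tmul (u v : U k n q) (x : X) (y : Y) :
    actT X Y (u ⊗ₜ[k] v) (x ⊗ₜ[k] y) = (u • x) ⊗ₜ[k] (v • y) := by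
  rfl

variable (T : Type) [AddCommGroup T] [Module k T] [Module (U k n q) T]

lemma tm_tower (Δ : U k n q →ₐ[k] (U k n q ⊗[k] U k n q)) (te : X ⊗[k] Y ≃ₗ[k] T)
    (sm : ∀ (u : U k n q) (z : X ⊗[k] Y), te (actT X Y (Δ u) z) = u • te z) :
    IsScalarTower k (U k n q) T := by
  refine ⟨fun c u z => ?_⟩
  obtain ⟨z, rfl⟩ := te.surjective z
  rw [← sm, ← sm, map_smul, map_smul, LinearMap.smul_apply, map_smul]

lemma tm_data [CharZero k] (hn : 0 < n) (hq : IsPrimitiveRoot q (n ^ 2))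
    (Δ : U k n q →ₐ[k] (U k n q ⊗[k] U k n q)) (hΔ : IsComul k n q Δ) (te : X ⊗[k] Y ≃ₗ[k] T)
    (sm : ∀ (u : U k n q) (z : X ⊗[k] Y), te (actT X Y (Δ u) z) = u • te z) :
    TData k n q ((TensorProduct.mk k X Y).compr₂ te.toLinearMap) := by
  have hq0 : q ≠ 0 := hq.ne_zero (by positivity)
  obtain ⟨dK, dH, dE, dF⟩ := hΔ
  have tsl : ∀ (c : k) (x : X) (y : Y), te ((c • x) ⊗ₜ[k] y) = c • te (x ⊗ₜ[k] y) := fun c x y => by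
    rw [← TensorProduct.smul_tmul' c x y, map_smul]
  have tsr : ∀ (c : k) (x : X) (y : Y), te (x ⊗ₜ[k] (c • y)) = c • te (x ⊗ₜ[k] y) := fun c x y => by
    rw [TensorProduct.tmul_smul c x y, map_smul]
  refine ⟨?_, ?_, ?_⟩
  · intro i i' ε ε' x y hx hy
    simp only [LinearMap.compr₂_apply, LinearEquiv.coe_coe, TensorProduct.mk_apply]
    constructor
    · rw [← sm, dK, actT_tmul, hx.1, hy.1, TensorProduct.smul_tmul_smul, map_smul]
      congr 1
      rw [mul_mul_mul_comm, ← zpow_add₀ hq0]; congr 2; ring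
    · rw [← sm, dH, actT_tmul, hx.2, hy.2, TensorProduct.smul_tmul_smul, map_smul]
      congr 1
      rw [mul_mul_mul_comm, ← zpow_add₀ hq0]; congr 2; ring
  · intro i i' ε ε' x y hε hx hy
    simp only [LinearMap.compr₂_apply, LinearEquiv.coe_coe, TensorProduct.mk_apply]
    obtain ⟨a, b, ha, hb, h1, h2, -⟩ := eig_data hn hq hy.1
    obtain ⟨-, -, -, -, -, -, h3⟩ := eig_data hn hq (hy.E hn hq0).1
    have hKi : Kinv k n q • x = (ε * q ^ (-(n * i) : ℤ)) ^ (n - 1) • x := pow_smul_eig hx.1 _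
    have hne : (ε * q ^ (-(n * i) : ℤ)) ^ (n - 1) ≠ 0 := pow_ne_zero _ (mul_ne_zero hε (zpow_ne_zero _ hq0))
    have h6 : gE • te (x ⊗ₜ[k] y) = te ((gE • x) ⊗ₜ[k] (b • y)) +
        te ((((ε * q ^ (-(n * i) : ℤ)) ^ (n - 1)) • x) ⊗ₜ[k] (oneIdem k n q 0 • gE • y)) +
        te (x ⊗ₜ[k] ((∑ r ∈ Finset.Icc 1 (n - 1), oneIdem k n q r) • gE • y)) := by
      rw [← sm, dE, map_add, map_add, LinearMap.add_apply, LinearMap.add_apply, actT_tmul,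
        actT_tmul, actT_tmul, h2, hKi, one_smul, mul_smul, mul_smul, map_add, map_add]
    rw [h6]
    rcases h3 with ⟨h4, h5⟩ | ⟨h4, h5⟩
    · refine ⟨b, _, hb, hne, ?_⟩
      rw [h4, h5, TensorProduct.tmul_zero, map_zero, add_zero, tsr, tsl]
    · refine ⟨b, 1, hb, one_ne_zero, ?_⟩
      rw [h4, h5, TensorProduct.tmul_zero, map_zero, add_zero, tsr, one_smul]
  · intro i i' ε ε' x y hε hx hy
    simp only [LinearMap.compr₂_apply, LinearEquiv.coe_coe, TensorProduct.mk_apply]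
    obtain ⟨a, b, ha, hb, h1, h2, h3⟩ := eig_data hn hq hy.1
    have h6 : gF • te (x ⊗ₜ[k] y) = te ((gF • x) ⊗ₜ[k] (a • y)) +
        te ((q ^ (2 * i) • x) ⊗ₜ[k] (gF • (∑ r ∈ Finset.Icc 1 (n - 1), oneIdem k n q r) • y)) +
        te (((ε * q ^ ((2 - n) * i : ℤ)) • x) ⊗ₜ[k] (gF • oneIdem k n q 0 • y)) := by
      rw [← sm, dF, map_add, map_add, LinearMap.add_apply, LinearMap.add_apply, actT_tmul,
        actT_tmul, actT_tmul, h1, hx.L hn hq0 hε, hx.2, mul_smul gF, mul_smul gF, map_add, map_add]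
    rw [h6]
    rcases h3 with ⟨h4, h5⟩ | ⟨h4, h5⟩
    · refine ⟨a, ε * q ^ ((2 - n) * i : ℤ), ha, mul_ne_zero hε (zpow_ne_zero _ hq0), ?_⟩
      rw [h4, h5, smul_zero, TensorProduct.tmul_zero, map_zero, add_zero, tsr, tsl]
    · refine ⟨a, q ^ (2 * i), ha, zpow_ne_zero _ hq0, ?_⟩
      rw [h4, h5, smul_zero, TensorProduct.tmul_zero, map_zero, add_zero, tsr, tsl]

end TM

end QFL

namespace QFL

section Grids

variable {k : Type} [Field k] {n : ℕ} {q : k}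

local notation "gK" => K k n q
local notation "gH" => Kh k n q
local notation "gE" => E k n q
local notation "gF" => F k n q
local notation "gL" => (Kinv k n q * Kh k n q)
local notation "gW" => Wt k n q

/-- combinatorial description of a tensor product of two chains -/
structure Grid (k : Type) [Field k] (n : ℕ) (q : k) {T : Type} [AddCommGroup T] [Module k T]
    [Module (U k n q) T] (a b : ℕ) (w : ℤ) (ε : k) (τ : ℕ → ℕ → T) (co : ℕ → ℕ → T →ₗ[k] k) : Prop where
  z : ∀ i j, a ≤ i ∨ b ≤ j → τ i j = 0
  hE : ∀ i j, ∃ η θ : k, η ≠ 0 ∧ θ ≠ 0 ∧ E k n q • τ i j = η • τ (i + 1) j + θ • τ i (j + 1)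
  hF : ∀ i j, ∃ η θ : k, (0 < i → i < a → η ≠ 0) ∧ (0 < j → j < b → θ ≠ 0) ∧ (i = 0 → η = 0) ∧
    (j = 0 → θ = 0) ∧ F k n q • τ i j = η • τ (i - 1) j + θ • τ i (j - 1)
  hW : ∀ i j : ℕ, Wt k n q (w - i - j) ε (τ i j)
  hco : ∀ i j i' j', i < a → j < b → i' < a → j' < b → co i j (τ i' j') = if i' = i ∧ j' = j then 1 else 0
  fin : Module.Finite k T
  rank : Module.finrank k T = a * b

section
variable {M : Type} [AddCommGroup M] [Module k M] [Module (U k n q) M]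
  [IsScalarTower k (U k n q) M]

lemma SData.Frule [CharZero k] (hn : 0 < n) (hq : IsPrimitiveRoot q (n ^ 2)) (hq0 : q ≠ 0)
    {i : ℕ} (hi : 1 ≤ i) (hi2 : 2 * i ≤ n ^ 2) {ε : k} (hε : ε ≠ 0) {s : M}
    (h : SData k n q i ε s) (m : ℕ) : ∃ c : k, (0 < m → m < n ^ 2 - 2 * i + 1 → c ≠ 0) ∧ (m = 0 → c = 0) ∧
      gF • gE ^ m • s = c • gE ^ (m - 1) • s := by
  refine ⟨dd q (-(i : ℤ)) m, ?_, ?_, ?_⟩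
  · intro h0 h1
    refine dd_ne hq h0 (by omega) ?_
    rintro ⟨c, hc⟩
    have hN : (0 : ℤ) < ((n ^ 2 : ℕ) : ℤ) := by omega
    have h3 : -((n ^ 2 : ℕ) : ℤ) < 2 * -(i : ℤ) - m + 1 := by omega
    have h4 : 2 * -(i : ℤ) - m + 1 < 0 := by omega
    rw [hc] at h3 h4
    have : c < 0 := by nlinarith
    have : -1 < c := by nlinarith
    omega
  · rintro rfl; exact dd_zero _
  · rw [F_Epow hn hq0 hε h.ws, h.hF, smul_zero, smul_zero, zero_add]

lemma SData.z {i : ℕ} {ε : k} {s : M} (h : SData k n q i ε s) {m : ℕ} (hm : n ^ 2 - 2 * i + 1 ≤ m) :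
    gE ^ m • s = 0 := Epow_zero h.nil hm

end

variable {X Y T : Type} [AddCommGroup X] [Module k X] [Module (U k n q) X]
  [IsScalarTower k (U k n q) X]
  [AddCommGroup Y] [Module k Y] [Module (U k n q) Y]
  [IsScalarTower k (U k n q) Y]
  [AddCommGroup T] [Module k T] [Module (U k n q) T] [IsScalarTower k (U k n q) T]

lemma coords {a b : ℕ} {x : ℕ → X} {y : ℕ → Y} (bX : Module.Basis (Fin a) k X) (hX : ∀ m, bX m = x m)
    (bY : Module.Basis (Fin b) k Y) (hY : ∀ m, bY m = y m) (te : X ⊗[k] Y ≃ₗ[k] T) :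
    (∃ co : ℕ → ℕ → T →ₗ[k] k, ∀ i j i' j', i < a → j < b → i' < a → j' < b →
      co i j (te (x i' ⊗ₜ[k] y j')) = if i' = i ∧ j' = j then 1 else 0) ∧ Module.Finite k T ∧
      Module.finrank k T = a * b := by
  have B := (bX.tensorProduct bY).map te
  refine ⟨⟨fun i j => if h : i < a ∧ j < b then
    ((bX.tensorProduct bY).map te).coord (⟨i, h.1⟩, ⟨j, h.2⟩) else 0, ?_⟩, Module.Finite.of_basis B, ?_⟩
  · intro i j i' j' hi hj hi' hj'
    have e : te (x i' ⊗ₜ[k] y j') = ((bX.tensorProduct bY).map te) (⟨i', hi'⟩, ⟨j', hj'⟩) := by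
      rw [Module.Basis.map_apply, Module.Basis.tensorProduct_apply, hX, hY]
    beta_reduce
    rw [dif_pos ⟨hi, hj⟩, e, Module.Basis.coord_apply, Module.Basis.repr_self, Finsupp.single_apply]
    simp only [Prod.mk.injEq, Fin.mk.injEq]
  · rw [Module.finrank_eq_card_basis B]; simp

lemma mk_grid [CharZero k] (hn : 0 < n) (hq : IsPrimitiveRoot q (n ^ 2)) (hq0 : q ≠ 0)
    {i i' : ℕ} (hi : 1 ≤ i) (hi2 : 2 * i ≤ n ^ 2) (hi' : 1 ≤ i') (hi2' : 2 * i' ≤ n ^ 2)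
    {ε ε' : k} (hε : ε ≠ 0) (hε' : ε' ≠ 0) {x : X} {y : Y}
    (hx : SData k n q i ε x) (gx : ∀ z : X, ∃ u : U k n q, u • x = z)
    (hy : SData k n q i' ε' y) (gy : ∀ z : Y, ∃ u : U k n q, u • y = z)
    (te : X ⊗[k] Y ≃ₗ[k] T) (ht : TData k n q ((TensorProduct.mk k X Y).compr₂ te.toLinearMap)) :
    ∃ (τ : ℕ → ℕ → T) (co : ℕ → ℕ → T →ₗ[k] k), Grid k n q (n ^ 2 - 2 * i + 1) (n ^ 2 - 2 * i' + 1)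
      (-(i : ℤ) - i') (ε * ε') τ co := by
  obtain ⟨bX, hbX⟩ := hx.basis hn hq0 hε gx
  obtain ⟨bY, hbY⟩ := hy.basis hn hq0 hε' gy
  obtain ⟨⟨co, hco⟩, fin, rk⟩ := coords (x := fun m => gE ^ m • x) (y := fun m => gE ^ m • y) bX hbX bY hbY te
  refine ⟨fun a b => (TensorProduct.mk k X Y).compr₂ te.toLinearMap (gE ^ a • x) (gE ^ b • y), co, ?_, ?_, ?_, ?_,
    hco, fin, rk⟩
  · rintro a b (h | h)
    · beta_reduce; rw [hx.z h, map_zero, LinearMap.zero_apply]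
    · beta_reduce; rw [hy.z h, map_zero]
  · intro a b
    obtain ⟨η, θ, h1, h2, h3⟩ := ht.hE hε (hx.ws.Epow hn hq0 a) (hy.ws.Epow hn hq0 b)
    refine ⟨η, θ, h1, h2, ?_⟩
    rw [h3, pow_succ', pow_succ', mul_smul, mul_smul]
  · intro a b
    obtain ⟨η, θ, h1, h2, h3⟩ := ht.hF hε (hx.ws.Epow hn hq0 a) (hy.ws.Epow hn hq0 b)
    obtain ⟨c, c1, c2, c3⟩ := hx.Frule hn hq hq0 hi hi2 hε a
    obtain ⟨d, d1, d2, d3⟩ := hy.Frule hn hq hq0 hi' hi2' hε' b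
    refine ⟨η * c, θ * d, fun h h' => mul_ne_zero h1 (c1 h h'), fun h h' => mul_ne_zero h2 (d1 h h'),
      fun h => by rw [c2 h, mul_zero], fun h => by rw [d2 h, mul_zero], ?_⟩
    rw [h3, c3, d3, LinearMap.map_smul _ c, LinearMap.smul_apply, LinearMap.map_smul _ d, smul_smul, smul_smul]
  · intro a b
    have := ht.hW (hx.ws.Epow hn hq0 a) (hy.ws.Epow hn hq0 b)
    convert this using 1
    ring

lemma inj_of_ker (Φ : X →ₗ[U k n q] T) (h : ∀ z, gF • z = 0 → Φ z = 0 → z = 0) : Function.Injective Φ := by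
  rw [injective_iff_map_eq_zero]
  intro z hz
  by_contra hz0
  obtain ⟨t, h1, h2⟩ := exF (k := k) (n := n) (q := q) hz0
  exact h1 (h _ h2 (by rw [map_smul, hz, smul_zero]))

lemma iso_of_inj (Φ : X →ₗ[U k n q] T) (h : Function.Injective Φ) (f1 : Module.Finite k X) (f2 : Module.Finite k T)
    (hr : Module.finrank k X = Module.finrank k T) : Nonempty (T ≃ₗ[U k n q] X) := by
  have hs : Function.Surjective (Φ.restrictScalars k) :=
    (LinearMap.injective_iff_surjective_of_finrank_eq_finrank hr).1 h
  exact ⟨(LinearEquiv.ofBijective Φ ⟨h, hs⟩).symm⟩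

lemma mem_chain_gen (hn : 0 < n) (hq0 : q ≠ 0) {i : ℕ} {ε : k} (hε : ε ≠ 0) {x : X}
    (h : SData k n q i ε x) (hx : ∀ z : X, ∃ u : U k n q, u • x = z) (z : X) : z ∈ chain k n q x := by
  obtain ⟨u, rfl⟩ := hx z
  exact chain_stable hn hq0 hε h.ws h.hF u _ (mem_chain_self _)

lemma part1 [CharZero k] (hn : 0 < n) (h4 : 4 ∣ n) (hq : IsPrimitiveRoot q (n ^ 2)) {ε : k} (hε : ε ≠ 0)
    {w : ℤ} {τ : ℕ → ℕ → T} {co : ℕ → ℕ → T →ₗ[k] k}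
    (G : Grid k n q 1 3 w ε τ co) (hw : gW (-((n ^ 2 / 2 - 1 : ℕ) : ℤ)) ε (τ 0 0)) {x : X}
    (h : SData k n q (n ^ 2 / 2 - 1) ε x) (hx : ∀ z : X, ∃ u : U k n q, u • x = z) :
    Nonempty (T ≃ₗ[U k n q] X) := by
  have hq0 : q ≠ 0 := hq.ne_zero (by positivity)
  have hN := N_gt hn h4
  have h2 : 2 * (n ^ 2 / 2) = n ^ 2 := Nat.mul_div_cancel' (dvd_pow (dvd_trans (by norm_num) h4) two_ne_zero)
  have e3 : n ^ 2 - 2 * (n ^ 2 / 2 - 1) + 1 = 3 := by omega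
  have hF : gF • τ 0 0 = 0 := by
    obtain ⟨η, θ, -, -, h1, h2, h3⟩ := G.hF 0 0
    rw [h3, h1 rfl, h2 rfl, zero_smul, add_zero]
  have hE : ∀ m, ∃ c : k, gE ^ m • τ 0 0 = c • τ 0 m := by
    intro m
    induction m with
    | zero => exact ⟨1, by simp⟩
    | succ m ih =>
      obtain ⟨c, hc⟩ := ih
      obtain ⟨η, θ, -, -, h3⟩ := G.hE 0 m
      refine ⟨c * θ, ?_⟩
      rw [pow_succ', mul_smul, hc, smul_cc, h3, G.z (0 + 1) m (by omega), smul_zero, zero_add, smul_smul]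
  obtain ⟨Φ, hΦ⟩ := h.lift hn hq0 hε hx hF hw (by
    obtain ⟨c, hc⟩ := hE 3
    rw [e3, hc, G.z 0 3 (by omega), smul_zero])
  have hne : τ 0 0 ≠ 0 := by
    intro h0
    have := G.hco 0 0 0 0 (by omega) (by omega) (by omega) (by omega)
    rw [h0, map_zero, if_pos ⟨rfl, rfl⟩] at this
    exact zero_ne_one this
  obtain ⟨b, -⟩ := h.basis hn hq0 hε hx
  refine iso_of_inj Φ (inj_of_ker Φ fun z hz hz' => ?_) (Module.Finite.of_basis b) G.fin ?_
  · obtain ⟨c, rfl⟩ := h.ker hn hq hq0 (by omega) (by omega) hε (mem_chain_gen hn hq0 hε h hx z) hz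
    rw [LinearMap.map_smul_of_tower, hΦ] at hz'
    rw [(smul_eq_zero.1 hz').resolve_right hne, zero_smul]
  · rw [Module.finrank_eq_card_basis b, G.rank, Fintype.card_fin, e3]

lemma part2 [CharZero k] (hn : 0 < n) (h4 : 4 ∣ n) (hq : IsPrimitiveRoot q (n ^ 2)) {ε : k} (hε : ε ≠ 0)
    {w : ℤ} {τ : ℕ → ℕ → T} {co : ℕ → ℕ → T →ₗ[k] k}
    (G : Grid k n q (n ^ 2 - 1) 3 w ε τ co) (hw : ∀ i j : ℕ, gW (-(i : ℤ) - j) ε (τ i j)) {x : X}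
    (h : SData k n q 2 ε x) (hx : ∀ z : X, ∃ u : U k n q, u • x = z) {g a : Y}
    (h' : PData k n q 1 ε g a) (hg : ∀ z : Y, ∃ u : U k n q, u • g = z) :
    Nonempty (T ≃ₗ[U k n q] (X × Y)) := by
  have hq0 : q ≠ 0 := hq.ne_zero (by positivity)
  have hN := N_gt hn h4
  have hN1 : 1 < n ^ 2 := by omega
  have F00 : gF • τ 0 0 = 0 := by
    obtain ⟨η, θ, -, -, h1, h2, h3⟩ := G.hF 0 0
    rw [h3, h1 rfl, h2 rfl, zero_smul, add_zero]
  obtain ⟨f01, F01n, F01⟩ : ∃ c : k, c ≠ 0 ∧ gF • τ 0 1 = c • τ 0 0 := by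
    obtain ⟨η, θ, -, h0, h1, -, h3⟩ := G.hF 0 1
    exact ⟨θ, h0 (by omega) (by omega), by rw [h3, h1 rfl, zero_smul, zero_add]⟩
  obtain ⟨f02, F02n, F02⟩ : ∃ c : k, c ≠ 0 ∧ gF • τ 0 2 = c • τ 0 1 := by
    obtain ⟨η, θ, -, h0, h1, -, h3⟩ := G.hF 0 2
    exact ⟨θ, h0 (by omega) (by omega), by rw [h3, h1 rfl, zero_smul, zero_add]⟩
  obtain ⟨f20, F20n, F20⟩ : ∃ c : k, c ≠ 0 ∧ gF • τ 2 0 = c • τ 1 0 := by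
    obtain ⟨η, θ, h0, -, -, h1, h3⟩ := G.hF 2 0
    exact ⟨η, h0 (by omega) (by omega), by rw [h3, h1 rfl, zero_smul, add_zero]⟩
  obtain ⟨p, r, -, -, -, -, F11⟩ := G.hF 1 1
  obtain ⟨e0, e1, E0n, -, E00⟩ := G.hE 0 0
  simp only [Nat.sub_self, Nat.zero_add] at F11 E00
  obtain ⟨v, hv⟩ : ∃ v : T, v = τ 1 1 + (-(r / f20)) • τ 2 0 + (-(p / f02)) • τ 0 2 := ⟨_, rfl⟩
  have Fv : gF • v = 0 := by
    rw [hv, smul_add, smul_add, smul_cc, smul_cc, F11, F20, F02, smul_smul, smul_smul]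
    have s1 : -(r / f20) * f20 = -r := by field_simp
    have s2 : -(p / f02) * f02 = -p := by field_simp
    rw [s1, s2]
    module
  have wv : gW (-((2 : ℕ) : ℤ)) ε v := by
    have w1 := hw 1 1
    have w2 := hw 2 0
    have w3 := hw 0 2
    norm_num at w1 w2 w3
    rw [hv]
    exact (w1.add (w2.smul _)).add (w3.smul _)
  have Ev : ∀ m, ∃ c0 c1 c2 : k, gE ^ m • v = c0 • τ (m + 2) 0 + c1 • τ (m + 1) 1 + c2 • τ m 2 := by
    intro m
    induction m with
    | zero =>
      refine ⟨-(r / f20), 1, -(p / f02), ?_⟩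
      rw [pow_zero, one_smul, hv, one_smul, zero_add, zero_add]
      abel
    | succ m ih =>
      obtain ⟨c0, c1, c2, hc⟩ := ih
      obtain ⟨a0, b0, -, -, h0⟩ := G.hE (m + 2) 0
      obtain ⟨a1, b1, -, -, h1⟩ := G.hE (m + 1) 1
      obtain ⟨a2, b2, -, -, h2⟩ := G.hE m 2
      rw [G.z m (2 + 1) (by omega), smul_zero, add_zero] at h2
      refine ⟨c0 * a0, c0 * b0 + c1 * a1, c1 * b1 + c2 * a2, ?_⟩
      rw [pow_succ', mul_smul, hc, smul_add, smul_add, smul_cc, smul_cc, smul_cc, h0, h1, h2]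
      simp only [show m + 2 + 1 = m + 1 + 2 by ring, show m + 1 + 1 = m + 2 by ring, zero_add,
        show 1 + 1 = 2 by rfl]
      module
  have eN : n ^ 2 - 2 * 2 + 1 = n ^ 2 - 3 := by omega
  have nil : gE ^ (n ^ 2 - 2 * 2 + 1) • v = 0 := by
    rw [eN]
    have FE := F_Epow hn hq0 hε wv (n ^ 2 - 3)
    rw [Fv, smul_zero, smul_zero, zero_add, dd_eq hq, zero_smul] at FE
    · obtain ⟨c0, c1, c2, hc⟩ := Ev (n ^ 2 - 3)
      rw [G.z _ 0 (by omega), smul_zero, zero_add, show n ^ 2 - 3 + 1 = n ^ 2 - 2 by omega] at hc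
      rw [hc] at FE
      obtain ⟨a1, b1, ha1, -, -, -, h1⟩ := G.hF (n ^ 2 - 2) 1
      obtain ⟨a2, b2, ha2, -, -, -, h2⟩ := G.hF (n ^ 2 - 3) 2
      rw [smul_add, smul_cc, smul_cc, h1, h2] at FE
      simp only [show n ^ 2 - 2 - 1 = n ^ 2 - 3 by omega, show n ^ 2 - 3 - 1 = n ^ 2 - 4 by omega,
        Nat.sub_self, show 2 - 1 = 1 by rfl] at FE
      have k1 := congrArg (co (n ^ 2 - 4) 2) FE
      simp only [map_add, map_smul, map_zero] at k1
      rw [G.hco _ _ _ _ (by omega) (by omega) (by omega) (by omega), G.hco _ _ _ _ (by omega) (by omega) (by omega) (by omega),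
        G.hco _ _ _ _ (by omega) (by omega) (by omega) (by omega), if_neg (by omega), if_neg (by omega),
        if_pos ⟨rfl, rfl⟩] at k1
      simp only [smul_zero, add_zero, zero_add, smul_eq_mul, mul_one, mul_zero] at k1
      have hc2 : c2 = 0 := (mul_eq_zero.1 k1).resolve_right (ha2 (by omega) (by omega))
      have k2 := congrArg (co (n ^ 2 - 3) 1) FE
      simp only [map_add, map_smul, map_zero, hc2, zero_smul, add_zero] at k2
      rw [G.hco _ _ _ _ (by omega) (by omega) (by omega) (by omega), if_pos ⟨rfl, rfl⟩,
        G.hco _ _ _ _ (by omega) (by omega) (by omega) (by omega), if_neg (by omega)] at k2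
      simp only [smul_zero, add_zero, zero_add, smul_eq_mul, mul_one, mul_zero] at k2
      have hc1 : c1 = 0 := (mul_eq_zero.1 k2).resolve_right (ha1 (by omega) (by omega))
      rw [hc, hc1, hc2, zero_smul, zero_smul, add_zero]
    · refine ⟨-1, ?_⟩
      rw [Nat.cast_sub (by omega : 3 ≤ n ^ 2)]
      push_cast
      ring
  obtain ⟨Φ, hΦ⟩ := h.lift hn hq0 hε hx Fv wv nil
  have wg : gW (-1) ε (τ 0 1) := by
    have := hw 0 1
    norm_num at this
    exact this
  obtain ⟨Ψ, hΨ⟩ := h'.lift hn hN1 hq hq0 hε hg (t := τ 0 1) (by rw [F01, smul_cc, F00, smul_zero]) wg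
  have hΨa : Ψ a = f01 • τ 0 0 := by
    have h1 := h'.hg
    simp only [mul_one, Nat.sub_self, pow_zero, one_smul] at h1
    rw [← h1, map_smul, hΨ, F01]
  have hΨE : Ψ (gE • a) = (f01 * e0) • τ 1 0 + (f01 * e1) • τ 0 1 := by
    rw [map_smul, hΨa, smul_cc, E00, smul_add, smul_smul, smul_smul]
  obtain ⟨b, -⟩ := h.basis hn hq0 hε hx
  obtain ⟨b'⟩ := h'.basis hn hN1 hq hq0 le_rfl (by omega) hε hg
  have fX := Module.Finite.of_basis b
  have fY := Module.Finite.of_basis b'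
  refine iso_of_inj (Φ.coprod Ψ) (inj_of_ker _ ?_) inferInstance G.fin ?_
  · rintro ⟨z, z'⟩ hz hz'
    have hz1 : gF • z = 0 := congrArg Prod.fst hz
    have hz2 : gF • z' = 0 := congrArg Prod.snd hz
    obtain ⟨c, rfl⟩ := h.ker hn hq hq0 (by omega) (by omega) hε (mem_chain_gen hn hq0 hε h hx z) hz1
    have hm : z' ∈ chain k n q g ⊔ chain k n q a := by
      obtain ⟨u, rfl⟩ := hg z'
      exact pair_stable hn hq0 hε h'.wg h'.wa h'.hF h'.hg u _ (Submodule.mem_sup_left (mem_chain_self _))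
    obtain ⟨d, e, rfl⟩ := kerF_pair hn hN1 hq hq0 le_rfl (by omega) hε h' hm hz2
    rw [show 2 * 1 - 1 = 1 by rfl, pow_one] at hz' ⊢
    rw [LinearMap.coprod_apply, map_add, LinearMap.map_smul_of_tower, LinearMap.map_smul_of_tower, LinearMap.map_smul_of_tower,
      hΦ, hΨa, hΨE, hv] at hz'
    have co' : ∀ i j i' j', i ≤ 2 → j ≤ 2 → i' ≤ 2 → j' ≤ 2 → co i j (τ i' j') = if i' = i ∧ j' = j then 1 else 0 :=
      fun i j i' j' _ _ _ _ => G.hco i j i' j' (by omega) (by omega) (by omega) (by omega)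
    have k1 := congrArg (co 1 1) hz'
    simp [co'] at k1
    have k2 := congrArg (co 1 0) hz'
    simp [co', k1, F01n, E0n] at k2
    have k3 := congrArg (co 0 0) hz'
    simp [co', k1, k2, F01n] at k3
    rw [k1, k2, k3]
    simp
  · rw [Module.finrank_prod, Module.finrank_eq_card_basis b, Module.finrank_eq_card_basis b', G.rank]
    simp only [Fintype.card_fin, Fintype.card_sum]
    omega

end Grids

end QFL

namespace QFL

section Final

variable {k : Type} [Field k] {n : ℕ} {q : k}

lemma half_sq (h4 : 4 ∣ n) : 2 * (n ^ 2 / 2) = n ^ 2 ∧ Even (n ^ 2 / 2) := by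
  obtain ⟨c, rfl⟩ := h4
  have : (4 * c) ^ 2 = 2 * (2 * (4 * c ^ 2)) := by ring
  rw [this, Nat.mul_div_cancel_left _ (by norm_num)]
  exact ⟨rfl, even_two_mul _⟩

lemma sign_eq {a b : ℕ} (h : a % 2 = b % 2) : ((-1 : k)) ^ a = (-1) ^ b := by
  rw [neg_one_pow_eq_pow_mod_two, h, ← neg_one_pow_eq_pow_mod_two]

lemma final1 [CharZero k] (hn : 0 < n) (h4 : 4 ∣ n) (hq : IsPrimitiveRoot q (n ^ 2))
    (Δ : U k n q →ₐ[k] (U k n q ⊗[k] U k n q)) (hΔ : IsComul k n q Δ) {j₁ j₂ : ℕ}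
    (h1 : j₁ ≤ 1) (h2 : j₂ ≤ 1) (T : Type) [AddCommGroup T] [Module k T] [Module (U k n q) T]
    (te : (S k n q (n ^ 2 / 2) j₁) ⊗[k] (S k n q (n ^ 2 / 2 - 1) j₂) ≃ₗ[k] T)
    (sm : ∀ u z, te (actT (S k n q (n ^ 2 / 2) j₁) (S k n q (n ^ 2 / 2 - 1) j₂) (Δ u) z) = u • te z) :
    Nonempty (T ≃ₗ[U k n q] (S k n q (n ^ 2 / 2 - 1) ((j₁ + j₂) % 2))) := by
  have hq0 : q ≠ 0 := hq.ne_zero (by positivity)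
  have hN := N_gt hn h4
  obtain ⟨e2, e2'⟩ := half_sq h4
  haveI := tm_tower (S k n q (n ^ 2 / 2) j₁) (S k n q (n ^ 2 / 2 - 1) j₂) T Δ te sm
  obtain ⟨x, hx, gx⟩ := S_data (k := k) (i := n ^ 2 / 2) hn h4 hq (by omega) (by omega) h1
  obtain ⟨y, hy, gy⟩ := S_data (k := k) (i := n ^ 2 / 2 - 1) hn h4 hq (by omega) (by omega) h2
  obtain ⟨z, hz, gz⟩ := S_data (k := k) (i := n ^ 2 / 2 - 1) (j := (j₁ + j₂) % 2) hn h4 hq (by omega) (by omega) (by omega)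
  have hs : ∀ m : ℕ, ((-1 : k) ^ m) ≠ 0 := fun m => pow_ne_zero _ (by norm_num)
  obtain ⟨τ, co, G⟩ := mk_grid hn hq hq0 (by omega) (by omega) (by omega) (by omega) (hs _) (hs _) hx gx hy gy te
    (tm_data (S k n q (n ^ 2 / 2) j₁) (S k n q (n ^ 2 / 2 - 1) j₂) T hn hq Δ hΔ te sm)
  have hε : (-1 : k) ^ (n ^ 2 / 2 + j₁) * (-1) ^ (n ^ 2 / 2 - 1 + j₂) = (-1) ^ (n ^ 2 / 2 - 1 + (j₁ + j₂) % 2) := by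
    rw [← pow_add]
    obtain ⟨c, hc⟩ := e2'
    exact sign_eq (by omega)
  rw [hε, show n ^ 2 - 2 * (n ^ 2 / 2) + 1 = 1 by omega, show n ^ 2 - 2 * (n ^ 2 / 2 - 1) + 1 = 3 by omega] at G
  refine part1 hn h4 hq (hs _) G ?_ hz gz
  have w := (G.hW 0 0).period (m := ((n ^ 2 / 2 : ℕ) : ℤ)) hq0 (by exact_mod_cast e2) (dvd_trans (by norm_num) h4) hq.pow_eq_one 1
  convert w using 1
  push_cast
  ring

lemma final2 [CharZero k] (hn : 0 < n) (h4 : 4 ∣ n) (hq : IsPrimitiveRoot q (n ^ 2))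
    (Δ : U k n q →ₐ[k] (U k n q ⊗[k] U k n q)) (hΔ : IsComul k n q Δ) {j₁ j₂ : ℕ}
    (h1 : j₁ ≤ 1) (h2 : j₂ ≤ 1) (T : Type) [AddCommGroup T] [Module k T] [Module (U k n q) T]
    (te : (S k n q 1 j₁) ⊗[k] (S k n q (n ^ 2 / 2 - 1) j₂) ≃ₗ[k] T)
    (sm : ∀ u z, te (actT (S k n q 1 j₁) (S k n q (n ^ 2 / 2 - 1) j₂) (Δ u) z) = u • te z) :
    Nonempty (T ≃ₗ[U k n q] ((S k n q 2 ((j₁ + j₂) % 2)) × (P k n q 1 ((j₁ + j₂ + 1) % 2)))) := by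
  have hq0 : q ≠ 0 := hq.ne_zero (by positivity)
  have hN := N_gt hn h4
  obtain ⟨e2, e2'⟩ := half_sq h4
  haveI := tm_tower (S k n q 1 j₁) (S k n q (n ^ 2 / 2 - 1) j₂) T Δ te sm
  obtain ⟨x, hx, gx⟩ := S_data (k := k) (i := 1) hn h4 hq (by omega) (by omega) h1
  obtain ⟨y, hy, gy⟩ := S_data (k := k) (i := n ^ 2 / 2 - 1) hn h4 hq (by omega) (by omega) h2
  obtain ⟨z, hz, gz⟩ := S_data (k := k) (i := 2) (j := (j₁ + j₂) % 2) hn h4 hq (by omega) (by omega) (by omega)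
  obtain ⟨g, a, hg, gg⟩ := P_data (k := k) (j := (j₁ + j₂ + 1) % 2) hn h4 hq (by omega)
  have hs : ∀ m : ℕ, ((-1 : k) ^ m) ≠ 0 := fun m => pow_ne_zero _ (by norm_num)
  obtain ⟨τ, co, G⟩ := mk_grid hn hq hq0 (by omega) (by omega) (by omega) (by omega) (hs _) (hs _) hx gx hy gy te
    (tm_data (S k n q 1 j₁) (S k n q (n ^ 2 / 2 - 1) j₂) T hn hq Δ hΔ te sm)
  have hε : (-1 : k) ^ (1 + j₁) * (-1) ^ (n ^ 2 / 2 - 1 + j₂) = (-1) ^ (2 + (j₁ + j₂) % 2) := by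
    rw [← pow_add]
    obtain ⟨c, hc⟩ := e2'
    exact sign_eq (by omega)
  have hε' : (-1 : k) ^ (1 + (j₁ + j₂ + 1) % 2) = (-1) ^ (2 + (j₁ + j₂) % 2) := sign_eq (by omega)
  rw [hε'] at hg
  rw [hε, show n ^ 2 - 2 * 1 + 1 = n ^ 2 - 1 by omega, show n ^ 2 - 2 * (n ^ 2 / 2 - 1) + 1 = 3 by omega] at G
  refine part2 hn h4 hq (hs _) G (fun i j => ?_) hz gz hg gg
  have w := (G.hW i j).period (m := ((n ^ 2 / 2 : ℕ) : ℤ)) hq0 (by exact_mod_cast e2) (dvd_trans (by norm_num) h4) hq.pow_eq_one 1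
  convert w using 1
  rw [Nat.cast_sub (by omega)]
  push_cast
  ring

def tpGrp (k : Type) [Field k] (X Y : Type) [AddCommGroup X] [AddCommGroup Y] [Module k X] [Module k Y] :
    AddCommGroup (X ⊗[k] Y) := inferInstance

end Final

end QFL


open QFL in
/-- Lemma 4.5: `S_{n²,j₁} ⊗ S_{n²-2,j₂} ≅ S_{n²-2, \overline{j₁+j₂}}` and
`S_{2,j₁} ⊗ S_{n²-2,j₂} ≅ S_{4, \overline{j₁+j₂}} ⊕ P_{2, \overline{j₁+j₂+1}}`.
(Indices: `S_{2i,j}` and `P_{2i,j}` are encoded by `i`.) -/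
theorem statement17 (k : Type) [Field k] [IsAlgClosed k] [CharZero k]
    (n : ℕ) (hn : 0 < n) (h4 : 4 ∣ n) (q : k) (hq : IsPrimitiveRoot q (n ^ 2))
    (Δ : U k n q →ₐ[k] (U k n q ⊗[k] U k n q)) (hΔ : IsComul k n q Δ) :
    ∀ j₁ j₂ : ℕ, j₁ ≤ 1 → j₂ ≤ 1 →
      (letI := tensorModule k n q Δ (S k n q (n ^ 2 / 2) j₁) (S k n q (n ^ 2 / 2 - 1) j₂)
      Nonempty (((S k n q (n ^ 2 / 2) j₁) ⊗[k] (S k n q (n ^ 2 / 2 - 1) j₂))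
        ≃ₗ[U k n q] (S k n q (n ^ 2 / 2 - 1) ((j₁ + j₂) % 2)))) ∧
      (letI := tensorModule k n q Δ (S k n q 1 j₁) (S k n q (n ^ 2 / 2 - 1) j₂)
      Nonempty (((S k n q 1 j₁) ⊗[k] (S k n q (n ^ 2 / 2 - 1) j₂))
        ≃ₗ[U k n q]
          ((S k n q 2 ((j₁ + j₂) % 2)) × (P k n q 1 ((j₁ + j₂ + 1) % 2))))) := by
  intro j₁ j₂ h1 h2
  refine ⟨?_, ?_⟩
  · let i1 : AddCommGroup ((S k n q (n ^ 2 / 2) j₁) ⊗[k] (S k n q (n ^ 2 / 2 - 1) j₂)) :=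
      tpGrp k (S k n q (n ^ 2 / 2) j₁) (S k n q (n ^ 2 / 2 - 1) j₂)
    let i2 : @Module k ((S k n q (n ^ 2 / 2) j₁) ⊗[k] (S k n q (n ^ 2 / 2 - 1) j₂)) _ i1.toAddCommMonoid :=
      TensorProduct.instModule
    let i3 : @Module (U k n q) ((S k n q (n ^ 2 / 2) j₁) ⊗[k] (S k n q (n ^ 2 / 2 - 1) j₂)) _ i1.toAddCommMonoid :=
      tensorModule k n q Δ (S k n q (n ^ 2 / 2) j₁) (S k n q (n ^ 2 / 2 - 1) j₂)
    exact @final1 k _ n q _ hn h4 hq Δ hΔ j₁ j₂ h1 h2 ((S k n q (n ^ 2 / 2) j₁) ⊗[k] (S k n q (n ^ 2 / 2 - 1) j₂)) i1 i2 i3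
      (LinearEquiv.refl k ((S k n q (n ^ 2 / 2) j₁) ⊗[k] (S k n q (n ^ 2 / 2 - 1) j₂))) (fun u z => rfl)
  · let i1 : AddCommGroup ((S k n q 1 j₁) ⊗[k] (S k n q (n ^ 2 / 2 - 1) j₂)) :=
      tpGrp k (S k n q 1 j₁) (S k n q (n ^ 2 / 2 - 1) j₂)
    let i2 : @Module k ((S k n q 1 j₁) ⊗[k] (S k n q (n ^ 2 / 2 - 1) j₂)) _ i1.toAddCommMonoid :=
      TensorProduct.instModule
    let i3 : @Module (U k n q) ((S k n q 1 j₁) ⊗[k] (S k n q (n ^ 2 / 2 - 1) j₂)) _ i1.toAddCommMonoid :=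
      tensorModule k n q Δ (S k n q 1 j₁) (S k n q (n ^ 2 / 2 - 1) j₂)
    exact @final2 k _ n q _ hn h4 hq Δ hΔ j₁ j₂ h1 h2 ((S k n q 1 j₁) ⊗[k] (S k n q (n ^ 2 / 2 - 1) j₂)) i1 i2 i3
      (LinearEquiv.refl k ((S k n q 1 j₁) ⊗[k] (S k n q (n ^ 2 / 2 - 1) j₂))) (fun u z => rfl)
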